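/- arXiv:1704.05198 — 2 statements merged into one kernel-verified Lean document; each statement's English description precedes it below -/
import Mathlib

section
/- Let n > 1, let U ⊂ ℝ^n be a nonempty open, bounded, connected set, let s ∈ L^∞(U,ℝ^n) be measure preserving, and let 1 ≤ p < ∞. Then for every ε > 0 there exists a C^∞ diffeomorphism S : ℝ^n → ℝ^n with det DS(x) = 1 for every x ∈ ℝ^n such that ∫_U |s(x) − S(x)|^p dx ≤ ε. -/
open MeasureTheory Metric Set Bornology

/-!
Cut `ℝⁿ` into cubes. Outside a small part of `U`, the coarse cube containing `s x` depends only on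
the fine cube containing `x`, and since `s` preserves measure, a coarse cube contains at least as
many fine cubes as are sent to it. Hence some permutation of the fine cubes sends almost every point
of `U` to within one coarse cube of its image under `s`. On finitely many cubes, every permutation
agrees with a product of commutators of shifts of the cubes in a cylinder along its axis; this needs
a second dimension. Such a shift is a discontinuous shear `x ↦ x + f x • v`, `f` being the indicator
of the cylinder, and smoothing `f` while keeping it constant in the direction `v` turns it into a
volume preserving diffeomorphism that agrees with it off a set of small measure. Displacements being
bounded, the approximation holds in `Lᵖ`.
-/

open Filter Topology
open scoped ContDiff

section Shear

variable {R M : Type*} [Ring R] [AddCommGroup M] [Module R M]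

/-- The shear `x ↦ x + f x • v`. Its inverse subtracts the same multiple of `v`, because the
amplitude `f` is constant in the direction `v`. Used both on `ℝⁿ` and on the lattice `ℤⁿ`. -/
def shear (f : M → R) (v : M) (hf : ∀ x (t : R), f (x + t • v) = f x) : Equiv.Perm M where
  toFun x := x + f x • v
  invFun x := x - f x • v
  left_inv x := by simp [hf]
  right_inv x := by
    have hback : f (x - f x • v) = f x := by simpa [sub_eq_add_neg] using hf x (-f x)
    simp only [hback, sub_add_cancel]

@[simp]
lemma shear_apply (f : M → R) (v : M) (hf : ∀ x (t : R), f (x + t • v) = f x) (x : M) :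
    shear f v hf x = x + f x • v := rfl

end Shear

section Diffeo

variable {E : Type*} [NormedAddCommGroup E] [NormedSpace ℝ E]

variable (E) in
/-- The group of smooth diffeomorphisms of `E` with Jacobian determinant identically one. -/
def unimodularDiffeo : Subgroup (Equiv.Perm E) where
  carrier := {S | ContDiff ℝ ∞ S ∧ ContDiff ℝ ∞ S.symm ∧
    ∀ x, LinearMap.det (fderiv ℝ S x).toLinearMap = 1}
  one_mem' := ⟨contDiff_id, contDiff_id, fun x => by simp [Equiv.Perm.coe_one]⟩
  mul_mem' := by
    rintro S T ⟨hS, hS', hdS⟩ ⟨hT, hT', hdT⟩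
    refine ⟨hS.comp hT, hT'.comp hS', fun x => ?_⟩
    rw [Equiv.Perm.coe_mul, fderiv_comp x (hS.differentiable (by simp) _)
      (hT.differentiable (by simp) _), ContinuousLinearMap.toLinearMap_comp, LinearMap.det_comp,
      hdS, hdT, one_mul]
  inv_mem' := by
    rintro S ⟨hS, hS', hdS⟩
    refine ⟨hS', hS, fun x => ?_⟩
    have hcomp : fderiv ℝ (S ∘ S.symm) x = ContinuousLinearMap.id ℝ E := by
      rw [Equiv.self_comp_symm, fderiv_id]
    rw [fderiv_comp x (hS.differentiable (by simp) _) (hS'.differentiable (by simp) _)] at hcomp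
    have hdet := congrArg (fun L : E →L[ℝ] E => LinearMap.det L.toLinearMap) hcomp
    simpa [ContinuousLinearMap.toLinearMap_comp, LinearMap.det_comp, hdS] using hdet

lemma fderiv_apply_eq_zero_of_forall_add_smul {f : E → ℝ} {v x : E}
    (hf : ∀ t : ℝ, f (x + t • v) = f x) (hd : DifferentiableAt ℝ f x) : fderiv ℝ f x v = 0 := by
  rw [← hd.lineDeriv_eq_fderiv, lineDeriv]
  simp [hf]

lemma shear_mem_unimodularDiffeo [FiniteDimensional ℝ E] {f : E → ℝ} {v : E}
    (hf : ∀ x (t : ℝ), f (x + t • v) = f x) (hsmooth : ContDiff ℝ ∞ f) :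
    shear f v hf ∈ unimodularDiffeo E := by
  refine ⟨contDiff_id.add (hsmooth.smul contDiff_const),
    contDiff_id.sub (hsmooth.smul contDiff_const), fun x => ?_⟩
  have hd : DifferentiableAt ℝ f x := hsmooth.differentiable (by simp) x
  have hderiv : fderiv ℝ (shear f v hf) x =
      ContinuousLinearMap.id ℝ E + (fderiv ℝ f x).smulRight v :=
    ((hasFDerivAt_id x).add (hd.hasFDerivAt.smul_const v)).fderiv
  have htransvection : (fderiv ℝ (shear f v hf) x).toLinearMap =
      LinearMap.transvection (fderiv ℝ f x).toLinearMap v := by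
    ext y
    simp [hderiv, LinearMap.transvection.apply]
  rw [htransvection, LinearMap.transvection.det]
  simp [fderiv_apply_eq_zero_of_forall_add_smul (hf x) hd]

variable [MeasurableSpace E] {μ : Measure E} {C D : Equiv.Perm E} {M N : ℝ}

/-- On every set of finite measure, `D` coincides off a set of arbitrarily small measure with a
unimodular diffeomorphism displacing all points of the space by at most `M`. -/
def ApproxByDiffeo (μ : Measure E) (D : Equiv.Perm E) (M : ℝ) : Prop :=
  ∀ B, MeasurableSet B → μ B ≠ ⊤ → ∀ δ ≠ 0, ∃ S ∈ unimodularDiffeo E,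
    (∀ x, ‖S x - x‖ ≤ M) ∧ μ (B ∩ {x | S x ≠ D x}) ≤ δ

lemma ApproxByDiffeo.of_eventually_eq [BorelSpace E] [SecondCountableTopology E]
    (hD : Measurable D) {S : ℕ → Equiv.Perm E} (hS : ∀ k, S k ∈ unimodularDiffeo E)
    (hM : ∀ k x, ‖S k x - x‖ ≤ M) (heq : ∀ x, ∀ᶠ k in atTop, S k x = D x) :
    ApproxByDiffeo μ D M := by
  intro B hB hBfin δ hδ
  have hmeas k : MeasurableSet (B ∩ {x | S k x ≠ D x}) :=
    hB.inter (measurableSet_eq_fun (hS k).1.continuous.measurable hD).compl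
  have hlim : Tendsto (fun k => μ (B ∩ {x | S k x ≠ D x})) atTop (𝓝 0) := by
    rw [← measure_empty (μ := μ)]
    refine tendsto_measure_of_tendsto_indicator (B := B) atTop hmeas hB hBfin
      (Eventually.of_forall fun k => inter_subset_left) fun x => ?_
    filter_upwards [heq x] with k hk
    simp [hk]
  obtain ⟨k, hk⟩ := (hlim.eventually_le_const (pos_iff_ne_zero.2 hδ)).exists
  exact ⟨S k, hS k, hM k, hk⟩

lemma ApproxByDiffeo.mul (hC : ApproxByDiffeo μ C M) (hD : ApproxByDiffeo μ D N)
    (hDμ : MeasurePreserving D μ μ) (hDμ' : MeasurePreserving D.symm μ μ) :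
    ApproxByDiffeo μ (C * D) (M + N) := by
  intro B hB hBfin δ hδ
  have hδ' : δ / 2 ≠ 0 := (ENNReal.half_pos hδ).ne'
  obtain ⟨S, hS, hSM, hSC⟩ := hC (D.symm ⁻¹' B) (hDμ'.measurable hB)
    (by rwa [hDμ'.measure_preimage hB.nullMeasurableSet]) _ hδ'
  obtain ⟨T, hT, hTN, hTD⟩ := hD B hB hBfin _ hδ'
  refine ⟨S * T, mul_mem hS hT, fun x => ?_, ?_⟩
  · calc ‖S (T x) - x‖ ≤ ‖S (T x) - T x‖ + ‖T x - x‖ := norm_sub_le_norm_sub_add_norm_sub ..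
      _ ≤ M + N := add_le_add (hSM _) (hTN _)
  · have hsub : B ∩ {x | (S * T) x ≠ (C * D) x} ⊆
        D ⁻¹' (D.symm ⁻¹' B ∩ {y | S y ≠ C y}) ∪ (B ∩ {x | T x ≠ D x}) := by
      rintro x ⟨hxB, hx⟩
      by_cases hTx : T x = D x
      · exact Or.inl ⟨by simpa using hxB, by simpa [hTx] using hx⟩
      · exact Or.inr ⟨hxB, hTx⟩
    calc μ (B ∩ {x | (S * T) x ≠ (C * D) x})
        ≤ μ (D ⁻¹' (D.symm ⁻¹' B ∩ {y | S y ≠ C y})) + μ (B ∩ {x | T x ≠ D x}) :=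
          (measure_mono hsub).trans (measure_union_le _ _)
      _ ≤ δ / 2 + δ / 2 := add_le_add ((hDμ.measure_preimage_le _).trans hSC) hTD
      _ = δ := ENNReal.add_halves δ

lemma ApproxByDiffeo.inv (hD : ApproxByDiffeo μ D M) (hDμ : MeasurePreserving D μ μ)
    (hDμ' : MeasurePreserving D.symm μ μ) : ApproxByDiffeo μ D⁻¹ M := by
  intro B hB hBfin δ hδ
  obtain ⟨S, hS, hSM, hSD⟩ := hD (D ⁻¹' B) (hDμ.measurable hB)
    (by rwa [hDμ.measure_preimage hB.nullMeasurableSet]) δ hδ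
  refine ⟨S⁻¹, inv_mem hS, fun x => ?_, ?_⟩
  · simpa [norm_sub_rev] using hSM (S⁻¹ x)
  · have hsub : B ∩ {x | S⁻¹ x ≠ D⁻¹ x} ⊆ D.symm ⁻¹' (D ⁻¹' B ∩ {x | S x ≠ D x}) := by
      rintro x ⟨hxB, hx⟩
      refine ⟨by simpa using hxB, fun h => hx ?_⟩
      rw [Equiv.Perm.inv_eq_iff_eq]
      simpa [eq_comm] using h
    exact (measure_mono hsub).trans ((hDμ'.measure_preimage_le _).trans hSD)

/-- The group of measure preserving bijections of `E` that unimodular diffeomorphisms of bounded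
displacement approximate in the sense of `ApproxByDiffeo`. -/
def diffeoApproximable (μ : Measure E) : Subgroup (Equiv.Perm E) where
  carrier := {D | MeasurePreserving D μ μ ∧ MeasurePreserving D.symm μ μ ∧
    ∃ M, ApproxByDiffeo μ D M}
  one_mem' := ⟨.id μ, .id μ, 0, fun _ _ _ _ _ => ⟨1, one_mem _, by simp, by simp⟩⟩
  mul_mem' := fun ⟨hC, hC', _, hCM⟩ ⟨hD, hD', _, hDN⟩ =>
    ⟨hC.comp hD, hD'.comp hC', _, hCM.mul hDN hD hD'⟩
  inv_mem' := fun ⟨hD, hD', _, hDM⟩ => ⟨hD', hD, _, hDM.inv hD hD'⟩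

end Diffeo

section Commutator

open scoped commutatorElement

variable {α : Type*} {a b : Equiv.Perm α} {x y : α}

lemma commutatorElement_apply_apply (a b : Equiv.Perm α) (z : α) :
    ⁅a, b⁆ (b (a z)) = a (b z) := by
  simp [commutatorElement_def]

lemma commutatorElement_apply_eq_left (hab : ∀ z, a z ≠ z → b z ≠ z → z = x) (hbx : b x ≠ x) :
    ⁅a, b⁆ x = a x := by
  obtain ⟨w, hw⟩ := b.surjective x
  have haw : a w = w := by
    by_contra ha
    by_cases hb : b w = w
    · exact hbx (by rw [← hw, hb, hb])
    · exact hbx (by rwa [hab w ha hb] at hw)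
  simpa only [haw, hw] using commutatorElement_apply_apply a b w

lemma commutatorElement_apply_eq_self (hab : ∀ z, a z ≠ z → b z ≠ z → z = x)
    (hx : y ≠ x) (ha : y ≠ a x) (hb : y ≠ b x) : ⁅a, b⁆ y = y := by
  obtain ⟨z, rfl⟩ := (a.trans b).surjective y
  simp only [Equiv.trans_apply] at *
  rw [commutatorElement_apply_apply]
  by_cases haz : a z = z
  · rw [haz] at hx ⊢
    by_contra h
    by_cases hbz : b z = z
    · simp [hbz, haz] at h
    · exact hx (hab _ h (b.injective.ne hbz))
  · have hbaz : b (a z) = a z := by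
      by_contra h
      exact hb (congrArg b (hab _ (a.injective.ne haz) h))
    rw [hbaz] at ha ⊢
    by_contra h
    exact ha (congrArg a (hab z haz fun hbz => h (congrArg a hbz)))

lemma exists_mem_fixing_apply_eq_left {G : Subgroup (Equiv.Perm α)} (ha : a ∈ G) (hb : b ∈ G)
    (hab : ∀ z, a z ≠ z → b z ≠ z → z = x) (hbx : b x ≠ x) {F : Set α} (hxF : x ∉ F)
    (haF : a x ∉ F) (hbF : b x ∉ F) : ∃ σ ∈ G, (∀ z ∈ F, σ z = z) ∧ σ x = a x := by
  refine ⟨⁅a, b⁆, ?_, fun z hz => commutatorElement_apply_eq_self hab (ne_of_mem_of_not_mem hz hxF)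
    (ne_of_mem_of_not_mem hz haF) (ne_of_mem_of_not_mem hz hbF),
    commutatorElement_apply_eq_left hab hbx⟩
  rw [commutatorElement_def]
  exact mul_mem (mul_mem (mul_mem ha hb) (inv_mem ha)) (inv_mem hb)

end Commutator

section Fiber

variable {α β γ : Type*} [DecidableEq γ] {Q : Finset α} {T : Finset β} {κ : α → γ} {π : β → γ}

lemma exists_injOn_mapsTo_of_card_fiber_le [Nonempty β]
    (hcard : ∀ c, (Q.filter (κ · = c)).card ≤ (T.filter (π · = c)).card) :
    ∃ f : α → β, InjOn f Q ∧ ∀ d ∈ Q, f d ∈ T ∧ π (f d) = κ d := by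
  have hfiber c : ∃ f : α → β, (∀ d ∈ Q.filter (κ · = c), f d ∈ T.filter (π · = c)) ∧
      InjOn f (Q.filter (κ · = c)) := by
    have hencard : (Q.filter (κ · = c) : Set α).encard ≤ (T.filter (π · = c) : Set β).encard := by
      simpa only [encard_coe_eq_coe_finsetCard, Nat.cast_le] using hcard c
    obtain ⟨f, hf, hinj⟩ := (Finset.finite_toSet _).exists_injOn_of_encard_le hencard
    exact ⟨f, fun d hd => hf hd, hinj⟩
  choose f hf hinj using hfiber
  have hmem d (hd : d ∈ Q) : f (κ d) d ∈ T ∧ π (f (κ d) d) = κ d := by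
    simpa using hf (κ d) d (by simpa using hd)
  refine ⟨fun d => f (κ d) d, fun d hd d' hd' h => ?_, hmem⟩
  have hκ : κ d = κ d' := by
    rw [← (hmem d hd).2, ← (hmem d' hd').2]
    exact congrArg π h
  exact hinj (κ d) (by simpa using hd) (by simpa [hκ] using hd') (by simpa [hκ] using h)

end Fiber

section Lattice

variable {ι : Type*}

/-- The permutation of the lattice `ι → ℤ` that translates by `v` the cylinder of points having
the coordinates of `o` in `A`, and fixes all other points. -/
noncomputable def cylinderShift (A : Finset ι) (o v : ι → ℤ) (hv : ∀ k ∈ A, v k = 0) :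
    Equiv.Perm (ι → ℤ) :=
  shear ({d | ∀ k ∈ A, d k = o k}.indicator (1 : (ι → ℤ) → ℤ)) v fun d t => by
    have hmem : d + t • v ∈ {d | ∀ k ∈ A, d k = o k} ↔ d ∈ {d | ∀ k ∈ A, d k = o k} :=
      forall₂_congr fun k hk => by simp [hv k hk]
    classical simp only [indicator_apply, hmem, Pi.one_apply]

variable {A : Finset ι} {o v d : ι → ℤ} {hv : ∀ k ∈ A, v k = 0}

lemma cylinderShift_apply_of_forall_eq (h : ∀ k ∈ A, d k = o k) :
    cylinderShift A o v hv d = d + v := by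
  simp [cylinderShift, indicator_of_mem (show d ∈ {d | ∀ k ∈ A, d k = o k} from h)]

lemma forall_eq_of_cylinderShift_apply_ne (h : cylinderShift A o v hv d ≠ d) :
    ∀ k ∈ A, d k = o k := by
  contrapose! h
  obtain ⟨k, hk, hne⟩ := h
  simp [cylinderShift, indicator_of_notMem
    (show d ∉ {d | ∀ k ∈ A, d k = o k} from fun h => hne (h k hk))]

variable (ι) in
/-- The group generated by the cylinder shifts. -/
def cylinderShiftGroup : Subgroup (Equiv.Perm (ι → ℤ)) :=
  Subgroup.closure {σ | ∃ A o v hv, σ = cylinderShift A o v hv}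

lemma cylinderShift_mem_cylinderShiftGroup (hv : ∀ k ∈ A, v k = 0) :
    cylinderShift A o v hv ∈ cylinderShiftGroup ι :=
  Subgroup.subset_closure ⟨A, o, v, hv, rfl⟩

variable {F : Finset (ι → ℤ)} {i : ι} {x y : ι → ℤ}

lemma exists_forall_mem_apply_ne (F : Finset (ι → ℤ)) (i : ι) : ∃ N, ∀ z ∈ F, z i ≠ N := by
  obtain ⟨N, hN⟩ := Infinite.exists_notMem_finset (F.image fun z => z i)
  exact ⟨N, fun z hz h => hN (Finset.mem_image.2 ⟨z, hz, h⟩)⟩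

lemma eq_of_cylinderShift_singleton_ne_of_erase_ne [Fintype ι] [DecidableEq ι] {v w z : ι → ℤ}
    {hv : ∀ k ∈ ({i} : Finset ι), v k = 0} {hw : ∀ k ∈ Finset.univ.erase i, w k = 0}
    (hz : cylinderShift {i} x v hv z ≠ z)
    (hz' : cylinderShift (Finset.univ.erase i) x w hw z ≠ z) : z = x := by
  funext k
  by_cases hk : k = i
  · exact forall_eq_of_cylinderShift_apply_ne hz k (by simp [hk])
  · exact forall_eq_of_cylinderShift_apply_ne hz' k (by simp [hk])

variable [Finite ι]

-- Commutator of a shift of the hyperplane through `x` with a shift of the line through `x` in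
-- direction `i`; these two supports meet in `x` only.
lemma exists_cylinderShiftGroup_apply_eq_of_apply_eq (hxy : y i = x i) (hx : x ∉ F) (hy : y ∉ F) :
    ∃ σ ∈ cylinderShiftGroup ι, (∀ z ∈ F, σ z = z) ∧ σ x = y := by
  classical
  cases nonempty_fintype ι
  obtain ⟨N, hN⟩ := exists_forall_mem_apply_ne (insert x F) i
  rw [Finset.forall_mem_insert] at hN
  have hv : ∀ k ∈ ({i} : Finset ι), (y - x) k = 0 := by simp [hxy]
  have hw : ∀ k ∈ Finset.univ.erase i, (Function.update x i N - x) k = 0 := by simp +contextual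
  have ha : cylinderShift {i} x (y - x) hv x = y := by
    rw [cylinderShift_apply_of_forall_eq fun _ _ => rfl, add_sub_cancel]
  have hb : cylinderShift (Finset.univ.erase i) x _ hw x = Function.update x i N := by
    rw [cylinderShift_apply_of_forall_eq fun _ _ => rfl, add_sub_cancel]
  obtain ⟨σ, hσ, hfix, hσx⟩ := exists_mem_fixing_apply_eq_left
    (cylinderShift_mem_cylinderShiftGroup hv) (cylinderShift_mem_cylinderShiftGroup hw)
    (fun _ => eq_of_cylinderShift_singleton_ne_of_erase_ne)
    (by rw [hb]; exact fun h => hN.1 (by simpa using (congrFun h i).symm))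
    (F := F) hx (by rwa [ha]) (by rw [hb]; exact fun h => hN.2 _ h (by simp))
  exact ⟨σ, hσ, hfix, hσx.trans ha⟩

lemma exists_cylinderShiftGroup_apply_eq_of_forall_ne [Nontrivial ι]
    (hxy : ∀ k ≠ i, y k = x k) (hx : x ∉ F) (hy : y ∉ F) :
    ∃ σ ∈ cylinderShiftGroup ι, (∀ z ∈ F, σ z = z) ∧ σ x = y := by
  classical
  cases nonempty_fintype ι
  obtain ⟨j, hj⟩ := exists_ne i
  obtain ⟨N, hN⟩ := exists_forall_mem_apply_ne (insert x F) j
  rw [Finset.forall_mem_insert] at hN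
  have hv : ∀ k ∈ ({i} : Finset ι), (Function.update x j N - x) k = 0 := by simp [hj.symm]
  have hw : ∀ k ∈ Finset.univ.erase i, (y - x) k = 0 := by simp +contextual [hxy]
  have ha : cylinderShift {i} x _ hv x = Function.update x j N := by
    rw [cylinderShift_apply_of_forall_eq fun _ _ => rfl, add_sub_cancel]
  have hb : cylinderShift (Finset.univ.erase i) x _ hw x = y := by
    rw [cylinderShift_apply_of_forall_eq fun _ _ => rfl, add_sub_cancel]
  obtain ⟨σ, hσ, hfix, hσx⟩ := exists_mem_fixing_apply_eq_left
    (cylinderShift_mem_cylinderShiftGroup hw) (cylinderShift_mem_cylinderShiftGroup hv)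
    (fun _ hz hz' => eq_of_cylinderShift_singleton_ne_of_erase_ne hz' hz)
    (by rw [ha]; exact fun h => hN.1 (by simpa using (congrFun h j).symm))
    (F := F) hx (by rwa [hb]) (by rw [ha]; exact fun h => hN.2 _ h (by simp))
  exact ⟨σ, hσ, hfix, hσx.trans hb⟩

variable [Nontrivial ι]

lemma exists_cylinderShiftGroup_apply_eq (hx : x ∉ F) (hy : y ∉ F) :
    ∃ σ ∈ cylinderShiftGroup ι, (∀ z ∈ F, σ z = z) ∧ σ x = y := by
  classical
  obtain ⟨i⟩ : Nonempty ι := inferInstance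
  obtain ⟨N, hN⟩ := exists_forall_mem_apply_ne F i
  have hupdate z : Function.update z i N ∉ F := fun h => hN _ h (by simp)
  obtain ⟨ρ, hρ, hρF, hρx⟩ := exists_cylinderShiftGroup_apply_eq_of_forall_ne
    (y := Function.update x i N) (i := i) (by simp +contextual) hx (hupdate x)
  obtain ⟨σ, hσ, hσF, hσx⟩ := exists_cylinderShiftGroup_apply_eq_of_apply_eq
    (y := Function.update y i N) (i := i) (by simp) (hupdate x) (hupdate y)
  obtain ⟨τ, hτ, hτF, hτy⟩ := exists_cylinderShiftGroup_apply_eq_of_forall_ne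
    (x := Function.update y i N) (i := i) (by simp +contextual) (hupdate y) hy
  refine ⟨τ * σ * ρ, mul_mem (mul_mem hτ hσ) hρ, fun z hz => ?_, ?_⟩
  · simp [hρF z hz, hσF z hz, hτF z hz]
  · simp [hρx, hσx, hτy]

lemma exists_cylinderShiftGroup_eqOn {f : (ι → ℤ) → ι → ℤ} (hf : InjOn f F) :
    ∃ σ ∈ cylinderShiftGroup ι, EqOn σ f F := by
  classical
  induction F using Finset.induction with
  | empty => exact ⟨1, one_mem _, by simp⟩
  | insert x F hx ih =>
    rw [Finset.coe_insert] at hf ⊢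
    obtain ⟨σ, hσ, hσf⟩ := ih (hf.mono (subset_insert _ _))
    have himage : F.image σ = F.image f := Finset.image_congr hσf
    obtain ⟨τ, hτ, hfix, hτx⟩ := exists_cylinderShiftGroup_apply_eq (F := F.image σ) (x := σ x)
      (y := f x) (by simpa using hx) (by
        rw [himage, Finset.mem_image]
        rintro ⟨z, hz, hzx⟩
        exact hx (hf (mem_insert_of_mem x hz) (mem_insert x _) hzx ▸ hz))
    refine ⟨τ * σ, mul_mem hτ hσ, ?_⟩
    rintro z (rfl | hz)
    · exact hτx
    · rw [Equiv.Perm.mul_apply, hfix _ (Finset.mem_image_of_mem σ hz), hσf hz]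

lemma exists_cylinderShiftGroup_apply_eq_mapsTo {Q : Finset (ι → ℤ)} (hQF : Q ⊆ F) {γ : Type*}
    [DecidableEq γ] {κ π : (ι → ℤ) → γ}
    (hcard : ∀ c, (Q.filter (κ · = c)).card ≤ (F.filter (π · = c)).card) :
    ∃ σ ∈ cylinderShiftGroup ι, (∀ d ∈ Q, π (σ d) = κ d) ∧ MapsTo σ F F := by
  classical
  obtain ⟨f, hf, hfF⟩ := exists_injOn_mapsTo_of_card_fiber_le hcard
  obtain ⟨e, he⟩ := MapsTo.exists_equiv_extend_of_card_eq (Fintype.card_coe F)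
    (s := {d : F | (d : ι → ℤ) ∈ Q}) (f := fun d => f d) (fun d hd => (hfF d hd).1)
    (fun d hd d' hd' h => Subtype.ext (hf hd hd' h))
  let g : (ι → ℤ) → ι → ℤ := fun d => if h : d ∈ F then e ⟨d, h⟩ else d
  have hg d (hd : d ∈ F) : g d = e ⟨d, hd⟩ := dif_pos hd
  obtain ⟨σ, hσ, hσg⟩ := exists_cylinderShiftGroup_eqOn (F := F) (f := g) fun d hd d' hd' h => by
    rw [hg d hd, hg d' hd'] at h
    simpa using h
  refine ⟨σ, hσ, fun d hd => ?_, fun d hd => ?_⟩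
  · rw [hσg (hQF hd), hg d (hQF hd), he _ hd, (hfF d hd).2]
  · rw [hσg hd, hg d hd]
    exact (e _).2

end Lattice

lemma measure_eq_tsum_inter_preimage_singleton {α β : Type*} [MeasurableSpace α]
    [MeasurableSpace β] [Countable β] [MeasurableSingletonClass β] {μ : Measure α} {f : α → β}
    (hf : Measurable f) (A : Set α) : μ A = ∑' b, μ (A ∩ f ⁻¹' {b}) := by
  have hfiber b : MeasurableSet (f ⁻¹' {b}) := hf (measurableSet_singleton b)
  have htsum := tsum_measure_preimage_singleton (μ := μ.restrict A) countable_univ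
    fun b _ => hfiber b
  rw [tsum_univ fun b => μ.restrict A (f ⁻¹' {b}), preimage_univ, Measure.restrict_apply_univ]
    at htsum
  simp only [← htsum, Measure.restrict_apply (hfiber _), inter_comm]

section Cell

variable {ι : Type*}

/-- The index of the half-open cubic cell of side `h` containing `x`. -/
noncomputable def cellIndex (h : ℝ) (x : EuclideanSpace ℝ ι) : ι → ℤ :=
  fun i => ⌊x i / h⌋

/-- The lower corner of the cell of side `h` with index `d`. -/
noncomputable def gridPoint (h : ℝ) : (ι → ℤ) →+ EuclideanSpace ℝ ι where
  toFun d := WithLp.toLp 2 fun i => h * d i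
  map_zero' := by ext; simp
  map_add' c d := by ext; simp [mul_add]

@[simp]
lemma gridPoint_apply (h : ℝ) (d : ι → ℤ) (i : ι) : gridPoint h d i = h * d i := rfl

variable {h R : ℝ} {x y : EuclideanSpace ℝ ι}

lemma cellIndex_add_gridPoint (hh : h ≠ 0) (x : EuclideanSpace ℝ ι) (d : ι → ℤ) :
    cellIndex h (x + gridPoint h d) = cellIndex h x + d := by
  ext i
  simp [cellIndex, add_div, mul_div_cancel_left₀ _ hh]

lemma cellIndex_mul_natCast (h : ℝ) (N : ℕ) (x : EuclideanSpace ℝ ι) (i : ι) :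
    cellIndex (h * N) x i = cellIndex h x i / N := by
  rw [cellIndex, ← div_div, Int.floor_div_natCast, cellIndex]

/-- The rearrangement of `ℝⁿ` that moves the cells of side `h` by translations, permuting their
indices by `σ`. -/
noncomputable def cellPerm (hh : h ≠ 0) :
    Equiv.Perm (ι → ℤ) →* Equiv.Perm (EuclideanSpace ℝ ι) where
  toFun σ :=
    { toFun x := x + gridPoint h (σ (cellIndex h x) - cellIndex h x)
      invFun x := x + gridPoint h (σ.symm (cellIndex h x) - cellIndex h x)
      left_inv x := by simp [cellIndex_add_gridPoint hh, add_assoc, ← map_add, -map_sub]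
      right_inv x := by simp [cellIndex_add_gridPoint hh, add_assoc, ← map_add, -map_sub] }
  map_one' := Equiv.ext fun x => by simp
  map_mul' σ τ := Equiv.ext fun x => by
    simp [cellIndex_add_gridPoint hh, add_assoc, ← map_add, -map_sub]

lemma cellPerm_apply (hh : h ≠ 0) (σ : Equiv.Perm (ι → ℤ)) (x : EuclideanSpace ℝ ι) :
    cellPerm hh σ x = x + gridPoint h (σ (cellIndex h x) - cellIndex h x) := rfl

@[simp]
lemma cellIndex_cellPerm (hh : h ≠ 0) (σ : Equiv.Perm (ι → ℤ)) (x : EuclideanSpace ℝ ι) :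
    cellIndex h (cellPerm hh σ x) = σ (cellIndex h x) := by
  rw [cellPerm_apply, cellIndex_add_gridPoint hh, add_sub_cancel]

@[fun_prop]
lemma measurable_cellIndex (h : ℝ) : Measurable (cellIndex (ι := ι) h) :=
  measurable_pi_lambda _ fun _ => Int.measurable_floor.comp (by fun_prop)

lemma measurable_cellPerm [Finite ι] (hh : h ≠ 0) (σ : Equiv.Perm (ι → ℤ)) :
    Measurable (cellPerm hh σ) := by
  cases nonempty_fintype ι
  exact measurable_id.add ((measurable_of_countable fun d => gridPoint h (σ d - d)).comp
    (measurable_cellIndex h))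

lemma finite_image_cellIndex [Finite ι] {A : Set (EuclideanSpace ℝ ι)} (hh : 0 < h)
    (hA : ∀ x ∈ A, ∀ i, |x i| ≤ R) : (cellIndex h '' A).Finite := by
  refine (Set.Finite.pi' (t := fun _ : ι => Icc ⌊-R / h⌋ ⌊R / h⌋)
    fun _ => finite_Icc _ _).subset ?_
  rintro _ ⟨x, hx, rfl⟩ i
  constructor <;> refine Int.floor_le_floor ?_ <;> gcongr
  exacts [(abs_le.1 (hA x hx i)).1, (abs_le.1 (hA x hx i)).2]

variable [Fintype ι]

lemma norm_sub_le_of_cellIndex_eq (hh : 0 < h) (hxy : cellIndex h x = cellIndex h y) :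
    ‖x - y‖ ≤ √(Fintype.card ι) * h := by
  have hcoord i : ‖(x - y) i‖ ≤ h := by
    have hlt := Int.abs_sub_lt_one_of_floor_eq_floor (congrFun hxy i)
    rw [← sub_div, abs_div, abs_of_pos hh, div_lt_one hh] at hlt
    exact hlt.le
  calc ‖x - y‖ = √(∑ i, ‖(x - y) i‖ ^ 2) := EuclideanSpace.norm_eq _
    _ ≤ √(∑ _i : ι, h ^ 2) := by gcongr with i; exact hcoord i
    _ = √(Fintype.card ι) * h := by simp [Real.sqrt_mul, Real.sqrt_sq hh.le]

lemma volume_preimage_cellIndex_singleton (hh : h ≠ 0) (d : ι → ℤ) :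
    volume (cellIndex h ⁻¹' {d}) = volume (cellIndex h ⁻¹' {(0 : ι → ℤ)}) := by
  rw [← measure_preimage_add_right volume (gridPoint h d) (cellIndex h ⁻¹' {d})]
  congr 1
  ext x
  simp [cellIndex_add_gridPoint hh]

lemma volume_preimage_cellIndex_finset (hh : h ≠ 0) (F : Finset (ι → ℤ)) :
    volume (cellIndex h ⁻¹' (F : Set (ι → ℤ))) =
      F.card * volume (cellIndex h ⁻¹' {(0 : ι → ℤ)}) := by
  rw [← sum_measure_preimage_singleton F fun d _ =>
    measurable_cellIndex h (measurableSet_singleton d)]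
  simp [volume_preimage_cellIndex_singleton hh]

lemma measurePreserving_cellPerm (hh : h ≠ 0) (σ : Equiv.Perm (ι → ℤ)) :
    MeasurePreserving (cellPerm hh σ) := by
  refine ⟨measurable_cellPerm hh σ, Measure.ext fun A hA => ?_⟩
  rw [Measure.map_apply (measurable_cellPerm hh σ) hA,
    measure_eq_tsum_inter_preimage_singleton (measurable_cellIndex h),
    measure_eq_tsum_inter_preimage_singleton (measurable_cellIndex h) A,
    ← σ.tsum_eq fun d => volume (A ∩ cellIndex h ⁻¹' {d})]
  refine tsum_congr fun d => ?_
  rw [← measure_preimage_add_right volume (gridPoint h (σ d - d)) (A ∩ cellIndex h ⁻¹' {σ d})]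
  congr 1
  ext x
  have hd : cellIndex h x + (σ d - d) = σ d ↔ cellIndex h x = d := by
    rw [← eq_sub_iff_add_eq, sub_sub_cancel]
  simp only [mem_inter_iff, mem_preimage, mem_singleton_iff, cellIndex_add_gridPoint hh, hd,
    and_congr_left_iff]
  rintro rfl
  rfl

end Cell

section Smoothing

/-- Smooth cutoffs with values in `[0, 1]`: at each fixed `t`, the value `plateau N t` is that of
the indicator of `[0, 1)` as soon as `N` is large. -/
noncomputable def plateau (N : ℕ) (t : ℝ) : ℝ :=
  Real.smoothTransition (N * t + 1) * (1 - Real.smoothTransition (N * (t - 1) + 1))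

@[fun_prop]
lemma contDiff_plateau (N : ℕ) : ContDiff ℝ ∞ (plateau N) := by
  unfold plateau
  exact (Real.smoothTransition.contDiff.comp (by fun_prop)).mul
    (contDiff_const.sub (Real.smoothTransition.contDiff.comp (by fun_prop)))

lemma plateau_mem_Icc (N : ℕ) (t : ℝ) : plateau N t ∈ Icc 0 1 :=
  unitInterval.mul_mem ⟨Real.smoothTransition.nonneg _, Real.smoothTransition.le_one _⟩
    (Icc.mem_iff_one_sub_mem.1 ⟨Real.smoothTransition.nonneg _, Real.smoothTransition.le_one _⟩)

lemma eventually_smoothTransition_natCast_mul_add_one_eq (t : ℝ) :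
    ∀ᶠ N : ℕ in atTop, Real.smoothTransition (N * t + 1) = if 0 ≤ t then 1 else 0 := by
  rcases le_or_gt 0 t with ht | ht
  · filter_upwards with N
    rw [if_pos ht, Real.smoothTransition.one_of_one_le (le_add_of_nonneg_left (by positivity))]
  · have hlim : Tendsto (fun N : ℕ => (N : ℝ) * t) atTop atBot :=
      tendsto_natCast_atTop_atTop.atTop_mul_const_of_neg ht
    filter_upwards [hlim.eventually_le_atBot (-1)] with N hN
    rw [if_neg ht.not_ge, Real.smoothTransition.zero_of_nonpos (by linarith)]

lemma eventually_plateau_eq (t : ℝ) :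
    ∀ᶠ N : ℕ in atTop, plateau N t = if ⌊t⌋ = 0 then 1 else 0 := by
  filter_upwards [eventually_smoothTransition_natCast_mul_add_one_eq t,
    eventually_smoothTransition_natCast_mul_add_one_eq (t - 1)] with N h₀ h₁
  simp only [plateau, h₀, h₁, sub_nonneg, Int.floor_eq_zero_iff, mem_Ico]
  split_ifs <;> simp <;> grind

variable {ι : Type*} {h : ℝ} {A : Finset ι} {o v : ι → ℤ}

/-- The product cutoff of the cylinder of cells of side `h` whose indices agree with `o` on `A`. -/
noncomputable def cylinderBump (h : ℝ) (A : Finset ι) (o : ι → ℤ) (N : ℕ)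
    (x : EuclideanSpace ℝ ι) : ℝ :=
  ∏ k ∈ A, plateau N (x k / h - o k)

lemma contDiff_cylinderBump [Fintype ι] (h : ℝ) (A : Finset ι) (o : ι → ℤ) (N : ℕ) :
    ContDiff ℝ ∞ (cylinderBump h A o N) :=
  contDiff_prod fun _ _ => by fun_prop

lemma cylinderBump_mem_Icc (h : ℝ) (A : Finset ι) (o : ι → ℤ) (N : ℕ)
    (x : EuclideanSpace ℝ ι) : cylinderBump h A o N x ∈ Icc 0 1 :=
  unitInterval.prod_mem fun _ _ => plateau_mem_Icc _ _

lemma cylinderBump_add_smul_gridPoint (hv : ∀ k ∈ A, v k = 0) (N : ℕ) (x : EuclideanSpace ℝ ι)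
    (t : ℝ) : cylinderBump h A o N (x + t • gridPoint h v) = cylinderBump h A o N x :=
  Finset.prod_congr rfl fun k hk => by simp [hv k hk]

lemma eventually_cylinderBump_eq (h : ℝ) (A : Finset ι) (o : ι → ℤ) (x : EuclideanSpace ℝ ι) :
    ∀ᶠ N in atTop, cylinderBump h A o N x =
      {d | ∀ k ∈ A, d k = o k}.indicator (1 : (ι → ℤ) → ℝ) (cellIndex h x) := by
  have hplateau : ∀ᶠ N : ℕ in atTop, ∀ k ∈ A, plateau N (x k / h - o k) =
      if ⌊x k / h - o k⌋ = 0 then 1 else 0 :=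
    (Finset.eventually_all A).2 fun k _ => eventually_plateau_eq _
  filter_upwards [hplateau] with N hN
  classical
  rw [cylinderBump, Finset.prod_congr rfl hN, Finset.prod_ite_zero, indicator_apply]
  simp only [Int.floor_sub_intCast, sub_eq_zero, Finset.prod_const_one, mem_ofPred_eq, cellIndex,
    Pi.one_apply]
  congr

lemma cellPerm_cylinderShift_apply (hh : h ≠ 0) (hv : ∀ k ∈ A, v k = 0)
    (x : EuclideanSpace ℝ ι) : cellPerm hh (cylinderShift A o v hv) x =
      x + {d | ∀ k ∈ A, d k = o k}.indicator (1 : (ι → ℤ) → ℝ) (cellIndex h x) •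
        gridPoint h v := by
  by_cases hx : cellIndex h x ∈ {d | ∀ k ∈ A, d k = o k}
  · rw [cellPerm_apply, cylinderShift_apply_of_forall_eq hx, indicator_of_mem hx]
    simp
  · rw [cellPerm_apply, not_imp_comm.1 forall_eq_of_cylinderShift_apply_ne hx,
      indicator_of_notMem hx]
    simp

variable [Fintype ι]

lemma cellPerm_cylinderShift_mem_diffeoApproximable (hh : h ≠ 0) (hv : ∀ k ∈ A, v k = 0) :
    cellPerm hh (cylinderShift A o v hv) ∈ diffeoApproximable volume := by
  have hinvariant N := cylinderBump_add_smul_gridPoint (h := h) (o := o) hv N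
  refine ⟨measurePreserving_cellPerm hh _, ?_, ‖gridPoint h v‖,
    .of_eventually_eq (measurable_cellPerm hh _)
      (S := fun N => shear (cylinderBump h A o N) (gridPoint h v) (hinvariant N))
      (fun N => shear_mem_unimodularDiffeo _ (contDiff_cylinderBump ..)) (fun N x => ?_)
      fun x => ?_⟩
  · exact measurePreserving_cellPerm hh (cylinderShift A o v hv)⁻¹
  · obtain ⟨hnonneg, hle⟩ := cylinderBump_mem_Icc h A o N x
    rw [shear_apply, add_sub_cancel_left, norm_smul, Real.norm_of_nonneg hnonneg]
    exact mul_le_of_le_one_left (norm_nonneg _) hle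
  · filter_upwards [eventually_cylinderBump_eq h A o x] with N hN
    rw [shear_apply, cellPerm_cylinderShift_apply, hN]

lemma cellPerm_mem_diffeoApproximable (hh : h ≠ 0) {σ : Equiv.Perm (ι → ℤ)}
    (hσ : σ ∈ cylinderShiftGroup ι) : cellPerm hh σ ∈ diffeoApproximable volume := by
  suffices hle : cylinderShiftGroup ι ≤ (diffeoApproximable volume).comap (cellPerm hh) from hle hσ
  rw [cylinderShiftGroup, Subgroup.closure_le]
  rintro _ ⟨A, o, v, hv, rfl⟩
  exact cellPerm_cylinderShift_mem_diffeoApproximable hh hv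

end Smoothing

section Separation

variable {α β : Type*} [MetricSpace α] {A K L U : Set α}

lemma eventually_forall_le_dist_of_disjoint (hK : IsCompact K) (hL : IsCompact L)
    (hKL : Disjoint K L) : ∀ᶠ r in 𝓝 (0 : ℝ), ∀ x ∈ K, ∀ y ∈ L, r ≤ dist x y := by
  obtain ⟨r₀, hr₀, hlt⟩ := Metric.exists_pos_forall_lt_edist hK hL.isClosed hKL
  filter_upwards [eventually_le_nhds (NNReal.coe_pos.2 hr₀)] with r hr x hx y hy
  refine hr.trans ?_
  have hle := (hlt x hx y hy).le
  rwa [edist_dist, ENNReal.le_ofReal_iff_toReal_le ENNReal.coe_ne_top dist_nonneg] at hle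

variable [ProperSpace α] [MeasurableSpace α] [BorelSpace α] {μ : Measure α}
  [IsFiniteMeasureOnCompacts μ] {η : ENNReal}

lemma exists_isCompact_sdiff_le_measure_lt [NullSingletonClass μ]
    (hA : MeasurableSet A)
    (hfin : μ A ≠ ⊤) (hη : η ≠ 0) :
    ∃ K ⊆ A, IsCompact K ∧ μ (A \ K) ≤ η ∧ (K.Nonempty → μ K < μ A) := by
  by_cases hnull : μ A = 0
  · exact ⟨∅, empty_subset A, isCompact_empty, by simp [hnull], fun h => absurd rfl h.ne_empty⟩
  have hη' : η / 2 ≠ 0 := (ENNReal.half_pos hη).ne'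
  obtain ⟨x, -, hx⟩ := exists_mem_forall_mem_nhdsWithin_pos_measure hnull
  have hxη : μ {x} < η / 2 := by rwa [measure_singleton, pos_iff_ne_zero]
  obtain ⟨V, hxV, hV, hVη⟩ := Set.exists_isOpen_lt_of_lt _ _ hxη
  have hAV : 0 < μ (A ∩ V) := hx _ (inter_mem_nhdsWithin A (hV.mem_nhds (hxV rfl)))
  have hsdiff : μ (A \ V) ≠ ⊤ := measure_ne_top_of_subset sdiff_subset hfin
  obtain ⟨K, hKA, hK, hKη⟩ := (hA.diff hV.measurableSet).exists_isCompact_sdiff_lt hsdiff hη'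
  refine ⟨K, hKA.trans sdiff_subset, hK, ?_, fun _ => ?_⟩
  · have hsub : A \ K ⊆ (A \ V) \ K ∪ V := fun y hy => by
      by_cases hyV : y ∈ V
      exacts [Or.inr hyV, Or.inl ⟨⟨hy.1, hyV⟩, hy.2⟩]
    calc μ (A \ K) ≤ μ ((A \ V) \ K) + μ V := (measure_mono hsub).trans (measure_union_le _ _)
      _ ≤ η / 2 + η / 2 := add_le_add hKη.le hVη.le
      _ = η := ENNReal.add_halves η
  · calc μ K ≤ μ (A \ V) := measure_mono hKA
      _ < μ (A \ V) + μ (A ∩ V) := ENNReal.lt_add_right hsdiff hAV.ne'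
      _ = μ A := measure_sdiff_add_inter A hV.measurableSet

lemma exists_pos_separated_cthickening {C : β → Set α} {t : Set β} (ht : t.Finite)
    (hC : ∀ a, IsCompact (C a)) (hdisj : Pairwise (Function.onFun Disjoint C)) {m : β → ENNReal}
    (hm : ∀ a, (C a).Nonempty → μ (C a) < m a) :
    ∃ r > 0, (∀ a ∈ t, ∀ b ∈ t, ∀ x ∈ C a, ∀ y ∈ C b, dist x y < r → a = b) ∧
      ∀ a ∈ t, (C a).Nonempty → μ (cthickening r (C a)) < m a := by
  have hsep : ∀ᶠ r in 𝓝 (0 : ℝ), ∀ a ∈ t, ∀ b ∈ t, a ≠ b →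
      ∀ x ∈ C a, ∀ y ∈ C b, r ≤ dist x y := by
    simp only [ht.eventually_all, eventually_imp_distrib_left]
    exact fun a _ b _ hab => eventually_forall_le_dist_of_disjoint (hC a) (hC b) (hdisj hab)
  have hthick : ∀ᶠ r in 𝓝 (0 : ℝ), ∀ a ∈ t, (C a).Nonempty → μ (cthickening r (C a)) < m a := by
    simp only [ht.eventually_all, eventually_imp_distrib_left]
    exact fun a _ ha =>
      (tendsto_measure_cthickening_of_isCompact (hC a)).eventually_lt_const (hm a ha)
  obtain ⟨r, ⟨hrsep, hrthick⟩, hr⟩ := (((hsep.and hthick).filter_mono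
    nhdsWithin_le_nhds).and self_mem_nhdsWithin).exists (f := 𝓝[>] 0)
  refine ⟨r, hr, fun a ha b hb x hx y hy hxy => ?_, hrthick⟩
  by_contra hab
  exact (hrsep a ha b hb hab x hx y hy).not_gt hxy

lemma exists_subset_separated_fibers [NullSingletonClass μ] [MeasurableSpace β]
    [MeasurableSingletonClass β] {g : α → β} (hg : Measurable g) (hU : MeasurableSet U)
    (hfin : μ U ≠ ⊤) (hgU : (g '' U).Finite) (hη : η ≠ 0) :
    ∃ K ⊆ U, μ (U \ K) ≤ η ∧ ∃ r > 0, (∀ x ∈ K, ∀ y ∈ K, dist x y < r → g x = g y) ∧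
      ∀ a ∈ g '' K, μ (cthickening r (K ∩ g ⁻¹' {a})) < μ (U ∩ g ⁻¹' {a}) := by
  have hη' : η / hgU.toFinset.card ≠ 0 := by simp [hη]
  choose C hCU hC hCη hClt using fun a => exists_isCompact_sdiff_le_measure_lt (μ := μ)
    (hU.inter (hg (measurableSet_singleton a))) (measure_ne_top_of_subset inter_subset_left hfin)
    hη'
  have hCg {a x} (hx : x ∈ C a) : g x = a := (hCU a hx).2
  have hdisj : Pairwise (Function.onFun Disjoint C) := fun a b hab =>
    disjoint_left.2 fun x hxa hxb => hab ((hCg hxa).symm.trans (hCg hxb))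
  obtain ⟨r, hr, hsep, hthick⟩ := exists_pos_separated_cthickening hgU hC hdisj hClt
  have hmem {x} : x ∈ ⋃ a, C a ↔ x ∈ C (g x) :=
    ⟨fun hx => by obtain ⟨a, ha⟩ := mem_iUnion.1 hx; rwa [hCg ha], fun hx => mem_iUnion_of_mem _ hx⟩
  have hfiber a : (⋃ a, C a) ∩ g ⁻¹' {a} = C a := by
    ext x
    exact ⟨fun ⟨hx, hxa⟩ => hxa ▸ hmem.1 hx, fun hx => ⟨mem_iUnion_of_mem a hx, hCg hx⟩⟩
  have hgmem {x} (hx : x ∈ ⋃ a, C a) : g x ∈ g '' U :=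
    mem_image_of_mem g (hCU _ (hmem.1 hx)).1
  refine ⟨⋃ a, C a, iUnion_subset fun a => (hCU a).trans inter_subset_left, ?_, r, hr,
    fun x hx y hy => hsep _ (hgmem hx) _ (hgmem hy) x (hmem.1 hx) y (hmem.1 hy), fun a ha => ?_⟩
  · have hsub : U \ ⋃ a, C a ⊆ ⋃ a ∈ hgU.toFinset, (U ∩ g ⁻¹' {a}) \ C a := fun x hx =>
      mem_biUnion (hgU.mem_toFinset.2 (mem_image_of_mem g hx.1))
        ⟨⟨hx.1, rfl⟩, fun hxC => hx.2 (hmem.2 hxC)⟩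
    calc μ (U \ ⋃ a, C a) ≤ ∑ a ∈ hgU.toFinset, μ ((U ∩ g ⁻¹' {a}) \ C a) :=
          (measure_mono hsub).trans (measure_biUnion_finset_le _ _)
      _ ≤ hgU.toFinset.card • (η / hgU.toFinset.card) :=
          Finset.sum_le_card_nsmul _ _ _ fun a _ => hCη a
      _ ≤ η := by rw [nsmul_eq_mul]; exact ENNReal.mul_div_le
  · obtain ⟨x, hx, rfl⟩ := ha
    rw [hfiber]
    exact hthick _ (hgmem hx) ⟨x, hmem.1 hx⟩

end Separation

section Discretization

variable {ι : Type*} [Fintype ι] {h r R c : ℝ} {g : EuclideanSpace ℝ ι → ι → ℤ}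
  {K U : Set (EuclideanSpace ℝ ι)}

lemma card_lt_card_of_volume_preimage_cellIndex_lt (hh : h ≠ 0) {P F : Finset (ι → ℤ)}
    (hvol : volume (cellIndex h ⁻¹' (P : Set (ι → ℤ))) <
      volume (cellIndex h ⁻¹' (F : Set (ι → ℤ)))) : P.card < F.card := by
  rw [volume_preimage_cellIndex_finset hh, volume_preimage_cellIndex_finset hh] at hvol
  exact_mod_cast lt_of_mul_lt_mul_right' hvol

lemma preimage_image_cellIndex_subset_cthickening (hh : 0 < h)
    (hr : √(Fintype.card ι) * h ≤ r) (A : Set (EuclideanSpace ℝ ι)) :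
    cellIndex h ⁻¹' (cellIndex h '' A) ⊆ cthickening r A := by
  rintro x ⟨y, hy, hyx⟩
  refine mem_cthickening_of_dist_le x y r A hy ?_
  rw [dist_eq_norm]
  exact (norm_sub_le_of_cellIndex_eq hh hyx.symm).trans hr

lemma exists_cylinderShiftGroup_cellIndex_cellPerm_eq [Nontrivial ι] (hh : h ≠ 0) {N : ℕ}
    {F : Finset (ι → ℤ)} (hKF : ∀ x ∈ K, cellIndex h x ∈ F)
    (hgF : ∀ y, cellIndex (h * N) y ∈ g '' K → cellIndex h y ∈ F)
    (hg : ∀ x ∈ K, ∀ y ∈ K, cellIndex h x = cellIndex h y → g x = g y)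
    (hvol : ∀ a ∈ g '' K, volume (cellIndex h ⁻¹' (cellIndex h '' (K ∩ g ⁻¹' {a}))) <
      volume (cellIndex (h * N) ⁻¹' {a})) :
    ∃ σ ∈ cylinderShiftGroup ι,
      (∀ x ∈ K, cellIndex (h * N) (cellPerm hh σ x) = g x) ∧ MapsTo σ F F := by
  classical
  let Q := F.filter (· ∈ cellIndex h '' K)
  let κ (d : ι → ℤ) := g (Function.invFunOn (cellIndex h) K d)
  let π (d : ι → ℤ) (i : ι) := d i / (N : ℤ)
  have hπ x : π (cellIndex h x) = cellIndex (h * N) x :=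
    funext fun i => (cellIndex_mul_natCast h N x i).symm
  have hκ x (hx : x ∈ K) : κ (cellIndex h x) = g x :=
    have hmem := mem_image_of_mem (cellIndex h) hx
    hg _ (Function.invFunOn_mem hmem) _ hx (Function.invFunOn_eq hmem)
  have hQ a d (hd : d ∈ Q.filter (κ · = a)) : d ∈ cellIndex h '' (K ∩ g ⁻¹' {a}) := by
    obtain ⟨hdQ, hda⟩ := Finset.mem_filter.1 hd
    obtain ⟨x, hx, rfl⟩ := (Finset.mem_filter.1 hdQ).2
    exact mem_image_of_mem _ ⟨hx, (hκ x hx).symm.trans hda⟩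
  have hcard a : (Q.filter (κ · = a)).card ≤ (F.filter (π · = a)).card := by
    by_cases ha : a ∈ g '' K
    · refine (card_lt_card_of_volume_preimage_cellIndex_lt hh ?_).le
      refine (measure_mono (preimage_mono (hQ a))).trans_lt
        ((hvol a ha).trans_le (measure_mono fun y hy => ?_))
      have hya : cellIndex (h * N) y = a := hy
      simpa [hπ, hya] using hgF y (hya ▸ ha)
    · rw [Finset.card_eq_zero.2 (Finset.eq_empty_of_forall_notMem fun d hd => ha ?_)]
      · exact Nat.zero_le _
      · obtain ⟨x, ⟨hx, hxa⟩, -⟩ := hQ a d hd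
        exact ⟨x, hx, hxa⟩
  obtain ⟨σ, hσ, hσκ, hσF⟩ :=
    exists_cylinderShiftGroup_apply_eq_mapsTo (Finset.filter_subset _ F) hcard
  refine ⟨σ, hσ, fun x hx => ?_, hσF⟩
  rw [← hπ, cellIndex_cellPerm, hσκ _ (Finset.mem_filter.2 ⟨hKF x hx, mem_image_of_mem _ hx⟩),
    hκ x hx]

lemma exists_mem_diffeoApproximable_norm_sub_le_of_separated [Nontrivial ι]
    {s : EuclideanSpace ℝ ι → EuclideanSpace ℝ ι} (hh : 0 < h) {N : ℕ}
    (hhr : √(Fintype.card ι) * h < r) (hhc : √(Fintype.card ι) * h ≤ c)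
    (hNc : √(Fintype.card ι) * (h * N) ≤ c) (hN : 0 < h * N) (hKU : K ⊆ U)
    (hUR : ∀ x ∈ U, ‖x‖ ≤ R) (hsR : ∀ x ∈ U, ‖s x‖ ≤ R)
    (hsep : ∀ x ∈ K, ∀ y ∈ K, dist x y < r →
      cellIndex (h * N) (s x) = cellIndex (h * N) (s y))
    (hthick : ∀ a ∈ (cellIndex (h * N) ∘ s) '' K,
      volume (cthickening r (K ∩ (cellIndex (h * N) ∘ s) ⁻¹' {a})) <
        volume (cellIndex (h * N) ⁻¹' {a})) :
    ∃ D ∈ diffeoApproximable volume,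
      (∀ x ∈ U, ‖D x‖ ≤ R + 2 * c) ∧ ∀ x ∈ K, ‖s x - D x‖ ≤ c := by
  have hball : (cellIndex h '' closedBall (0 : EuclideanSpace ℝ ι) (R + c)).Finite :=
    finite_image_cellIndex hh fun x hx i =>
      (PiLp.norm_apply_le x i).trans (mem_closedBall_zero_iff.1 hx)
  have hmem {x : EuclideanSpace ℝ ι} (hx : ‖x‖ ≤ R + c) : cellIndex h x ∈ hball.toFinset :=
    hball.mem_toFinset.2 (mem_image_of_mem _ (mem_closedBall_zero_iff.2 hx))
  have hUball {x} (hx : x ∈ U) : cellIndex h x ∈ hball.toFinset :=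
    hmem (by linarith [hUR x hx, mul_nonneg (Real.sqrt_nonneg (Fintype.card ι)) hh.le])
  have hgball (y) (hy : cellIndex (h * N) y ∈ (cellIndex (h * N) ∘ s) '' K) :
      cellIndex h y ∈ hball.toFinset := by
    obtain ⟨x, hx, hxy⟩ := hy
    have hdist := norm_sub_le_of_cellIndex_eq hN hxy
    exact hmem (by linarith [norm_le_norm_add_norm_sub (s x) y, hsR x (hKU hx)])
  have hcell : ∀ x ∈ K, ∀ y ∈ K, cellIndex h x = cellIndex h y →
      (cellIndex (h * N) ∘ s) x = (cellIndex (h * N) ∘ s) y := fun x hx y hy hxy =>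
    hsep x hx y hy (dist_eq_norm x y ▸ (norm_sub_le_of_cellIndex_eq hh hxy).trans_lt hhr)
  obtain ⟨σ, hσ, hσK, hσball⟩ := exists_cylinderShiftGroup_cellIndex_cellPerm_eq hh.ne'
    (fun x hx => hUball (hKU hx)) hgball hcell fun a ha => (measure_mono
      (preimage_image_cellIndex_subset_cthickening hh hhr.le _)).trans_lt (hthick a ha)
  refine ⟨_, cellPerm_mem_diffeoApproximable hh.ne' hσ, fun x hx => ?_, fun x hx =>
    (norm_sub_le_of_cellIndex_eq hN (hσK x hx).symm).trans hNc⟩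
  obtain ⟨y, hy, hyx⟩ := hball.mem_toFinset.1 (hσball (hUball hx))
  rw [← cellIndex_cellPerm hh.ne'] at hyx
  have hdist := norm_sub_le_of_cellIndex_eq hh hyx
  linarith [norm_le_norm_add_norm_sub y (cellPerm hh.ne' σ x), mem_closedBall_zero_iff.1 hy]

lemma exists_pos_lt_mul_natCast_eq {δ : ℝ} (hδ : 0 < δ) (hr : 0 < r) :
    ∃ h > 0, h < r ∧ ∃ N : ℕ, h * N = δ := by
  obtain ⟨N, hN⟩ := exists_nat_gt (δ / r)
  have hN₀ : (0 : ℝ) < N := (div_pos hδ hr).trans hN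
  exact ⟨δ / N, div_pos hδ hN₀, (div_lt_comm₀ hr hN₀).1 hN, N, div_mul_cancel₀ _ hN₀.ne'⟩

lemma exists_mem_diffeoApproximable_volume_lt_norm_sub_le [Nontrivial ι]
    {s : EuclideanSpace ℝ ι → EuclideanSpace ℝ ι} {η : ENNReal} (hU : MeasurableSet U)
    (hUR : ∀ x ∈ U, ‖x‖ ≤ R) (hs : Measurable s) (hsR : ∀ x ∈ U, ‖s x‖ ≤ R)
    (hmap : Measure.map s (volume.restrict U) ≤ volume) (hc : 0 < c) (hη : η ≠ 0) :
    ∃ D ∈ diffeoApproximable volume, (∀ x ∈ U, ‖D x‖ ≤ R + 2 * c) ∧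
      volume (U ∩ {x | c < ‖s x - D x‖}) ≤ η := by
  have hcard : 0 < √(Fintype.card ι) := by positivity
  obtain ⟨δ, hδ, hδc⟩ : ∃ δ > 0, √(Fintype.card ι) * δ = c :=
    ⟨c / √(Fintype.card ι), by positivity, mul_div_cancel₀ _ hcard.ne'⟩
  have hUfin : volume U ≠ ⊤ := (isBounded_iff_forall_norm_le.2 ⟨R, hUR⟩).measure_lt_top.ne
  have hgfin : ((cellIndex δ ∘ s) '' U).Finite := by
    rw [image_comp]
    exact finite_image_cellIndex hδ (forall_mem_image.2 fun x hx i =>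
      (PiLp.norm_apply_le (s x) i).trans (hsR x hx))
  obtain ⟨K, hKU, hKη, r, hr, hsep, hthick⟩ := exists_subset_separated_fibers
    ((measurable_cellIndex δ).comp hs) hU hUfin hgfin hη
  have hfiber (a : ι → ℤ) :
      volume (U ∩ (cellIndex δ ∘ s) ⁻¹' {a}) ≤ volume (cellIndex δ ⁻¹' {a}) := by
    have hcell := measurable_cellIndex δ (measurableSet_singleton a)
    refine le_trans (le_of_eq ?_) (hmap _)
    rw [Measure.map_apply hs hcell, Measure.restrict_apply (hs hcell), inter_comm, preimage_comp]
  obtain ⟨h, hh, hhr, N, rfl⟩ := exists_pos_lt_mul_natCast_eq hδ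
    (lt_min (div_pos hr hcard) hδ)
  rw [lt_min_iff, lt_div_iff₀' hcard] at hhr
  obtain ⟨D, hD, hDU, hDK⟩ := exists_mem_diffeoApproximable_norm_sub_le_of_separated hh hhr.1
    (hδc ▸ mul_le_mul_of_nonneg_left hhr.2.le hcard.le) hδc.le hδ hKU hUR hsR hsep
    fun a ha => (hthick a ha).trans_le (hfiber a)
  refine ⟨D, hD, hDU, (measure_mono ?_).trans hKη⟩
  exact fun x ⟨hxU, hx⟩ => ⟨hxU, fun hxK => hx.not_ge (hDK x hxK)⟩

end Discretization

section Approximation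

lemma setLIntegral_le_add_mul {α : Type*} [MeasurableSpace α] {μ : Measure α} {U Y : Set α}
    {f g : α → ENNReal} {C : ENNReal} (hU : MeasurableSet U) (hY : MeasurableSet Y)
    (hg : ∀ x ∈ U \ Y, f x ≤ g x) (hC : ∀ x ∈ U ∩ Y, f x ≤ C) :
    ∫⁻ x in U, f x ∂μ ≤ ∫⁻ x in U, g x ∂μ + C * μ (U ∩ Y) :=
  calc ∫⁻ x in U, f x ∂μ = ∫⁻ x in U \ Y, f x ∂μ + ∫⁻ x in U ∩ Y, f x ∂μ := by
        rw [add_comm, lintegral_inter_add_sdiff f U hY]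
    _ ≤ ∫⁻ x in U \ Y, g x ∂μ + ∫⁻ _x in U ∩ Y, C ∂μ :=
        add_le_add (setLIntegral_mono' (hU.diff hY) hg) (setLIntegral_mono' (hU.inter hY) hC)
    _ ≤ ∫⁻ x in U, g x ∂μ + C * μ (U ∩ Y) := by
        rw [setLIntegral_const]
        gcongr
        exact sdiff_subset

lemma exists_unimodularDiffeo_setLIntegral_le_add {E : Type*} [NormedAddCommGroup E]
    [NormedSpace ℝ E] [SecondCountableTopology E] [MeasurableSpace E] [BorelSpace E]
    {μ : Measure E} {D : Equiv.Perm E} {U : Set E} {s : E → E} {R p : ℝ} {ε : ENNReal}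
    (hD : D ∈ diffeoApproximable μ) (hU : MeasurableSet U) (hUfin : μ U ≠ ⊤)
    (hUR : ∀ x ∈ U, ‖x‖ ≤ R) (hsR : ∀ x ∈ U, ‖s x‖ ≤ R) (hp : 0 ≤ p) (hε : ε ≠ 0) :
    ∃ S ∈ unimodularDiffeo E, ∫⁻ x in U, ENNReal.ofReal (‖s x - S x‖ ^ p) ∂μ ≤
      ∫⁻ x in U, ENNReal.ofReal (‖s x - D x‖ ^ p) ∂μ + ε := by
  obtain ⟨hDμ, -, M, hDM⟩ := hD
  let C := ENNReal.ofReal ((R + (R + M)) ^ p)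
  obtain ⟨S, hS, hSM, hSD⟩ := hDM U hU hUfin (ε / C) (ENNReal.div_ne_zero.2
    ⟨hε, ENNReal.ofReal_ne_top⟩)
  refine ⟨S, hS, ?_⟩
  have hbound x (hx : x ∈ U) : ‖s x - S x‖ ≤ R + (R + M) :=
    calc ‖s x - S x‖ ≤ ‖s x‖ + ‖S x‖ := norm_sub_le _ _
      _ ≤ ‖s x‖ + (‖x‖ + ‖S x - x‖) := by gcongr; exact norm_le_norm_add_norm_sub' _ _
      _ ≤ R + (R + M) := by gcongr; exacts [hsR x hx, hUR x hx, hSM x]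
  calc ∫⁻ x in U, ENNReal.ofReal (‖s x - S x‖ ^ p) ∂μ
      ≤ ∫⁻ x in U, ENNReal.ofReal (‖s x - D x‖ ^ p) ∂μ + C * μ (U ∩ {x | S x ≠ D x}) :=
        setLIntegral_le_add_mul hU
          (measurableSet_eq_fun hS.1.continuous.measurable hDμ.measurable).compl
          (fun x hx => by rw [not_not.1 fun h => hx.2 h])
          (fun x hx => by dsimp only [C]; gcongr; exact hbound x hx.1)
    _ ≤ ∫⁻ x in U, ENNReal.ofReal (‖s x - D x‖ ^ p) ∂μ + ε := by
        gcongr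
        exact (mul_le_mul_right hSD C).trans ENNReal.mul_div_le

variable {ι : Type*} [Fintype ι] [Nontrivial ι] {U : Set (EuclideanSpace ℝ ι)}
  {s : EuclideanSpace ℝ ι → EuclideanSpace ℝ ι} {R p : ℝ}

lemma exists_mem_diffeoApproximable_setLIntegral_le {ε : ENNReal} (hU : MeasurableSet U)
    (hUR : ∀ x ∈ U, ‖x‖ ≤ R) (hs : Measurable s) (hsR : ∀ x ∈ U, ‖s x‖ ≤ R)
    (hmap : Measure.map s (volume.restrict U) ≤ volume) (hp : 0 < p) (hε : ε ≠ 0) :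
    ∃ D ∈ diffeoApproximable volume, ∫⁻ x in U, ENNReal.ofReal (‖s x - D x‖ ^ p) ≤ ε := by
  have hUfin : volume U ≠ ⊤ := (isBounded_iff_forall_norm_le.2 ⟨R, hUR⟩).measure_lt_top.ne
  have hε' : ε / 2 ≠ 0 := (ENNReal.half_pos hε).ne'
  obtain ⟨a, ha, haε⟩ := ENNReal.exists_nnreal_pos_mul_lt hUfin hε'
  let c : ℝ := a ^ p⁻¹
  have hcp : c ^ p = a := Real.rpow_inv_rpow a.2 hp.ne'
  let C := ENNReal.ofReal ((R + (R + 2 * c)) ^ p)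
  obtain ⟨D, hD, hDU, hDη⟩ := exists_mem_diffeoApproximable_volume_lt_norm_sub_le hU hUR hs hsR
    hmap (Real.rpow_pos_of_pos ha _ : 0 < c) (η := ε / 2 / C)
    (ENNReal.div_ne_zero.2 ⟨hε', ENNReal.ofReal_ne_top⟩)
  have hfar : MeasurableSet {x | c < ‖s x - D x‖} :=
    measurableSet_lt measurable_const (hs.sub hD.1.measurable).norm
  refine ⟨D, hD, ?_⟩
  calc ∫⁻ x in U, ENNReal.ofReal (‖s x - D x‖ ^ p)
      ≤ (∫⁻ _x in U, ENNReal.ofReal (c ^ p)) + C * volume (U ∩ {x | c < ‖s x - D x‖}) :=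
        setLIntegral_le_add_mul hU hfar
          (fun x hx => by gcongr; exact not_lt.1 hx.2)
          (fun x hx => by
            dsimp only [C]
            gcongr
            exact norm_sub_le_of_le (hsR x hx.1) (hDU x hx.1))
    _ ≤ ε / 2 + ε / 2 := by
        rw [setLIntegral_const, hcp, ENNReal.ofReal_coe_nnreal]
        exact add_le_add haε.le ((mul_le_mul_right hDη C).trans ENNReal.mul_div_le)
    _ = ε := ENNReal.add_halves ε

theorem stmt_1_general (hU : MeasurableSet U) (hUb : IsBounded U) (hs : Measurable s)
    (hsb : IsBounded (s '' U)) (hmap : Measure.map s (volume.restrict U) ≤ volume) (hp : 0 < p)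
    {ε : ℝ} (hε : 0 < ε) :
    ∃ S ∈ unimodularDiffeo (EuclideanSpace ℝ ι), ∫ x in U, ‖s x - S x‖ ^ p ≤ ε := by
  obtain ⟨R, hR⟩ := (hUb.union hsb).exists_norm_le
  have hUR x (hx : x ∈ U) : ‖x‖ ≤ R := hR x (Or.inl hx)
  have hsR x (hx : x ∈ U) : ‖s x‖ ≤ R := hR _ (Or.inr (mem_image_of_mem s hx))
  have hε' : ENNReal.ofReal ε / 2 ≠ 0 := (ENNReal.half_pos (ENNReal.ofReal_pos.2 hε).ne').ne'
  obtain ⟨D, hD, hDε⟩ := exists_mem_diffeoApproximable_setLIntegral_le hU hUR hs hsR hmap hp hε'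
  obtain ⟨S, hS, hSε⟩ := exists_unimodularDiffeo_setLIntegral_le_add hD hU
    hUb.measure_lt_top.ne hUR hsR hp.le hε'
  refine ⟨S, hS, ?_⟩
  have hmeas : Measurable fun x => ‖s x - S x‖ ^ p :=
    (hs.sub hS.1.continuous.measurable).norm.pow_const p
  rw [integral_eq_lintegral_of_nonneg_ae (.of_forall fun x => by positivity)
    hmeas.aestronglyMeasurable]
  refine ENNReal.toReal_le_of_le_ofReal hε.le (hSε.trans ?_)
  exact (add_le_add_left hDε _).trans_eq (ENNReal.add_halves _)

end Approximation

theorem stmt_1 (n : ℕ) (hn : 1 < n)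
    (U : Set (EuclideanSpace ℝ (Fin n))) (hne : U.Nonempty) (hUo : IsOpen U)
    (hUb : IsBounded U) (hUc : IsConnected U)
    (s : EuclideanSpace ℝ (Fin n) → EuclideanSpace ℝ (Fin n))
    (hs : Measurable s) (hsb : IsBounded (s '' U))
    (hmp : ∃ B : Set (EuclideanSpace ℝ (Fin n)), MeasurableSet B ∧
      Measure.map s (volume.restrict U) = volume.restrict B)
    (p : ℝ) (hp : 1 ≤ p) (ε : ℝ) (hε : 0 < ε) :
    ∃ S Sinv : EuclideanSpace ℝ (Fin n) → EuclideanSpace ℝ (Fin n),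
      ContDiff ℝ (⊤ : ℕ∞) S ∧ ContDiff ℝ (⊤ : ℕ∞) Sinv ∧
      Function.LeftInverse Sinv S ∧ Function.RightInverse Sinv S ∧
      (∀ x, LinearMap.det ((fderiv ℝ S x).toLinearMap) = 1) ∧
      (∫ x in U, ‖s x - S x‖ ^ p) ≤ ε := by
  obtain ⟨B, -, hB⟩ := hmp
  have := Fin.nontrivial_iff_two_le.2 hn
  obtain ⟨S, ⟨hS, hS', hdet⟩, hSε⟩ := stmt_1_general hUo.measurableSet hUb hs hsb
    (hB.trans_le Measure.restrict_le_self) (zero_lt_one.trans_le hp) hε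
  exact ⟨S, S.symm, hS, hS', S.left_inv, S.right_inv, hdet, hSε⟩
end

section
/- Let 1 < p < ∞ and n ≥ 1. There exists a constant C_3 = C_3(n,p) > 0 with the following property. Let U ⊂ ℝ^n be a nonempty open, bounded, connected set and let u ∈ W^{1,∞}(U,ℝ^n) be essentially injective with diam(u(U)) ≤ d and 0 < λ ≤ det Du(x) ≤ Λ for a.e. x ∈ U. Then there exists a bounded Lipschitz map S : U → ℝ^n that is essentially injective and measure preserving such that ∫_U |u(x) − S(x)|^p dx ≤ C_3 · (d/λ^{1/n})^p (1 + λ^{−p}(Λ/λ)^{2p−2}) · ∫_U |1 − det Du(x)|^p dx. -/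
open MeasureTheory Metric Set Bornology

noncomputable section

/-- The Jacobian determinant of `u` at `x` (junk value if `u` is not differentiable at `x`). -/
def detD {n : ℕ} (u : EuclideanSpace ℝ (Fin n) → EuclideanSpace ℝ (Fin n))
    (x : EuclideanSpace ℝ (Fin n)) : ℝ :=
  LinearMap.det ((fderiv ℝ u x).toLinearMap)

/-- The multiplicity `mult_U(u)`: essential supremum of the counting function
`y ↦ #(U ∩ u⁻¹{y})`. -/
def multOn {n : ℕ} (U : Set (EuclideanSpace ℝ (Fin n)))
    (u : EuclideanSpace ℝ (Fin n) → EuclideanSpace ℝ (Fin n)) : ℕ∞ :=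
  essSup (fun y => (U ∩ u ⁻¹' {y}).encard) volume

/-!
The change of variables formula pushes Lebesgue measure on `U` forward to the density
`σ = 1 / det Du` on `u(U)`; extend `σ` by `1`. Rearranging `σ` monotonically into Lebesgue measure
along each line in one coordinate direction moves points by at most `∫ |σ - 1|` over a segment of
length at most `d`, so by Hölder's inequality `u` is within `(d / λ)^p ∫ |1 - det Du|^p` of a map
`S₀` with `S₀_# (volume on U) ≤ volume`.

This `S₀` is in general discontinuous. If `∫ |1 - det Du|^p = 0`, then `u` itself preserves measure.
Otherwise there is room for an error, and for `n ≥ 2` it suffices to find injective Lipschitz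
measure-preserving maps whose cost is arbitrarily close to that of `S₀`. On a fine lattice of cubes
`S₀` induces a doubly substochastic matrix; by Birkhoff's theorem some permutation of finitely many
cubes costs no more. Translations of a row of cubes, cut off so as to become shears, are limits of
injective Lipschitz measure-preserving maps, and they generate all permutations: the commutator of
two orthogonal row translations is a three-cycle, two of whose points can be sent out of the
relevant region.

For `n = 1` the set `U` is an interval, and a translation is good enough by the fundamental theorem
of calculus.
-/

section Permutations

open Equiv

lemma commutator_eq_swap_mul_swap {α : Type*} [DecidableEq α] {r c : Perm α} {a : α}
    (h : ∀ x, r x ≠ x → c x ≠ x → x = a) (hr : r a ≠ a)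
    (hc : c a ≠ a) :
    r * c * r⁻¹ * c⁻¹ = swap a (c a) * swap a (r a) := by
  have hrc : r (c a) = c a := by
    by_contra hne
    exact hc (h _ hne fun e => hc (c.injective e))
  have hdisj : Perm.Disjoint r (swap a (c a) * c) := by
    intro x
    by_cases hx : r x = x
    · exact Or.inl hx
    right
    rw [Perm.mul_apply]
    rcases eq_or_ne x a with rfl | hxa
    · exact swap_apply_right _ _
    · have hcx : c x = x := by_contra fun hne => hxa (h x hx hne)
      rw [hcx]
      exact swap_apply_of_ne_of_ne hxa (by rintro rfl; exact hx hrc)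
  calc r * c * r⁻¹ * c⁻¹
      = r * swap a (c a) * (swap a (c a) * c * r⁻¹) * c⁻¹ := by
        simp only [mul_assoc, swap_mul_self_mul]
    _ = r * swap a (c a) * r⁻¹ * swap a (c a) := by
        rw [← (hdisj.commute.inv_left).eq]; group
    _ = swap (c a) (r a) * swap a (c a) := by
        rw [← swap_apply_apply, hrc, swap_comm]
    _ = swap a (c a) * swap a (r a) := by
        have hra : r a ≠ c a := fun e => hc (r.injective (hrc.trans e.symm))
        rw [mul_swap_eq_swap_mul (swap a (c a)) a (r a), swap_apply_left,
          swap_apply_of_ne_of_ne hr hra]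

variable {ι : Type*}

/-- The permutation of the lattice `ι → ℤ` translating the line through `a` parallel to the `i`-th
axis by `s` steps, and fixing every point off that line. -/
def rowShift [DecidableEq ι] (i : ι) (a : ι → ℤ) (s : ℤ) : Perm (ι → ℤ) :=
  open Classical in
  have add_mem_row (s : ℤ) (k : ι → ℤ) (hk : ∀ j ≠ i, k j = a j) :
      ∀ j ≠ i, (k + Pi.single i s : ι → ℤ) j = a j := fun j hj => by simp [hj, hk j hj]
  { toFun := fun k => if ∀ j ≠ i, k j = a j then k + Pi.single i s else k
    invFun := fun k => if ∀ j ≠ i, k j = a j then k + Pi.single i (-s) else k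
    left_inv := fun k => by
      dsimp only
      by_cases hk : ∀ j ≠ i, k j = a j
      · rw [if_pos hk, if_pos (add_mem_row s k hk), Pi.single_neg, add_neg_cancel_right]
      · rw [if_neg hk, if_neg hk]
    right_inv := fun k => by
      dsimp only
      by_cases hk : ∀ j ≠ i, k j = a j
      · rw [if_pos hk, if_pos (add_mem_row (-s) k hk), Pi.single_neg, neg_add_cancel_right]
      · rw [if_neg hk, if_neg hk] }

variable [DecidableEq ι]

lemma rowShift_apply_of_mem_row {i : ι} {a k : ι → ℤ} (hk : ∀ j ≠ i, k j = a j) (s : ℤ) :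
    rowShift i a s k = k + Pi.single i s :=
  if_pos hk

lemma rowShift_apply_of_notMem_row {i : ι} {a k : ι → ℤ} (hk : ¬∀ j ≠ i, k j = a j) (s : ℤ) :
    rowShift i a s k = k :=
  if_neg hk

lemma rowShift_apply_self (i : ι) (a : ι → ℤ) (s : ℤ) : rowShift i a s a = a + Pi.single i s :=
  rowShift_apply_of_mem_row (fun _ _ => rfl) s

lemma rowShift_inv (i : ι) (a : ι → ℤ) (s : ℤ) : (rowShift i a s)⁻¹ = rowShift i a (-s) :=
  Equiv.ext fun _ => rfl

lemma exists_add_single_notMem (i : ι) (a : ι → ℤ) (F : Finset (ι → ℤ)) :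
    ∃ s : ℤ, s ≠ 0 ∧ a + Pi.single i s ∉ F := by
  have hinj : Function.Injective fun s : ℤ => a + Pi.single i s :=
    (add_right_injective a).comp (Pi.single_injective i)
  obtain ⟨s, hs⟩ :=
    ((F.finite_toSet.insert a).preimage hinj.injOn).infinite_compl.nonempty
  simp only [mem_compl_iff, mem_preimage, mem_insert_iff, add_eq_left,
    Pi.single_eq_zero_iff, Finset.mem_coe, not_or] at hs
  exact ⟨s, hs⟩

variable [Fintype ι] {H : Submonoid (Perm (ι → ℤ))}

lemma swap_mul_swap_mem_of_rowShift_mem (hrow : ∀ i a s, rowShift i a s ∈ H) {i j : ι}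
    (hij : i ≠ j) (a : ι → ℤ) {s t : ℤ} (hs : s ≠ 0) (ht : t ≠ 0) :
    swap a (a + Pi.single j t) * swap a (a + Pi.single i s) ∈ H := by
  have hcomm := commutator_eq_swap_mul_swap (r := rowShift i a s) (c := rowShift j a t) (a := a)
    (fun x hr hc => by
      have hi := not_imp_comm.1 (rowShift_apply_of_notMem_row · s) hr
      have hj := not_imp_comm.1 (rowShift_apply_of_notMem_row · t) hc
      ext l
      rcases eq_or_ne l i with rfl | hl
      exacts [hj l hij, hi l hl])
    (by simpa [rowShift_apply_self] using hs) (by simpa [rowShift_apply_self] using ht)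
  rw [rowShift_apply_self, rowShift_apply_self, rowShift_inv, rowShift_inv] at hcomm
  rw [← hcomm]
  exact mul_mem (mul_mem (mul_mem (hrow _ _ _) (hrow _ _ _)) (hrow _ _ _)) (hrow _ _ _)

variable [Nontrivial ι]

/-- A product of two three-cycles `swap a (a + t eⱼ) * swap a b` and `swap a c * swap a b` agrees
with `swap a (a + t eⱼ)` away from `b` and `c`, which can be taken outside any finite set. -/
lemma swap_add_single_mem (hrow : ∀ i a s, rowShift i a s ∈ H)
    (hloc : ∀ π, (∀ F : Finset (ι → ℤ), ∃ τ ∈ H, ∀ k ∈ F, τ k = π k) → π ∈ H)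
    (a : ι → ℤ) (j : ι) (t : ℤ) : swap a (a + Pi.single j t) ∈ H := by
  rcases eq_or_ne t 0 with rfl | ht
  · rw [Pi.single_zero, add_zero, swap_self]
    exact H.one_mem
  refine hloc _ fun F => ?_
  obtain ⟨i, hij⟩ := exists_ne j
  obtain ⟨s, hs, hsF⟩ := exists_add_single_notMem i a F
  obtain ⟨m, hm, hmF⟩ := exists_add_single_notMem j a F
  set b := a + Pi.single i s with hb
  set c := a + Pi.single j m with hc
  have hca : c ≠ a := by simpa [hc] using hm
  have hcb : c ≠ b := fun e => hs (by simpa [hb, hc, hij] using (congrFun e i).symm)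
  have hprod : swap a (a + Pi.single j t) * swap a b * (swap a c * swap a b) =
      swap a (a + Pi.single j t) * swap b c := by
    rw [mul_assoc, ← mul_assoc (swap a b), mul_swap_eq_swap_mul _ a c, swap_apply_left,
      swap_apply_of_ne_of_ne hca hcb, mul_assoc, swap_mul_self, mul_one]
  refine ⟨_, hprod ▸ mul_mem (swap_mul_swap_mem_of_rowShift_mem hrow hij a hs ht)
    (swap_mul_swap_mem_of_rowShift_mem hrow hij a hs hm), fun k hk => ?_⟩
  rw [Perm.mul_apply, swap_apply_of_ne_of_ne (ne_of_mem_of_not_mem hk hsF)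
    (ne_of_mem_of_not_mem hk hmF)]

lemma swap_mem_of_rowShift_mem (hrow : ∀ i a s, rowShift i a s ∈ H)
    (hloc : ∀ π, (∀ F : Finset (ι → ℤ), ∃ τ ∈ H, ∀ k ∈ F, τ k = π k) → π ∈ H)
    (a b : ι → ℤ) : swap a b ∈ H := by
  have hpartial : ∀ s : Finset ι, swap a (a + ∑ j ∈ s, Pi.single j (b j - a j)) ∈ H := by
    intro s
    induction s using Finset.induction_on with
    | empty => simp [swap_self, ← Perm.one_def]
    | insert j s hj ih =>
      rw [Finset.sum_insert hj, add_comm (Pi.single j _), ← add_assoc]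
      exact SubmonoidClass.swap_mem_trans _ ih (swap_add_single_mem hrow hloc _ j _)
  have hsum : ∑ j, Pi.single j (b j - a j) = b - a := Finset.univ_sum_single (b - a)
  simpa only [hsum, add_sub_cancel] using hpartial Finset.univ

lemma ofSubtype_mem_of_rowShift_mem (hrow : ∀ i a s, rowShift i a s ∈ H)
    (hloc : ∀ π, (∀ F : Finset (ι → ℤ), ∃ τ ∈ H, ∀ k ∈ F, τ k = π k) → π ∈ H)
    {J : Finset (ι → ℤ)} (π : Perm J) : Perm.ofSubtype π ∈ H := by
  induction π using Perm.swap_induction_on with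
  | one => exact map_one (Perm.ofSubtype (p := (· ∈ J))) ▸ H.one_mem
  | swap_mul f x y _ ih =>
    rw [map_mul, Perm.ofSubtype_swap_eq]
    exact mul_mem (swap_mem_of_rowShift_mem hrow hloc _ _) ih

end Permutations

section Shear

open Equiv Filter Topology
open scoped ENNReal NNReal

/-- The splitting of the `i`-th coordinate off the others, `x ↦ ((x j)_{j ≠ i}, x i)`. -/
def splitCoord {m : ℕ} (i : Fin (m + 1)) :
    EuclideanSpace ℝ (Fin (m + 1)) ≃ᵐ (Fin m → ℝ) × ℝ :=
  ((MeasurableEquiv.toLp 2 (Fin (m + 1) → ℝ)).symm.trans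
    (MeasurableEquiv.piFinSuccAbove (fun _ => ℝ) i)).trans MeasurableEquiv.prodComm

lemma splitCoord_apply {m : ℕ} (i : Fin (m + 1)) (x : EuclideanSpace ℝ (Fin (m + 1))) :
    splitCoord i x = (fun j => x (i.succAbove j), x i) :=
  rfl

lemma measurePreserving_splitCoord {m : ℕ} (i : Fin (m + 1)) :
    MeasurePreserving (splitCoord i) volume volume :=
  Measure.measurePreserving_swap.comp <|
    (volume_preserving_piFinSuccAbove (fun _ : Fin (m + 1) => ℝ) i).comp <|
      EuclideanSpace.volume_preserving_symm_measurableEquiv_toLp (Fin (m + 1))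

lemma splitCoord_symm_add {m : ℕ} (i : Fin (m + 1)) (y : Fin m → ℝ) (s t : ℝ) :
    (splitCoord i).symm (y, s + t) = (splitCoord i).symm (y, s) + EuclideanSpace.single i t := by
  rw [MeasurableEquiv.symm_apply_eq, splitCoord_apply]
  obtain ⟨x, hx⟩ := (splitCoord i).surjective (y, s)
  rw [← hx, MeasurableEquiv.symm_apply_apply]
  rw [splitCoord_apply, Prod.mk.injEq] at hx
  ext j <;> simp [Fin.succAbove_ne, ← hx.1, ← hx.2]

lemma measurePreserving_add_single {m : ℕ} (i : Fin (m + 1))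
    {φ : EuclideanSpace ℝ (Fin (m + 1)) → ℝ} (hφ : Measurable φ)
    (hinv : ∀ x t, φ (x + EuclideanSpace.single i t) = φ x) :
    MeasurePreserving (fun x => x + EuclideanSpace.single i (φ x)) volume volume := by
  have hfibre : MeasurePreserving
      (fun q : (Fin m → ℝ) × ℝ => (q.1, q.2 + φ ((splitCoord i).symm (q.1, 0))))
      volume volume := by
    refine (MeasurePreserving.id volume).skew_product
      (g := fun y t => t + φ ((splitCoord i).symm (y, 0))) ?_ ?_
    · exact measurable_snd.add (hφ.comp ((splitCoord i).symm.measurable.comp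
        (measurable_fst.prodMk measurable_const)))
    · exact Eventually.of_forall fun y => (measurePreserving_add_right volume _).map_eq
  convert ((measurePreserving_splitCoord i).symm.comp hfibre).comp
    (measurePreserving_splitCoord i) using 1
  ext1 x
  obtain ⟨⟨y, s⟩, rfl⟩ := (splitCoord i).symm.surjective x
  have hφ_eq : φ ((splitCoord i).symm (y, s)) = φ ((splitCoord i).symm (y, 0)) := by
    rw [← zero_add s, splitCoord_symm_add, hinv]
  simp only [Function.comp, MeasurableEquiv.apply_symm_apply, splitCoord_symm_add, hφ_eq]

/-- An injective Lipschitz map of the whole space that preserves volume and moves no point by more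
than `M`. -/
structure IsBoundedRearrangement {X : Type*} [PseudoMetricSpace X] [MeasureSpace X]
    (M : ℝ) (S : X → X) : Prop where
  lipschitz : ∃ K, LipschitzWith K S
  injective : Function.Injective S
  measurePreserving : MeasurePreserving S volume volume
  dist_le : ∀ x, dist (S x) x ≤ M

namespace IsBoundedRearrangement

lemma id {X : Type*} [PseudoMetricSpace X] [MeasureSpace X] :
    IsBoundedRearrangement 0 (id : X → X) where
  lipschitz := ⟨1, LipschitzWith.id⟩
  injective := Function.injective_id
  measurePreserving := MeasurePreserving.id _
  dist_le x := (dist_self x).le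

lemma comp {X : Type*} [PseudoMetricSpace X] [MeasureSpace X] {M N : ℝ} {S T : X → X}
    (hS : IsBoundedRearrangement M S) (hT : IsBoundedRearrangement N T) :
    IsBoundedRearrangement (M + N) (S ∘ T) where
  lipschitz := by
    obtain ⟨K, hK⟩ := hS.lipschitz
    obtain ⟨L, hL⟩ := hT.lipschitz
    exact ⟨K * L, hK.comp hL⟩
  injective := hS.injective.comp hT.injective
  measurePreserving := hS.measurePreserving.comp hT.measurePreserving
  dist_le x := (dist_triangle _ (T x) _).trans (add_le_add (hS.dist_le _) (hT.dist_le x))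

lemma add_single {n : ℕ} (i : Fin n) {φ : EuclideanSpace ℝ (Fin n) → ℝ} {K : ℝ≥0} {M : ℝ}
    (hφ : LipschitzWith K φ) (hinv : ∀ x t, φ (x + EuclideanSpace.single i t) = φ x)
    (hM : ∀ x, |φ x| ≤ M) :
    IsBoundedRearrangement M fun x => x + EuclideanSpace.single i (φ x) where
  lipschitz := by
    refine ⟨1 + K, LipschitzWith.id.add (LipschitzWith.of_dist_le_mul fun x y => ?_)⟩
    rw [PiLp.dist_single_same]
    exact hφ.dist_le_mul x y
  injective x y hxy := by
    have hφ_eq : φ x = φ y := by rw [← hinv x (φ x), ← hinv y (φ y)]; exact congrArg φ hxy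
    simpa only [hφ_eq, add_left_inj] using hxy
  measurePreserving := by
    obtain ⟨m, rfl⟩ : ∃ m, n = m + 1 := Nat.exists_eq_succ_of_ne_zero i.pos.ne'
    exact measurePreserving_add_single i hφ.continuous.measurable hinv
  dist_le x := by
    rw [dist_self_add_left, PiLp.norm_single]
    exact hM x

end IsBoundedRearrangement

end Shear

section Lattice

open Equiv Filter Topology
open scoped ENNReal NNReal Pointwise

lemma eventually_thickenedIndicator_eq_indicator {X : Type*} [PseudoEMetricSpace X] {E : Set X}
    {x : X} (hx : x ∉ frontier E) {δ : ℕ → ℝ} (hδ_pos : ∀ m, 0 < δ m)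
    (hδ : Tendsto δ atTop (𝓝 0)) :
    ∀ᶠ m in atTop, thickenedIndicator (hδ_pos m) E x = E.indicator 1 x := by
  by_cases hxE : x ∈ E
  · exact Eventually.of_forall fun m => by
      rw [thickenedIndicator_one (hδ_pos m) E hxE, indicator_of_mem hxE, Pi.one_apply]
  have hx_closure : x ∉ closure E := fun hc => hx ⟨hc, fun hi => hxE (interior_subset hi)⟩
  obtain ⟨ε, hε_pos, hε⟩ := exists_real_pos_lt_infEDist_of_notMem_closure hx_closure
  filter_upwards [hδ.eventually_lt_const hε_pos] with m hm
  rw [indicator_of_notMem hxE]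
  refine thickenedIndicator_zero (hδ_pos m) E fun hx_thick => ?_
  exact (mem_thickening_iff_infEDist_lt.1 hx_thick).not_ge
    ((ENNReal.ofReal_le_ofReal hm.le).trans hε.le)

lemma thickenedIndicator_add_of_vadd_eq {E : Type*} [SeminormedAddCommGroup E] {δ : ℝ}
    (hδ : 0 < δ) {s : Set E} {v : E} (hv : v +ᵥ s = s) (x : E) :
    thickenedIndicator hδ s (x + v) = thickenedIndicator hδ s x := by
  have hdist : infEDist (x + v) s = infEDist x s := by
    rw [add_comm, ← vadd_eq_add, ← hv, infEDist_vadd, hv]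
  exact le_antisymm (thickenedIndicator_mono_infEDist hδ hdist.ge)
    (thickenedIndicator_mono_infEDist hδ hdist.le)

variable {n : ℕ} {h : ℝ}

/-- The index `k ∈ ℤⁿ` of the half-open cube `h (k + [0, 1)ⁿ)` containing `x`. -/
def latticeIndex (h : ℝ) (x : EuclideanSpace ℝ (Fin n)) : Fin n → ℤ := fun i => ⌊x i / h⌋

lemma measurable_latticeIndex (h : ℝ) : Measurable (latticeIndex (n := n) h) :=
  measurable_pi_lambda _ fun i => Int.measurable_floor.comp (by fun_prop)

lemma latticeIndex_add_single (hh : h ≠ 0) (x : EuclideanSpace ℝ (Fin n)) (i : Fin n) (s : ℤ) :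
    latticeIndex h (x + EuclideanSpace.single i (h * s)) = latticeIndex h x + Pi.single i s := by
  ext j
  rcases eq_or_ne j i with rfl | hj
  · simp [latticeIndex, add_div, hh]
  · simp [latticeIndex, hj]

lemma dist_le_of_latticeIndex_eq (hh : 0 < h) {x y : EuclideanSpace ℝ (Fin n)}
    (hxy : latticeIndex h x = latticeIndex h y) : dist x y ≤ √n * h := by
  have hcoord (i : Fin n) : dist (x i) (y i) ≤ h := by
    have hlt := Int.abs_sub_lt_one_of_floor_eq_floor (congrFun hxy i)
    rw [← sub_div, abs_div, abs_of_pos hh, div_lt_one hh] at hlt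
    exact hlt.le
  calc dist x y = √(∑ i, dist (x i) (y i) ^ 2) := EuclideanSpace.dist_eq x y
    _ ≤ √(∑ _i : Fin n, h ^ 2) := by gcongr with i; exact hcoord i
    _ = √n * h := by
      rw [Finset.sum_const, Finset.card_univ, Fintype.card_fin, nsmul_eq_mul,
        Real.sqrt_mul n.cast_nonneg, Real.sqrt_sq hh.le]

lemma isBounded_latticeIndex_preimage (hh : 0 < h) (F : Finset (Fin n → ℤ)) :
    IsBounded (latticeIndex h ⁻¹' (F : Set (Fin n → ℤ))) := by
  rw [← biUnion_preimage_singleton, isBounded_biUnion F.finite_toSet]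
  exact fun k _ => isBounded_iff.2
    ⟨√n * h, fun x hx y hy => dist_le_of_latticeIndex_eq hh (hx.trans hy.symm)⟩

lemma convex_setOf_latticeIndex_eq (h : ℝ) (s : Set (Fin n)) (a : Fin n → ℤ) :
    Convex ℝ {x : EuclideanSpace ℝ (Fin n) | ∀ j ∈ s, latticeIndex h x j = a j} := by
  have hslab (j : Fin n) : {x : EuclideanSpace ℝ (Fin n) | latticeIndex h x j = a j} =
      (h⁻¹ • EuclideanSpace.projₗ (𝕜 := ℝ) j) ⁻¹' Ico (a j : ℝ) (a j + 1) := by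
    ext x
    simp [latticeIndex, ← Int.preimage_floor_singleton, div_eq_inv_mul]
  simp only [ofPred_forall, hslab]
  exact convex_iInter₂ fun j _ => (convex_Ico _ _).linear_preimage _

/-- The permutations `τ` of `ℤⁿ` that are realised, on every finite set of cells of mesh `h` and up
to an arbitrarily small set, by maps moving points a bounded distance. -/
def approxRealizable (n : ℕ) (h : ℝ) : Submonoid (Perm (Fin n → ℤ)) where
  carrier := {τ | ∀ F : Finset (Fin n → ℤ), ∃ M : ℝ, ∀ ε : ℝ≥0∞, 0 < ε →
    ∃ S, IsBoundedRearrangement M S ∧ volume {x : EuclideanSpace ℝ (Fin n) |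
      latticeIndex h x ∈ F ∧ latticeIndex h (S x) ≠ τ (latticeIndex h x)} ≤ ε}
  one_mem' := fun F => ⟨0, fun ε _ => ⟨id, .id, by simp⟩⟩
  mul_mem' := by
    intro τ σ hτ hσ F
    obtain ⟨M, hM⟩ := hσ F
    obtain ⟨N, hN⟩ := hτ (F.image σ)
    refine ⟨N + M, fun ε hε => ?_⟩
    obtain ⟨S, hS, hSε⟩ := hM (ε / 2) (ENNReal.half_pos hε.ne')
    obtain ⟨T, hT, hTε⟩ := hN (ε / 2) (ENNReal.half_pos hε.ne')
    refine ⟨T ∘ S, hT.comp hS, ?_⟩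
    calc _ ≤ volume ({x : EuclideanSpace ℝ (Fin n) |
            latticeIndex h x ∈ F ∧ latticeIndex h (S x) ≠ σ (latticeIndex h x)} ∪
          S ⁻¹' {y | latticeIndex h y ∈ F.image σ ∧
            latticeIndex h (T y) ≠ τ (latticeIndex h y)}) := by
          refine measure_mono fun x ⟨hxF, hx⟩ => ?_
          by_cases hSx : latticeIndex h (S x) = σ (latticeIndex h x)
          · refine Or.inr ⟨hSx ▸ Finset.mem_image_of_mem _ hxF, ?_⟩
            rw [hSx]
            exact hx
          · exact Or.inl ⟨hxF, hSx⟩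
      _ ≤ ε / 2 + ε / 2 := (measure_union_le _ _).trans (add_le_add hSε
          ((hS.measurePreserving.measure_preimage_le _).trans hTε))
      _ = ε := ENNReal.add_halves ε

lemma mem_approxRealizable_of_locally {π : Perm (Fin n → ℤ)}
    (hπ : ∀ F : Finset (Fin n → ℤ), ∃ τ ∈ approxRealizable n h, ∀ k ∈ F, τ k = π k) :
    π ∈ approxRealizable n h := by
  intro F
  obtain ⟨τ, hτ, hτπ⟩ := hπ F
  obtain ⟨M, hM⟩ := hτ F
  refine ⟨M, fun ε hε => ?_⟩
  obtain ⟨S, hS, hSε⟩ := hM ε hε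
  refine ⟨S, hS, le_of_eq_of_le (congrArg volume (ext fun x => and_congr_right fun hx => ?_)) hSε⟩
  rw [hτπ _ hx]

lemma mem_approxRealizable_of_ae_eventually_eq {τ : Perm (Fin n → ℤ)} {M : ℝ}
    {S : ℕ → EuclideanSpace ℝ (Fin n) → EuclideanSpace ℝ (Fin n)} (hh : 0 < h)
    (hS : ∀ m, IsBoundedRearrangement M (S m))
    (hSτ : ∀ᵐ x, ∀ᶠ m in atTop, latticeIndex h (S m x) = τ (latticeIndex h x)) :
    τ ∈ approxRealizable n h := by
  intro F
  have hpair (m : ℕ) : Measurable fun x => (latticeIndex h x, latticeIndex h (S m x)) :=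
    (measurable_latticeIndex h).prodMk
      ((measurable_latticeIndex h).comp (hS m).measurePreserving.measurable)
  have hlim := tendsto_measure_of_ae_tendsto_indicator (μ := volume) atTop .empty
    (fun m => hpair m (.of_discrete (s := {k | k.1 ∈ F ∧ k.2 ≠ τ k.1})))
    (measurable_latticeIndex h (.of_discrete (s := F)))
    (isBounded_latticeIndex_preimage hh F).measure_lt_top.ne
    (.of_forall fun m x hx => hx.1)
    (hSτ.mono fun x hx => hx.mono fun m hm => iff_of_false (fun hmem => hmem.2 hm) id)
  rw [measure_empty] at hlim
  refine ⟨M, fun ε hε => ?_⟩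
  obtain ⟨m, hm⟩ := (hlim.eventually_le_const hε).exists
  exact ⟨S m, hS m, hm⟩

lemma rowShift_mem_approxRealizable (hh : 0 < h) (i : Fin n) (a : Fin n → ℤ) (s : ℤ) :
    rowShift i a s ∈ approxRealizable n h := by
  set row : Set (EuclideanSpace ℝ (Fin n)) := {x | ∀ j ∈ {j | j ≠ i}, latticeIndex h x j = a j}
  have hrow (t : ℝ) : EuclideanSpace.single i t +ᵥ row = row := by
    ext x
    simp +contextual [row, mem_vadd_set_iff_neg_vadd_mem, latticeIndex]
  set ψ : ℕ → EuclideanSpace ℝ (Fin n) → ℝ≥0 :=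
    fun m => thickenedIndicator (δ := 1 / ((m : ℝ) + 1)) Nat.one_div_pos_of_nat row with hψ
  refine mem_approxRealizable_of_ae_eventually_eq hh (M := |h * s|)
    (S := fun m x => x + EuclideanSpace.single i (h * s * ψ m x)) (fun m => ?_) ?_
  · have hlip : LipschitzWith _ fun x => h * s * (ψ m x : ℝ) :=
      (lipschitzWith_smul (h * s)).comp (NNReal.isometry_coe.lipschitz.comp
        (lipschitzWith_thickenedIndicator Nat.one_div_pos_of_nat row))
    refine .add_single i hlip (fun x t => ?_) fun x => ?_
    · simp only [hψ, thickenedIndicator_add_of_vadd_eq _ (hrow t)]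
    · rw [abs_mul, NNReal.abs_eq]
      exact mul_le_of_le_one_right (abs_nonneg _)
        (NNReal.coe_le_one.2 (thickenedIndicator_le_one _ _ x))
  · have hnull : volume (frontier row) = 0 :=
      (convex_setOf_latticeIndex_eq h _ a).addHaar_frontier _
    filter_upwards [compl_mem_ae_iff.2 hnull] with x hx
    filter_upwards [eventually_thickenedIndicator_eq_indicator hx (fun _ => Nat.one_div_pos_of_nat)
      tendsto_one_div_add_atTop_nhds_zero_nat] with m hm
    rw [show ψ m x = _ from hm]
    by_cases hx_row : x ∈ row
    · rw [rowShift_apply_of_mem_row hx_row, ← latticeIndex_add_single hh.ne',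
        indicator_of_mem hx_row, Pi.one_apply, NNReal.coe_one, mul_one]
    · rw [rowShift_apply_of_notMem_row hx_row, indicator_of_notMem hx_row, NNReal.coe_zero,
        mul_zero]
      exact congrArg _ (add_eq_left.2 ((PiLp.single_eq_zero_iff 2 i).2 rfl))

lemma exists_isBoundedRearrangement_latticeIndex_eq (hn : 2 ≤ n) (hh : 0 < h)
    {J : Finset (Fin n → ℤ)} (π : Perm J) :
    ∃ M : ℝ, ∀ ε : ℝ≥0∞, 0 < ε → ∃ S, IsBoundedRearrangement M S ∧
      volume {x : EuclideanSpace ℝ (Fin n) |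
        latticeIndex h x ∈ J ∧ latticeIndex h (S x) ≠ Perm.ofSubtype π (latticeIndex h x)} ≤ ε :=
  have := Fin.nontrivial_iff_two_le.2 hn
  ofSubtype_mem_of_rowShift_mem (rowShift_mem_approxRealizable hh)
    (fun _ => mem_approxRealizable_of_locally) π J

end Lattice

section Assignment

open Equiv
open scoped ENNReal NNReal

variable {J : Type*} [Fintype J]

lemma exists_perm_sum_le_of_mem_doublyStochastic [DecidableEq J] {Q : Matrix J J ℝ}
    (hQ : Q ∈ doublyStochastic ℝ J) (c : J → J → ℝ) :
    ∃ π : Perm J, ∑ i, c i (π i) ≤ ∑ i, ∑ j, Q i j * c i j := by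
  rw [← SetLike.mem_coe, doublyStochastic_eq_convexHull_permMatrix] at hQ
  let cost : Matrix J J ℝ →ₗ[ℝ] ℝ :=
    ∑ i, ∑ j, (LinearMap.toSpanSingleton ℝ ℝ (c i j)).comp (Matrix.entryLinearMap ℝ ℝ i j)
  have cost_apply (M : Matrix J J ℝ) : cost M = ∑ i, ∑ j, M i j * c i j := by
    simp [cost, LinearMap.sum_apply]
  obtain ⟨_, ⟨π, rfl⟩, hπ⟩ :=
    (cost.concaveOn convex_univ).exists_le_of_mem_convexHull (subset_univ _) hQ
  refine ⟨π, ?_⟩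
  rw [cost_apply, cost_apply] at hπ
  simpa [Perm.permMatrix, PEquiv.toMatrix_apply] using hπ

lemma exists_mem_doublyStochastic_of_sum_le_one [DecidableEq J] {A : Matrix J J ℝ}
    (hA : ∀ i j, 0 ≤ A i j) (hrow : ∀ i, ∑ j, A i j ≤ 1) (hcol : ∀ j, ∑ i, A i j ≤ 1) :
    ∃ Q ∈ doublyStochastic ℝ J, ∀ i, ∑ j, A i j = 1 → Q i = A i := by
  set r : J → ℝ := fun i => 1 - ∑ j, A i j with hr
  set s : J → ℝ := fun j => 1 - ∑ i, A i j with hs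
  have hr_nonneg (i : J) : 0 ≤ r i := sub_nonneg.2 (hrow i)
  have hs_nonneg (j : J) : 0 ≤ s j := sub_nonneg.2 (hcol j)
  have hrs : ∑ i, r i = ∑ j, s j := by
    simp only [hr, hs, Finset.sum_sub_distrib]
    rw [Finset.sum_comm]
  have mul_sum_div {t : J → ℝ} (ht : ∀ i, 0 ≤ t i) (i : J) :
      t i * (∑ j, t j) / ∑ j, t j = t i :=
    mul_div_cancel_of_imp fun hzero =>
      (Finset.sum_eq_zero_iff_of_nonneg fun j _ => ht j).1 hzero i (Finset.mem_univ i)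
  refine ⟨fun i j => A i j + r i * s j / ∑ i, r i, mem_doublyStochastic_iff_sum.2 ⟨?_, ?_, ?_⟩, ?_⟩
  · exact fun i j => add_nonneg (hA i j)
      (div_nonneg (mul_nonneg (hr_nonneg i) (hs_nonneg j))
        (Finset.sum_nonneg fun i _ => hr_nonneg i))
  · intro i
    rw [Finset.sum_add_distrib, ← Finset.sum_div, ← Finset.mul_sum, ← hrs, mul_sum_div hr_nonneg]
    simp [hr]
  · intro j
    rw [Finset.sum_add_distrib, ← Finset.sum_div, ← Finset.sum_mul, hrs, mul_comm,
      mul_sum_div hs_nonneg]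
    simp [hs]
  · intro i hi
    ext j
    simp [hr, hi]

lemma exists_perm_mul_sum_le {m c : J → J → ℝ≥0} {v : ℝ≥0} (hrow : ∀ i, ∑ j, m i j ≤ v)
    (hcol : ∀ j, ∑ i, m i j ≤ v) (hc : ∀ i, ∑ j, m i j = v ∨ c i = 0) :
    ∃ π : Perm J, v * ∑ i, c i (π i) ≤ ∑ i, ∑ j, m i j * c i j := by
  classical
  rcases eq_or_ne v 0 with rfl | hv
  · exact ⟨1, by simp⟩
  have hv_pos : (0 : ℝ) < v := NNReal.coe_pos.2 (pos_iff_ne_zero.2 hv)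
  obtain ⟨Q, hQ, hQm⟩ := exists_mem_doublyStochastic_of_sum_le_one
    (A := fun i j => (m i j : ℝ) / v) (fun i j => by positivity)
    (fun i => by rw [← Finset.sum_div, div_le_one hv_pos]; exact_mod_cast hrow i)
    (fun j => by rw [← Finset.sum_div, div_le_one hv_pos]; exact_mod_cast hcol j)
  obtain ⟨π, hπ⟩ := exists_perm_sum_le_of_mem_doublyStochastic hQ fun i j => (c i j : ℝ)
  have hrow_eq (i j : J) : (v : ℝ) * (Q i j * c i j) = m i j * c i j := by
    rcases hc i with hi | hi
    · rw [hQm i (by rw [← Finset.sum_div, div_eq_one_iff_eq hv_pos.ne']; exact_mod_cast hi)]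
      field_simp
    · simp [hi]
  refine ⟨π, NNReal.coe_le_coe.1 ?_⟩
  push_cast
  calc (v : ℝ) * ∑ i, (c i (π i) : ℝ) ≤ v * ∑ i, ∑ j, Q i j * c i j := by gcongr
    _ = ∑ i, ∑ j, (m i j : ℝ) * c i j := by simp only [Finset.mul_sum, hrow_eq]

lemma exists_perm_lintegral_le {κ : Type*} [DecidableEq κ] [MeasurableSpace κ]
    [DiscreteMeasurableSpace κ] [Countable κ] {γ : Measure (κ × κ)} {F : Finset κ}
    (hF : ∀ᵐ q ∂γ, q ∈ F ×ˢ F) {v : ℝ≥0} (hfst : ∀ i, γ.fst {i} ≤ v)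
    (hsnd : ∀ j, γ.snd {j} ≤ v) {c : κ → κ → ℝ≥0} (hc : ∀ i, γ.fst {i} = v ∨ c i = 0) :
    ∃ π : Perm F, ∫⁻ i, c i (Perm.ofSubtype π i) ∂γ.fst ≤ ∫⁻ q, c q.1 q.2 ∂γ := by
  have hlintegral (φ : κ × κ → ℝ≥0∞) :
      ∫⁻ q, φ q ∂γ = ∑ i : F, ∑ j : F, φ (i, j) * γ {((i : κ), (j : κ))} := by
    have hγ : γ.restrict (F ×ˢ F : Finset (κ × κ)) = γ :=
      Measure.restrict_eq_self_of_ae_mem (by simpa using hF)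
    rw [← hγ, lintegral_finset, hγ, Finset.sum_product, ← Finset.sum_coe_sort F]
    exact Finset.sum_congr rfl fun i _ =>
      (Finset.sum_coe_sort F fun j => φ (i, j) * γ {((i : κ), j)}).symm
  have hγ_ne_top (i j : κ) : γ {(i, j)} ≠ ∞ := by
    refine ne_top_of_le_ne_top (ne_top_of_le_ne_top ENNReal.coe_ne_top (hfst i)) ?_
    rw [Measure.fst_apply .of_discrete]
    exact measure_mono (singleton_subset_iff.2 rfl)
  set m : F → F → ℝ≥0 := fun i j => (γ {((i : κ), (j : κ))}).toNNReal
  have hm (i j : F) : γ {((i : κ), (j : κ))} = m i j := (ENNReal.coe_toNNReal (hγ_ne_top i j)).symm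
  have hrow (i : F) : γ.fst {(i : κ)} = ((∑ j, m i j : ℝ≥0) : ℝ≥0∞) := by
    rw [Measure.fst_apply .of_discrete, ← lintegral_indicator_one .of_discrete, hlintegral,
      Finset.sum_comm]
    simp [indicator, hm]
  have hcol (j : F) : γ.snd {(j : κ)} = ((∑ i, m i j : ℝ≥0) : ℝ≥0∞) := by
    rw [Measure.snd_apply .of_discrete, ← lintegral_indicator_one .of_discrete, hlintegral]
    simp [indicator, hm]
  simp only [hm] at hlintegral
  obtain ⟨π, hπ⟩ := exists_perm_mul_sum_le (m := m) (c := fun i j : F => c i j)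
    (fun i => ENNReal.coe_le_coe.1 (hrow i ▸ hfst i))
    (fun j => ENNReal.coe_le_coe.1 (hcol j ▸ hsnd j))
    (fun i => (hc i).imp (fun hi => ENNReal.coe_inj.1 (hrow i ▸ hi))
      (fun hi : c i = 0 => funext fun j => congrFun hi j))
  refine ⟨π, ?_⟩
  rw [Measure.fst, lintegral_map .of_discrete measurable_fst, hlintegral, hlintegral]
  calc ∑ i : F, ∑ j : F, (c i (Perm.ofSubtype π i) : ℝ≥0∞) * m i j
      = ∑ i : F, (c i (π i) : ℝ≥0∞) * γ.fst {(i : κ)} := by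
        simp only [hrow, ENNReal.ofNNReal_finsetSum, Finset.mul_sum, Perm.ofSubtype_apply_coe]
    _ ≤ ∑ i : F, (c i (π i) : ℝ≥0∞) * v := by gcongr with i; exact hfst i
    _ = ((v * ∑ i : F, c i (π i) : ℝ≥0) : ℝ≥0∞) := by
        rw [← Finset.sum_mul, mul_comm]; push_cast; rfl
    _ ≤ _ := (ENNReal.coe_le_coe.2 hπ).trans_eq (by push_cast; simp only [mul_comm])

end Assignment

section Discretisation

open Equiv Filter Topology
open scoped ENNReal NNReal

variable {n : ℕ} {h : ℝ}

lemma volume_latticeIndex_preimage (hh : 0 < h) (k : Fin n → ℤ) :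
    volume (latticeIndex h ⁻¹' {k}) = ENNReal.ofReal h ^ n := by
  have hbox : latticeIndex h ⁻¹' {k} = (MeasurableEquiv.toLp 2 (Fin n → ℝ)).symm ⁻¹'
      pi univ fun i => Ico (k i * h) ((k i + 1) * h) := by
    ext x
    simp [latticeIndex, funext_iff, Int.floor_eq_iff, le_div_iff₀ hh, div_lt_iff₀ hh]
  rw [hbox, (EuclideanSpace.volume_preserving_symm_measurableEquiv_toLp (Fin n)).measure_preimage
    (MeasurableSet.univ_pi fun i => measurableSet_Ico).nullMeasurableSet, Real.volume_pi_Ico]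
  simp [add_mul]

lemma exists_perm_lintegral_latticeIndex_le (hh : 0 < h) {U : Set (EuclideanSpace ℝ (Fin n))}
    (hU : MeasurableSet U) {S₀ : EuclideanSpace ℝ (Fin n) → EuclideanSpace ℝ (Fin n)}
    (hS₀ : Measurable S₀) (hmap : (volume.restrict U).map S₀ ≤ volume) {F : Finset (Fin n → ℤ)}
    (hF : ∀ x ∈ U, latticeIndex h x ∈ F ∧ latticeIndex h (S₀ x) ∈ F)
    {c : (Fin n → ℤ) → (Fin n → ℤ) → ℝ≥0} (hc : ∀ k, latticeIndex h ⁻¹' {k} ⊆ U ∨ c k = 0) :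
    ∃ π : Perm F,
      ∫⁻ x in U, c (latticeIndex h x) (Perm.ofSubtype π (latticeIndex h x)) ≤
        ∫⁻ x in U, c (latticeIndex h x) (latticeIndex h (S₀ x)) := by
  have hidx := measurable_latticeIndex (n := n) h
  have hpair : Measurable fun x => (latticeIndex h x, latticeIndex h (S₀ x)) :=
    hidx.prodMk (hidx.comp hS₀)
  set γ := (volume.restrict U).map fun x => (latticeIndex h x, latticeIndex h (S₀ x)) with hγ
  have hfst : γ.fst = (volume.restrict U).map (latticeIndex h) :=
    Measure.fst_map_prodMk (hidx.comp hS₀)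
  have hsnd : γ.snd = ((volume.restrict U).map S₀).map (latticeIndex h) := by
    rw [hγ, Measure.snd_map_prodMk hidx, Measure.map_map hidx hS₀]; rfl
  have hcell (k : Fin n → ℤ) : volume (latticeIndex h ⁻¹' {k}) = (h.toNNReal ^ n : ℝ≥0) :=
    volume_latticeIndex_preimage hh k
  have hcell_meas (k : Fin n → ℤ) : MeasurableSet (latticeIndex h ⁻¹' {k}) := hidx (.singleton k)
  obtain ⟨π, hπ⟩ := exists_perm_lintegral_le (γ := γ) (F := F) (v := h.toNNReal ^ n) (c := c)
    ((ae_map_iff hpair.aemeasurable .of_discrete).2 ((ae_restrict_iff' hU).2 (.of_forall fun x hx =>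
      Finset.mem_product.2 (hF x hx))))
    (fun k => by
      rw [hfst, Measure.map_apply hidx (.singleton k), ← hcell k]
      exact Measure.restrict_le_self _)
    (fun k => by
      rw [hsnd, Measure.map_apply hidx (.singleton k), ← hcell k]
      exact hmap _)
    (fun k => (hc k).imp_left fun hk => by
      rw [hfst, Measure.map_apply hidx (.singleton k), ← hcell k,
        Measure.restrict_apply (hcell_meas k), inter_eq_left.2 hk])
  refine ⟨π, ?_⟩
  rwa [hfst, lintegral_map .of_discrete hidx, hγ, lintegral_map .of_discrete hpair] at hπ

/-- The corner `h k` of the cube of index `k`. -/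
def latticePoint (h : ℝ) (k : Fin n → ℤ) : EuclideanSpace ℝ (Fin n) :=
  WithLp.toLp 2 fun i => h * k i

lemma latticeIndex_latticePoint (hh : h ≠ 0) (k : Fin n → ℤ) :
    latticeIndex h (latticePoint h k) = k := by
  ext i
  simp [latticeIndex, latticePoint, mul_div_cancel_left₀ _ hh]

lemma dist_latticePoint_latticeIndex_le (hh : 0 < h) (x : EuclideanSpace ℝ (Fin n)) :
    dist x (latticePoint h (latticeIndex h x)) ≤ √n * h :=
  dist_le_of_latticeIndex_eq hh (latticeIndex_latticePoint hh.ne' _).symm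

lemma edist_edist_latticePoint_le (hh : 0 < h)
    {u : EuclideanSpace ℝ (Fin n) → EuclideanSpace ℝ (Fin n)} {K : ℝ≥0} (hu : LipschitzWith K u)
    (x y : EuclideanSpace ℝ (Fin n)) {δ : ℝ≥0} (hδ : (K + 1) * (√n * h) ≤ δ) :
    edist (u x) y ≤
        edist (u (latticePoint h (latticeIndex h x))) (latticePoint h (latticeIndex h y)) + δ ∧
      edist (u (latticePoint h (latticeIndex h x))) (latticePoint h (latticeIndex h y)) ≤
        edist (u x) y + δ := by
  have hx := (hu.dist_le_mul _ _).trans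
    (mul_le_mul_of_nonneg_left (dist_latticePoint_latticeIndex_le hh x) K.2)
  have hy := dist_latticePoint_latticeIndex_le hh y
  have habs := abs_le.1 ((Real.dist_eq _ _).symm.trans_le <|
    dist_dist_dist_le (u x) y (u (latticePoint h (latticeIndex h x)))
      (latticePoint h (latticeIndex h y)))
  simp only [edist_nndist, ← ENNReal.coe_add, ENNReal.coe_le_coe, ← NNReal.coe_le_coe,
    NNReal.coe_add, coe_nndist]
  exact ⟨by linarith [habs.2], by linarith [habs.1]⟩

open scoped Classical in
/-- The cost of sending the cell `i` to the cell `j`, up to an error `δ`; cells that are not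
contained in `U` cost nothing. -/
def cellCost (h : ℝ) (U : Set (EuclideanSpace ℝ (Fin n)))
    (u : EuclideanSpace ℝ (Fin n) → EuclideanSpace ℝ (Fin n)) (δ : ℝ≥0) (p : ℝ)
    (i j : Fin n → ℤ) : ℝ≥0 :=
  if latticeIndex h ⁻¹' {i} ⊆ U then (nndist (u (latticePoint h i)) (latticePoint h j) + δ) ^ p
  else 0

lemma cellCost_le (hh : 0 < h) {p : ℝ} (hp : 0 ≤ p) (U : Set (EuclideanSpace ℝ (Fin n)))
    {u : EuclideanSpace ℝ (Fin n) → EuclideanSpace ℝ (Fin n)} {K : ℝ≥0} (hu : LipschitzWith K u)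
    (x y : EuclideanSpace ℝ (Fin n)) {δ : ℝ≥0} (hδ : (K + 1) * (√n * h) ≤ δ) :
    (cellCost h U u δ p (latticeIndex h x) (latticeIndex h y) : ℝ≥0∞) ≤
      (edist (u x) y + 2 * δ) ^ p := by
  rw [cellCost]
  split_ifs
  · rw [ENNReal.coe_rpow_of_nonneg _ hp, ENNReal.coe_add, ← edist_nndist, two_mul, ← add_assoc]
    gcongr
    exact (edist_edist_latticePoint_le hh hu x y hδ).2
  · exact zero_le

lemma edist_rpow_le_cellCost (hh : 0 < h) {p : ℝ} (hp : 0 ≤ p)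
    {U : Set (EuclideanSpace ℝ (Fin n))}
    {u : EuclideanSpace ℝ (Fin n) → EuclideanSpace ℝ (Fin n)} {K : ℝ≥0} (hu : LipschitzWith K u)
    {x : EuclideanSpace ℝ (Fin n)} (hx : latticeIndex h ⁻¹' {latticeIndex h x} ⊆ U)
    (y : EuclideanSpace ℝ (Fin n)) {δ : ℝ≥0} (hδ : (K + 1) * (√n * h) ≤ δ) :
    edist (u x) y ^ p ≤ cellCost h U u δ p (latticeIndex h x) (latticeIndex h y) := by
  rw [cellCost, if_pos hx, ENNReal.coe_rpow_of_nonneg _ hp, ENNReal.coe_add, ← edist_nndist]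
  gcongr
  exact (edist_edist_latticePoint_le hh hu x y hδ).1

lemma lintegral_edist_rpow_le_cellCost (hh : 0 < h) {p : ℝ} (hp : 0 ≤ p)
    {U : Set (EuclideanSpace ℝ (Fin n))} (hU : MeasurableSet U)
    {u S : EuclideanSpace ℝ (Fin n) → EuclideanSpace ℝ (Fin n)} {K : ℝ≥0} (hu : LipschitzWith K u)
    {F : Finset (Fin n → ℤ)} (hF : ∀ x ∈ U, latticeIndex h x ∈ F) {R : ℝ≥0}
    (hR : ∀ x ∈ U, ∀ y, latticeIndex h y ∈ F → edist (u x) y ≤ R)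
    {δ : ℝ≥0} (hδ : (K + 1) * (√n * h) ≤ δ) (π : Perm F) {M : ℝ}
    (hS : IsBoundedRearrangement M S) :
    ∫⁻ x in U, edist (u x) (S x) ^ p ≤
      (∫⁻ x in U, cellCost h U u δ p (latticeIndex h x) (Perm.ofSubtype π (latticeIndex h x))) +
        R ^ p * volume {x ∈ U | ¬ latticeIndex h ⁻¹' {latticeIndex h x} ⊆ U} +
        (R + ENNReal.ofReal M) ^ p * volume {x | latticeIndex h x ∈ F ∧
          latticeIndex h (S x) ≠ Perm.ofSubtype π (latticeIndex h x)} := by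
  have hidx := measurable_latticeIndex (n := n) h
  have hpair : Measurable fun x => (latticeIndex h x, latticeIndex h (S x)) :=
    hidx.prodMk (hidx.comp hS.measurePreserving.measurable)
  set B : Set (EuclideanSpace ℝ (Fin n)) := {x | latticeIndex h x ∈ F ∧
    latticeIndex h (S x) ≠ Perm.ofSubtype π (latticeIndex h x)}
  set W : Set (EuclideanSpace ℝ (Fin n)) :=
    {x ∈ U | ¬ latticeIndex h ⁻¹' {latticeIndex h x} ⊆ U}
  have hB : MeasurableSet B := hpair (.of_discrete
    (s := {k : (Fin n → ℤ) × (Fin n → ℤ) | k.1 ∈ F ∧ k.2 ≠ Perm.ofSubtype π k.1}))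
  have hW : MeasurableSet W :=
    hU.inter (hidx (.of_discrete (s := {k | ¬ latticeIndex h ⁻¹' {k} ⊆ U})))
  have hpointwise {x : EuclideanSpace ℝ (Fin n)} (hx : x ∈ U) : edist (u x) (S x) ^ p ≤
      cellCost h U u δ p (latticeIndex h x) (Perm.ofSubtype π (latticeIndex h x)) +
        W.indicator (fun _ => (R : ℝ≥0∞) ^ p) x +
        B.indicator (fun _ => (R + ENNReal.ofReal M) ^ p) x := by
    by_cases hxB : x ∈ B
    · rw [indicator_of_mem hxB]
      refine le_add_left (ENNReal.rpow_le_rpow ((edist_triangle _ x _).trans ?_) hp)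
      rw [edist_comm x, edist_dist (S x)]
      exact add_le_add (hR x hx x (hF x hx)) (ENNReal.ofReal_le_ofReal (hS.dist_le x))
    have hSx : Perm.ofSubtype π (latticeIndex h x) = latticeIndex h (S x) :=
      (not_ne_iff.1 fun hne => hxB ⟨hF x hx, hne⟩).symm
    refine le_add_right ?_
    by_cases hxW : x ∈ W
    · rw [indicator_of_mem hxW]
      refine le_add_left (ENNReal.rpow_le_rpow (hR x hx _ ?_) hp)
      rw [← hSx, ← Subtype.coe_mk _ (hF x hx), Perm.ofSubtype_apply_coe]
      exact Subtype.coe_prop _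
    · refine le_add_right (hSx ▸ edist_rpow_le_cellCost hh hp hu ?_ _ hδ)
      exact not_not.1 fun hsub => hxW ⟨hx, hsub⟩
  refine (setLIntegral_mono' hU fun x hx => hpointwise hx).trans ?_
  rw [lintegral_add_right _ (measurable_const.indicator hB),
    lintegral_add_right _ (measurable_const.indicator hW)]
  have hindicator (s : Set (EuclideanSpace ℝ (Fin n))) (a : ℝ≥0∞) :
      ∫⁻ x in U, s.indicator (fun _ => a) x ≤ a * volume s :=
    (setLIntegral_le_lintegral _ _).trans (lintegral_indicator_const_le _ _)
  exact add_le_add (add_le_add_right (hindicator W _) _) (hindicator B _)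

lemma finite_latticeIndex_image (hh : 0 < h) {A : Set (EuclideanSpace ℝ (Fin n))}
    (hA : IsBounded A) : (latticeIndex h '' A).Finite := by
  obtain ⟨r, hr⟩ := hA.exists_norm_le
  refine (finite_Icc (fun _ => ⌊-r / h⌋) (fun _ => ⌊r / h⌋)).subset ?_
  rintro _ ⟨x, hx, rfl⟩
  have hcoord (i : Fin n) := abs_le.1 ((PiLp.norm_apply_le x i).trans (hr x hx))
  exact ⟨fun i => Int.floor_mono (div_le_div_of_nonneg_right (hcoord i).1 hh.le),
    fun i => Int.floor_mono (div_le_div_of_nonneg_right (hcoord i).2 hh.le)⟩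

lemma exists_finset_latticeIndex_mem (hh : 0 < h) {A : Set (EuclideanSpace ℝ (Fin n))}
    (hA : IsBounded A) : ∃ F : Finset (Fin n → ℤ), (∀ x ∈ A, latticeIndex h x ∈ F) ∧
      ∀ y, latticeIndex h y ∈ F → ∃ x ∈ A, dist x y ≤ √n * h := by
  refine ⟨(finite_latticeIndex_image hh hA).toFinset, fun x hx => ?_, fun y hy => ?_⟩
  · exact (Finite.mem_toFinset _).2 (mem_image_of_mem _ hx)
  · obtain ⟨x, hx, hxy⟩ := (Finite.mem_toFinset _).1 hy
    exact ⟨x, hx, dist_le_of_latticeIndex_eq hh hxy⟩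

lemma exists_isBoundedRearrangement_lintegral_le (hn : 2 ≤ n) (hh : 0 < h) {p : ℝ} (hp : 0 ≤ p)
    {U : Set (EuclideanSpace ℝ (Fin n))} (hU : MeasurableSet U)
    {u S₀ : EuclideanSpace ℝ (Fin n) → EuclideanSpace ℝ (Fin n)} {K : ℝ≥0} (hu : LipschitzWith K u)
    (hS₀ : Measurable S₀) (hmap : (volume.restrict U).map S₀ ≤ volume)
    {A : Set (EuclideanSpace ℝ (Fin n))} (hA : IsBounded A)
    (hUA : ∀ x ∈ U, x ∈ A ∧ u x ∈ A ∧ S₀ x ∈ A) {R : ℝ≥0}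
    (hR : diam A + √n * h ≤ R) {δ : ℝ≥0} (hδ : (K + 1) * (√n * h) ≤ δ) {ε : ℝ≥0∞} (hε : 0 < ε) :
    ∃ M S, IsBoundedRearrangement M S ∧ ∫⁻ x in U, edist (u x) (S x) ^ p ≤
      (∫⁻ x in U, (edist (u x) (S₀ x) + 2 * δ) ^ p) +
        R ^ p * volume {x ∈ U | ¬ latticeIndex h ⁻¹' {latticeIndex h x} ⊆ U} + ε := by
  obtain ⟨F, hAF, hFA⟩ := exists_finset_latticeIndex_mem hh hA
  have hFR (x) (hx : x ∈ U) (y) (hy : latticeIndex h y ∈ F) : edist (u x) y ≤ R := by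
    obtain ⟨z, hz, hzy⟩ := hFA y hy
    rw [edist_le_coe, ← NNReal.coe_le_coe, coe_nndist]
    exact (dist_triangle _ z _).trans
      ((add_le_add (dist_le_diam_of_mem hA (hUA x hx).2.1 hz) hzy).trans hR)
  obtain ⟨π, hπ⟩ := exists_perm_lintegral_latticeIndex_le hh hU hS₀ hmap (F := F)
    (fun x hx => ⟨hAF x (hUA x hx).1, hAF _ (hUA x hx).2.2⟩)
    (c := cellCost h U u δ p) fun k => or_iff_not_imp_left.2 fun hk => funext fun j => if_neg hk
  obtain ⟨M, hM⟩ := exists_isBoundedRearrangement_latticeIndex_eq hn hh π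
  obtain ⟨ε', hε'_pos, hε'⟩ := ENNReal.exists_nnreal_pos_mul_lt
    (ENNReal.rpow_ne_top_of_nonneg hp (by finiteness : (R + ENNReal.ofReal M : ℝ≥0∞) ≠ ∞)) hε.ne'
  obtain ⟨S, hS, hSε⟩ := hM ε' (ENNReal.coe_pos.2 hε'_pos)
  refine ⟨M, S, hS, (lintegral_edist_rpow_le_cellCost hh hp hU hu
    (fun x hx => hAF x (hUA x hx).1) hFR hδ π hS).trans ?_⟩
  refine add_le_add (add_le_add_left ?_ _) ?_
  · exact hπ.trans (lintegral_mono fun x => cellCost_le hh hp U hu x (S₀ x) hδ)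
  · rw [mul_comm] at hε'
    exact (mul_le_mul_right hSε _).trans hε'.le

lemma tendsto_volume_setOf_not_latticeIndex_preimage_subset {U : Set (EuclideanSpace ℝ (Fin n))}
    (hU : IsOpen U) (hU_fin : volume U ≠ ∞) {h : ℕ → ℝ} (hh : ∀ m, 0 < h m)
    (hh_lim : Tendsto h atTop (𝓝 0)) :
    Tendsto (fun m => volume {x ∈ U | ¬ latticeIndex (h m) ⁻¹' {latticeIndex (h m) x} ⊆ U})
      atTop (𝓝 0) := by
  rw [← measure_empty (μ := volume (α := EuclideanSpace ℝ (Fin n)))]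
  refine tendsto_measure_of_ae_tendsto_indicator atTop .empty (fun m => hU.measurableSet.inter
    (measurable_latticeIndex (h m) (.of_discrete (s := {k | ¬ latticeIndex (h m) ⁻¹' {k} ⊆ U}))))
    hU.measurableSet hU_fin (.of_forall fun m => sep_subset _ _) (.of_forall fun x => ?_)
  by_cases hx : x ∈ U
  · obtain ⟨r, hr_pos, hr⟩ := Metric.isOpen_iff.1 hU x hx
    have hlim : Tendsto (fun m => √n * h m) atTop (𝓝 0) := by simpa using hh_lim.const_mul √n
    filter_upwards [hlim.eventually_lt_const hr_pos] with m hm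
    refine iff_of_false (fun hmem => hmem.2 fun y hy => hr ?_) id
    exact (dist_le_of_latticeIndex_eq (hh m) hy).trans_lt hm
  · exact .of_forall fun m => iff_of_false (fun hmem => hx hmem.1) id

lemma tendsto_lintegral_add_rpow {α : Type*} [MeasurableSpace α] {μ : Measure α}
    [IsFiniteMeasure μ] {p : ℝ} (hp : 0 ≤ p) {f : α → ℝ≥0∞} (hf : Measurable f) {C : ℝ≥0}
    (hC : ∀ᵐ x ∂μ, f x ≤ C) {δ : ℕ → ℝ≥0} (hδ : Tendsto δ atTop (𝓝 0)) :
    Tendsto (fun m => ∫⁻ x, (f x + 2 * δ m) ^ p ∂μ) atTop (𝓝 (∫⁻ x, f x ^ p ∂μ)) := by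
  obtain ⟨D, hD⟩ := hδ.bddAbove_range
  refine tendsto_lintegral_of_dominated_convergence (fun _ => (C + 2 * D : ℝ≥0∞) ^ p)
    (fun m => by fun_prop) (fun m => ?_) ?_ (.of_forall fun x => ?_)
  · filter_upwards [hC] with x hx
    gcongr
    exact hD (mem_range_self m)
  · rw [lintegral_const]
    exact ENNReal.mul_ne_top (ENNReal.rpow_ne_top_of_nonneg hp (by finiteness)) (measure_ne_top μ _)
  · have hlim : Tendsto (fun m => f x + 2 * (δ m : ℝ≥0∞)) atTop (𝓝 (f x + 2 * (0 : ℝ≥0))) :=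
      tendsto_const_nhds.add (ENNReal.Tendsto.const_mul (ENNReal.tendsto_coe.2 hδ) (by simp))
    simpa [Function.comp_def] using (ENNReal.continuous_rpow_const.tendsto _).comp hlim

theorem exists_isBoundedRearrangement_lintegral_le_add (hn : 2 ≤ n) {p : ℝ} (hp : 0 ≤ p)
    {U : Set (EuclideanSpace ℝ (Fin n))} (hU : IsOpen U) (hU_bdd : IsBounded U)
    {u S₀ : EuclideanSpace ℝ (Fin n) → EuclideanSpace ℝ (Fin n)} {K : ℝ≥0} (hu : LipschitzWith K u)
    (hS₀ : Measurable S₀) (hS₀_bdd : IsBounded (S₀ '' U))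
    (hmap : (volume.restrict U).map S₀ ≤ volume) {η : ℝ≥0∞} (hη : 0 < η) :
    ∃ M S, IsBoundedRearrangement M S ∧
      ∫⁻ x in U, edist (u x) (S x) ^ p ≤ (∫⁻ x in U, edist (u x) (S₀ x) ^ p) + η := by
  rcases eq_or_ne (∫⁻ x in U, edist (u x) (S₀ x) ^ p) ∞ with htop | hfin
  · exact ⟨0, _, .id, by simp [htop]⟩
  have hU_fin := hU_bdd.measure_lt_top (μ := volume)
  have : IsFiniteMeasure (volume.restrict U) := ⟨by rwa [Measure.restrict_apply_univ]⟩
  set A := U ∪ u '' U ∪ S₀ '' U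
  have hA : IsBounded A := (hU_bdd.union (hu.isBounded_image hU_bdd)).union hS₀_bdd
  have hUA (x) (hx : x ∈ U) : x ∈ A ∧ u x ∈ A ∧ S₀ x ∈ A :=
    ⟨.inl (.inl hx), .inl (.inr (mem_image_of_mem u hx)), .inr (mem_image_of_mem S₀ hx)⟩
  set R : ℝ≥0 := (diam A + √n).toNNReal
  set h : ℕ → ℝ := fun m => 1 / ((m : ℝ) + 1)
  have hh (m : ℕ) : 0 < h m := Nat.one_div_pos_of_nat
  have hh_le (m : ℕ) : h m ≤ 1 := by simpa [h] using Nat.one_div_le_one_div (α := ℝ) m.zero_le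
  have hh_lim : Tendsto h atTop (𝓝 0) := tendsto_one_div_add_atTop_nhds_zero_nat
  set δ : ℕ → ℝ≥0 := fun m => ((K + 1) * (√n * h m)).toNNReal
  have hδ_lim : Tendsto δ atTop (𝓝 0) := by
    simpa using (tendsto_real_toNNReal ((hh_lim.const_mul √n).const_mul ((K : ℝ) + 1)))
  have hdist : ∀ᵐ x ∂volume.restrict U, edist (u x) (S₀ x) ≤ (diam A).toNNReal :=
    (ae_restrict_iff' hU.measurableSet).2 <| .of_forall fun x hx => by
      rw [edist_dist]
      exact ENNReal.ofReal_le_ofReal (dist_le_diam_of_mem hA (hUA x hx).2.1 (hUA x hx).2.2)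
  have hlim := (tendsto_lintegral_add_rpow hp (hu.continuous.measurable.edist hS₀) hdist
    hδ_lim).add <| ENNReal.Tendsto.const_mul
      (tendsto_volume_setOf_not_latticeIndex_preimage_subset hU hU_fin.ne hh hh_lim)
      (.inr (ENNReal.rpow_ne_top_of_nonneg hp (ENNReal.coe_ne_top (r := R))))
  rw [mul_zero, add_zero] at hlim
  obtain ⟨m, hm⟩ := (hlim.eventually_lt_const
    (ENNReal.lt_add_right hfin (ENNReal.half_pos hη.ne').ne')).exists
  have hR : diam A + √n * h m ≤ R :=
    (add_le_add_right (mul_le_of_le_one_right (Real.sqrt_nonneg _) (hh_le m)) _).trans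
      (Real.le_coe_toNNReal _)
  obtain ⟨M, S, hS, hSle⟩ := exists_isBoundedRearrangement_lintegral_le hn (hh m) hp
    hU.measurableSet hu hS₀ hmap hA hUA hR (Real.le_coe_toNNReal _)
    (ENNReal.half_pos hη.ne')
  refine ⟨M, S, hS, hSle.trans ((add_le_add_left hm.le _).trans_eq ?_)⟩
  rw [add_assoc, ENNReal.add_halves]

end Discretisation

section ChangeOfVariables

open Filter
open scoped ENNReal NNReal

lemma measure_eq_zero_of_measure_image_eq_zero {E : Type*} [NormedAddCommGroup E]
    [NormedSpace ℝ E] [FiniteDimensional ℝ E] [MeasurableSpace E] [BorelSpace E] {μ : Measure E}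
    [μ.IsAddHaarMeasure] {f : E → E} {f' : E → E →L[ℝ] E} {s : Set E}
    (hf' : ∀ x ∈ s, HasFDerivWithinAt f (f' x) s x) (hdet : ∀ x ∈ s, (f' x).det ≠ 0)
    (hs : μ (f '' s) = 0) : μ s = 0 := by
  have hlinear (A : E →L[ℝ] E) : ∃ δ : ℝ≥0, δ ≠ 0 ∧ (A.det ≠ 0 →
      ∀ t, ApproximatesLinearOn f A t δ → μ (f '' t) = 0 → μ t = 0) := by
    by_cases hA : A.det = 0
    · exact ⟨1, one_ne_zero, fun hne => absurd hA hne⟩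
    obtain ⟨m, hm_pos, hm⟩ := ENNReal.lt_iff_exists_nnreal_btwn.1
      (ENNReal.ofReal_pos.2 (abs_pos.2 hA))
    obtain ⟨δ, hδ, hδ_pos⟩ :=
      ((mul_le_addHaar_image_of_lt_det μ A hm).and self_mem_nhdsWithin).exists
    refine ⟨δ, hδ_pos.ne', fun _ t ht hft => ?_⟩
    exact (mul_eq_zero.1 (le_antisymm ((hδ t f ht).trans hft.le) zero_le)).resolve_left hm_pos.ne'
  choose δ hδ hδ_null using hlinear
  rcases s.eq_empty_or_nonempty with rfl | hne
  · exact measure_empty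
  obtain ⟨t, A, -, -, hst, happrox, hA⟩ :=
    exists_partition_approximatesLinearOn_of_hasFDerivWithinAt f s f' hf' δ hδ
  rw [← inter_eq_left.2 hst, inter_iUnion, measure_iUnion_null_iff]
  intro k
  obtain ⟨y, hy, hAy⟩ := hA hne k
  exact hδ_null (A k) (hAy ▸ hdet y hy) _ (happrox k)
    (measure_mono_null (image_mono inter_subset_left) hs)

variable {n : ℕ} {u : EuclideanSpace ℝ (Fin n) → EuclideanSpace ℝ (Fin n)}
  {U W : Set (EuclideanSpace ℝ (Fin n))} {lam : ℝ}

lemma measurable_detD (u : EuclideanSpace ℝ (Fin n) → EuclideanSpace ℝ (Fin n)) :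
    Measurable (detD u) :=
  ContinuousLinearMap.continuous_det.measurable.comp (measurable_fderiv ℝ u)

lemma exists_measurableSet_injOn_ae_eq {K : ℝ≥0} (hu : LipschitzWith K u) (hU : MeasurableSet U)
    (hmult : multOn U u ≤ 1) (hlam : 0 < lam)
    (hdet : ∀ᵐ x ∂volume.restrict U, lam ≤ detD u x) :
    ∃ W ⊆ U, MeasurableSet W ∧ W =ᵐ[volume] U ∧ InjOn u W ∧
      ∀ x ∈ W, DifferentiableAt ℝ u x ∧ lam ≤ detD u x := by
  have hencard : ∀ᵐ y, (U ∩ u ⁻¹' {y}).encard ≤ 1 :=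
    (ae_le_essSup (f := fun y => (U ∩ u ⁻¹' {y}).encard)).mono fun y hy => hy.trans hmult
  obtain ⟨N, hN_sub, hN_meas, hN_null⟩ := exists_measurable_superset_of_null (ae_iff.1 hencard)
  set D := U ∩ {x | DifferentiableAt ℝ u x ∧ lam ≤ detD u x}
  have hD_meas : MeasurableSet D := hU.inter ((measurableSet_of_differentiableAt ℝ u).inter
    (measurableSet_le measurable_const (measurable_detD u)))
  have hDN : volume (D ∩ u ⁻¹' N) = 0 :=
    measure_eq_zero_of_measure_image_eq_zero (f := u) (f' := fderiv ℝ u)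
      (fun x hx => hx.1.2.1.hasFDerivAt.hasFDerivWithinAt)
      (fun x hx => (hlam.trans_le hx.1.2.2).ne')
      (measure_mono_null (image_subset_iff.2 fun x hx => hx.2) hN_null)
  refine ⟨D \ u ⁻¹' N, fun x hx => hx.1.1, hD_meas.diff (hu.continuous.measurable hN_meas), ?_, ?_,
    fun x hx => hx.1.2⟩
  · filter_upwards [hu.ae_differentiableAt, (ae_restrict_iff' hU).1 hdet,
      measure_eq_zero_iff_ae_notMem.1 hDN] with x hdiff hdet_x hxN
    refine propext ⟨fun hx => hx.1.1, fun hx => ?_⟩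
    have hxD : x ∈ D := ⟨hx, hdiff, hdet_x hx⟩
    exact ⟨hxD, fun hxu => hxN ⟨hxD, hxu⟩⟩
  · intro x hx y hy hxy
    have hcard : (U ∩ u ⁻¹' {u x}).encard ≤ 1 := not_not.1 fun hcard => hx.2 (hN_sub hcard)
    exact encard_le_one_iff.1 hcard x y ⟨hx.1.1, rfl⟩ ⟨hy.1.1, hxy.symm⟩

lemma lintegral_image_eq_lintegral_detD_mul (hW : MeasurableSet W) (hinj : InjOn u W)
    (hdet : ∀ x ∈ W, DifferentiableAt ℝ u x ∧ 0 ≤ detD u x)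
    (g : EuclideanSpace ℝ (Fin n) → ℝ≥0∞) :
    ∫⁻ y in u '' W, g y = ∫⁻ x in W, ENNReal.ofReal (detD u x) * g (u x) := by
  rw [lintegral_image_eq_lintegral_abs_det_fderiv_mul volume hW
    (fun x hx => (hdet x hx).1.hasFDerivAt.hasFDerivWithinAt) hinj g]
  refine setLIntegral_congr_fun hW fun x hx => ?_
  rw [← abs_of_nonneg (hdet x hx).2]
  rfl

lemma exists_measurable_density (hu : Continuous u) (hW : MeasurableSet W) (hinj : InjOn u W) :
    ∃ σ : EuclideanSpace ℝ (Fin n) → ℝ, Measurable σ ∧ (∀ x ∈ W, σ (u x) = (detD u x)⁻¹) ∧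
      ∀ y ∉ u '' W, σ y = 1 := by
  have hemb := ContinuousOn.measurableEmbedding hW hu.continuousOn hinj
  refine ⟨Function.extend (W.domRestrict u) (fun x => (detD u x)⁻¹) fun _ => 1,
    hemb.measurable_extend ((measurable_detD u).comp measurable_subtype_coe).inv measurable_const,
    fun x hx => hemb.injective.extend_apply (fun x : W => (detD u x)⁻¹) _ ⟨x, hx⟩,
    fun y hy => Function.extend_apply' _ _ _ ?_⟩
  rintro ⟨x, rfl⟩
  exact hy (mem_image_of_mem u x.2)

lemma lintegral_comp_eq_lintegral_image_mul (hW : MeasurableSet W) (hinj : InjOn u W)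
    (hdet : ∀ x ∈ W, DifferentiableAt ℝ u x ∧ 0 < detD u x)
    {σ : EuclideanSpace ℝ (Fin n) → ℝ} (hσ : ∀ x ∈ W, σ (u x) = (detD u x)⁻¹)
    (g : EuclideanSpace ℝ (Fin n) → ℝ≥0∞) :
    ∫⁻ x in W, g (u x) = ∫⁻ y in u '' W, ENNReal.ofReal (σ y) * g y := by
  rw [lintegral_image_eq_lintegral_detD_mul hW hinj fun x hx => (hdet x hx).imp_right le_of_lt]
  refine setLIntegral_congr_fun hW fun x hx => ?_
  have hpos := (hdet x hx).2
  simp only [hσ x hx]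
  rw [← mul_assoc, ← ENNReal.ofReal_mul hpos.le, mul_inv_cancel₀ hpos.ne', ENNReal.ofReal_one,
    one_mul]

end ChangeOfVariables

section Knothe

open Filter
open scoped ENNReal NNReal

lemma lintegral_rpow_le_measure_univ_rpow_mul {α : Type*} [MeasurableSpace α] {μ : Measure α}
    {p : ℝ} (hp : 1 ≤ p) {f : α → ℝ≥0∞} (hf : AEMeasurable f μ) :
    (∫⁻ x, f x ∂μ) ^ p ≤ μ univ ^ (p - 1) * ∫⁻ x, f x ^ p ∂μ := by
  have hp_pos : 0 < p := zero_lt_one.trans_le hp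
  have hLp := eLpNorm'_le_eLpNorm'_mul_rpow_measure_univ zero_lt_one hp hf.aestronglyMeasurable
  simp only [eLpNorm', enorm_eq_self, ENNReal.rpow_one, one_div, inv_one] at hLp
  refine (ENNReal.rpow_le_rpow hLp hp_pos.le).trans_eq ?_
  rw [ENNReal.mul_rpow_of_nonneg _ _ hp_pos.le, ENNReal.rpow_inv_rpow hp_pos.ne',
    ← ENNReal.rpow_mul, sub_mul, one_mul, inv_mul_cancel₀ hp_pos.ne', mul_comm]

lemma map_withDensity_deriv_le_of_monotone {T T' : ℝ → ℝ} (hT : Monotone T)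
    (hderiv : ∀ᵐ t, HasDerivAt T (T' t) t) :
    (volume.withDensity fun t => ENNReal.ofReal (T' t)).map T ≤ volume := by
  obtain ⟨N, hN_sub, hN_meas, hN_null⟩ := exists_measurable_superset_of_null (ae_iff.1 hderiv)
  refine Measure.le_iff.2 fun B hB => ?_
  have hTB : MeasurableSet (T ⁻¹' B \ N) := (hT.measurable hB).diff hN_meas
  rw [Measure.map_apply hT.measurable hB, withDensity_apply _ (hT.measurable hB)]
  calc ∫⁻ t in T ⁻¹' B, ENNReal.ofReal (T' t)
      = ∫⁻ t in T ⁻¹' B \ N, ENNReal.ofReal (T' t) * 1 := by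
        simp only [mul_one]
        exact setLIntegral_congr (sdiff_null_ae_eq_self hN_null).symm
    _ = ∫⁻ _ in T '' (T ⁻¹' B \ N), 1 :=
        (lintegral_image_eq_lintegral_deriv_mul_of_monotoneOn hTB
          (fun t ht => HasDerivAt.hasDerivWithinAt <| not_not.1 fun hnot => ht.2 (hN_sub hnot))
          (hT.monotoneOn _) fun _ => 1).symm
    _ = volume (T '' (T ⁻¹' B \ N)) := setLIntegral_one _
    _ ≤ volume B := measure_mono (image_subset_iff.2 sdiff_subset)

lemma map_withDensity_add_integral_Iic_le {τ : ℝ → ℝ} (hτ : Integrable τ) (hτ_ge : ∀ t, -1 ≤ τ t) :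
    (volume.withDensity fun t => ENNReal.ofReal (1 + τ t)).map (fun t => t + ∫ s in Iic t, τ s) ≤
      volume := by
  have hsub (a b : ℝ) :
      (b + ∫ s in Iic b, τ s) = (∫ s in a..b, (1 + τ s)) + (a + ∫ s in Iic a, τ s) := by
    rw [intervalIntegral.integral_add intervalIntegrable_const hτ.intervalIntegrable,
      ← intervalIntegral.integral_Iic_sub_Iic hτ.integrableOn hτ.integrableOn,
      intervalIntegral.integral_const, smul_eq_mul, mul_one]
    ring
  refine map_withDensity_deriv_le_of_monotone (fun a b hab => ?_) ?_
  · rw [hsub a b]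
    exact le_add_of_nonneg_left <| intervalIntegral.integral_nonneg hab fun s _ =>
      neg_le_iff_add_nonneg'.1 (hτ_ge s)
  · have hloc : LocallyIntegrable fun s => 1 + τ s :=
      (locallyIntegrable_const 1).add hτ.locallyIntegrable
    filter_upwards [LocallyIntegrable.ae_hasDerivAt_integral hloc] with t ht
    exact ((ht 0).add_const _).congr_of_eventuallyEq (.of_forall fun b => hsub 0 b)

/-- The primitive of `τ` along the lines `{a} × ℝ`, started at `-∞`. For a density `1 + τ`, the map
`(a, t) ↦ (a, t + fibrePrimitive τ (a, t))` is the monotone rearrangement of every line. -/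
def fibrePrimitive {α : Type*} (τ : α × ℝ → ℝ) (q : α × ℝ) : ℝ :=
  ∫ s in Iic q.2, τ (q.1, s)

variable {α : Type*} {τ : α × ℝ → ℝ} {V : Set (α × ℝ)} {D : ℝ≥0∞} {p : ℝ}

lemma enorm_fibrePrimitive_le (q : α × ℝ) : ‖fibrePrimitive τ q‖ₑ ≤ ∫⁻ s, ‖τ (q.1, s)‖ₑ :=
  (enorm_integral_le_lintegral_enorm _).trans (setLIntegral_le_lintegral _ _)

lemma lintegral_enorm_fibre_eq (hτV : ∀ q ∉ V, τ q = 0) (a : α) :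
    ∫⁻ s, ‖τ (a, s)‖ₑ = ∫⁻ s in Prod.mk a ⁻¹' V, ‖τ (a, s)‖ₑ := by
  refine (setLIntegral_eq_of_support_subset fun s hs => ?_).symm
  contrapose! hs
  simpa using hτV _ hs

lemma lintegral_enorm_fibre_le {M : ℝ≥0∞} (hτV : ∀ q ∉ V, τ q = 0) (hτ_le : ∀ q, ‖τ q‖ₑ ≤ M)
    {a : α} (hV : volume (Prod.mk a ⁻¹' V) ≤ D) : ∫⁻ s, ‖τ (a, s)‖ₑ ≤ M * D := by
  rw [lintegral_enorm_fibre_eq hτV]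
  refine (lintegral_mono fun s => hτ_le (a, s)).trans ?_
  rw [setLIntegral_const]
  gcongr

variable [MeasurableSpace α]

lemma measurable_fibrePrimitive (hτ : Measurable τ) : Measurable (fibrePrimitive τ) := by
  have hind : Measurable fun z : (α × ℝ) × ℝ => (Iic z.1.2).indicator (fun s => τ (z.1.1, s)) z.2 :=
    Measurable.indicator (s := {z : (α × ℝ) × ℝ | z.2 ≤ z.1.2}) (f := fun z => τ (z.1.1, z.2))
      (by fun_prop) (measurableSet_le measurable_snd measurable_fst.snd)
  convert (hind.stronglyMeasurable.integral_prod_right' (ν := volume)).measurable using 2 with q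
  exact (integral_indicator measurableSet_Iic).symm

lemma measurable_add_fibrePrimitive (hτ : Measurable τ) :
    Measurable fun q => (q.1, q.2 + fibrePrimitive τ q) :=
  measurable_fst.prodMk (measurable_snd.add (measurable_fibrePrimitive hτ))

lemma lintegral_enorm_fibrePrimitive_rpow_le {ν : Measure α} [SFinite ν] (hp : 1 ≤ p)
    (hτ : Measurable τ) (hD : D ≠ ∞) (hV_meas : MeasurableSet V)
    (hV : ∀ a, volume (Prod.mk a ⁻¹' V) ≤ D)
    (hτV : ∀ q ∉ V, τ q = 0) :
    ∫⁻ q in V, ‖fibrePrimitive τ q‖ₑ ^ p ∂ν.prod volume ≤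
      D ^ p * ∫⁻ q in V, ‖τ q‖ₑ ^ p ∂ν.prod volume := by
  have hfibre {f : α × ℝ → ℝ≥0∞} (hf : Measurable f) :
      ∫⁻ q in V, f q ∂ν.prod volume = ∫⁻ a, (∫⁻ s in Prod.mk a ⁻¹' V, f (a, s)) ∂ν := by
    rw [← lintegral_indicator hV_meas, lintegral_prod _ (hf.indicator hV_meas).aemeasurable]
    refine lintegral_congr fun a => ?_
    rw [← lintegral_indicator (measurable_prodMk_left hV_meas)]
    rfl
  have hp_sub : 0 ≤ p - 1 := sub_nonneg.2 hp
  rw [hfibre ((measurable_fibrePrimitive hτ).enorm.pow_const p), hfibre (hτ.enorm.pow_const p)]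
  rw [← lintegral_const_mul' _ _ (ENNReal.rpow_ne_top_of_nonneg (by linarith) hD)]
  refine lintegral_mono fun a => ?_
  set I := ∫⁻ s in Prod.mk a ⁻¹' V, ‖τ (a, s)‖ₑ ^ p
  have hpoint (t : ℝ) : ‖fibrePrimitive τ (a, t)‖ₑ ^ p ≤ D ^ (p - 1) * I := by
    refine (ENNReal.rpow_le_rpow (enorm_fibrePrimitive_le _) (by linarith)).trans ?_
    rw [lintegral_enorm_fibre_eq hτV]
    refine (lintegral_rpow_le_measure_univ_rpow_mul hp (by fun_prop)).trans ?_
    rw [Measure.restrict_apply_univ]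
    gcongr
    exact hV a
  calc ∫⁻ t in Prod.mk a ⁻¹' V, ‖fibrePrimitive τ (a, t)‖ₑ ^ p
      ≤ ∫⁻ _ in Prod.mk a ⁻¹' V, D ^ (p - 1) * I := lintegral_mono hpoint
    _ ≤ D ^ (p - 1) * I * D ^ (1 : ℝ) := by
        rw [setLIntegral_const, ENNReal.rpow_one]
        gcongr
        exact hV a
    _ = D ^ p * I := by
        rw [mul_right_comm, ← ENNReal.rpow_add_of_nonneg _ _ hp_sub zero_le_one, sub_add_cancel]

lemma map_withDensity_add_fibrePrimitive_le {ν : Measure α} [SFinite ν] (hτ : Measurable τ)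
    (hτ_int : ∀ a, Integrable fun s => τ (a, s)) (hτ_ge : ∀ q, -1 ≤ τ q) :
    ((ν.prod volume).withDensity fun q => ENNReal.ofReal (1 + τ q)).map
      (fun q => (q.1, q.2 + fibrePrimitive τ q)) ≤ ν.prod volume := by
  have hT := measurable_add_fibrePrimitive hτ
  have hσ : Measurable fun q => ENNReal.ofReal (1 + τ q) := (hτ.const_add 1).ennreal_ofReal
  refine Measure.le_iff.2 fun B hB => ?_
  rw [Measure.map_apply hT hB, withDensity_apply _ (hT hB), ← lintegral_indicator (hT hB),
    lintegral_prod _ (hσ.indicator (hT hB)).aemeasurable, Measure.prod_apply hB]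
  refine lintegral_mono fun a => ?_
  have hBa := measurable_prodMk_left (x := a) hB
  have hTa : Measurable fun t => t + ∫ s in Iic t, τ (a, s) :=
    measurable_id.add ((measurable_fibrePrimitive hτ).comp measurable_prodMk_left)
  refine Eq.trans_le ?_ (map_withDensity_add_integral_Iic_le (hτ_int a) (fun t => hτ_ge (a, t))
    (Prod.mk a ⁻¹' B))
  rw [Measure.map_apply hTa hBa, withDensity_apply _ (hTa hBa), ← lintegral_indicator (hTa hBa)]
  rfl

lemma volume_splitCoord_fibre_le_ediam {m : ℕ} (i : Fin (m + 1))
    (V : Set (EuclideanSpace ℝ (Fin (m + 1)))) (a : Fin m → ℝ) :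
    volume (Prod.mk a ⁻¹' ((splitCoord i).symm ⁻¹' V)) ≤ ediam V := by
  have hiso : Isometry fun t : ℝ => (splitCoord i).symm (a, t) := Isometry.of_dist_eq fun s t => by
    rw [← zero_add s, ← zero_add t, splitCoord_symm_add, splitCoord_symm_add, dist_add_left,
      PiLp.dist_single_same, zero_add, zero_add]
  refine (Real.volume_le_diam _).trans ((hiso.ediam_image _).symm.trans_le (ediam_mono ?_))
  exact image_subset_iff.2 subset_rfl

/-- The monotone rearrangement of the density `σ` along every line in the direction of the `i`-th
coordinate, one step of the Knothe map: it pushes `σ` forward to Lebesgue measure. -/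
def knotheMap {m : ℕ} (i : Fin (m + 1)) (σ : EuclideanSpace ℝ (Fin (m + 1)) → ℝ)
    (y : EuclideanSpace ℝ (Fin (m + 1))) : EuclideanSpace ℝ (Fin (m + 1)) :=
  y + EuclideanSpace.single i
    (fibrePrimitive (fun q => σ ((splitCoord i).symm q) - 1) (splitCoord i y))

variable {m : ℕ} (i : Fin (m + 1)) {σ : EuclideanSpace ℝ (Fin (m + 1)) → ℝ}
  {V : Set (EuclideanSpace ℝ (Fin (m + 1)))} {M : ℝ≥0∞}

lemma edist_knotheMap (y : EuclideanSpace ℝ (Fin (m + 1))) :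
    edist y (knotheMap i σ y) =
      ‖fibrePrimitive (fun q => σ ((splitCoord i).symm q) - 1) (splitCoord i y)‖ₑ := by
  rw [edist_comm, edist_eq_enorm_sub, knotheMap, add_sub_cancel_left, ← ofReal_norm,
    PiLp.norm_single, ofReal_norm]

lemma knotheMap_eq_comp :
    knotheMap i σ = (splitCoord i).symm ∘
      (fun q => (q.1, q.2 + fibrePrimitive (fun q => σ ((splitCoord i).symm q) - 1) q)) ∘
      splitCoord i := by
  ext1 y
  simp only [Function.comp, splitCoord_symm_add, Prod.mk.eta, MeasurableEquiv.symm_apply_apply]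
  rfl

lemma measurable_knotheMap (hσ : Measurable σ) : Measurable (knotheMap i σ) := by
  rw [knotheMap_eq_comp]
  exact (splitCoord i).symm.measurable.comp <| (measurable_add_fibrePrimitive <|
    (hσ.comp (splitCoord i).symm.measurable).sub_const 1).comp (splitCoord i).measurable

lemma lintegral_enorm_splitCoord_fibre_le (hσM : ∀ y, ‖σ y - 1‖ₑ ≤ M) (hσV : ∀ y ∉ V, σ y = 1)
    (a : Fin m → ℝ) : ∫⁻ s, ‖σ ((splitCoord i).symm (a, s)) - 1‖ₑ ≤ M * ediam V :=
  lintegral_enorm_fibre_le (V := (splitCoord i).symm ⁻¹' V)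
    (τ := fun q => σ ((splitCoord i).symm q) - 1) (fun _ hq => sub_eq_zero.2 (hσV _ hq))
    (fun _ => hσM _) (volume_splitCoord_fibre_le_ediam i V a)

lemma edist_knotheMap_le (hσM : ∀ y, ‖σ y - 1‖ₑ ≤ M) (hσV : ∀ y ∉ V, σ y = 1)
    (y : EuclideanSpace ℝ (Fin (m + 1))) : edist y (knotheMap i σ y) ≤ M * ediam V := by
  rw [edist_knotheMap]
  exact (enorm_fibrePrimitive_le _).trans (lintegral_enorm_splitCoord_fibre_le i hσM hσV _)

lemma lintegral_edist_knotheMap_rpow_le (hp : 1 ≤ p) (hσ : Measurable σ) (hV : MeasurableSet V)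
    (hV_bdd : IsBounded V) (hσV : ∀ y ∉ V, σ y = 1) :
    ∫⁻ y in V, edist y (knotheMap i σ y) ^ p ≤ ediam V ^ p * ∫⁻ y in V, ‖σ y - 1‖ₑ ^ p := by
  have hmp := (measurePreserving_splitCoord i).symm
  have hemb := (splitCoord i).symm.measurableEmbedding
  simp only [← hmp.setLIntegral_comp_preimage_emb hemb _ V, edist_knotheMap,
    MeasurableEquiv.apply_symm_apply]
  exact lintegral_enorm_fibrePrimitive_rpow_le hp
    ((hσ.comp (splitCoord i).symm.measurable).sub_const 1) hV_bdd.ediam_ne_top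
    ((splitCoord i).symm.measurable hV) (volume_splitCoord_fibre_le_ediam i V)
    fun q hq => sub_eq_zero.2 (hσV _ hq)

lemma map_knotheMap_withDensity_le (hσ : Measurable σ) (hσ_nonneg : ∀ y, 0 ≤ σ y) (hM : M ≠ ∞)
    (hσM : ∀ y, ‖σ y - 1‖ₑ ≤ M) (hV_bdd : IsBounded V) (hσV : ∀ y ∉ V, σ y = 1) :
    (volume.withDensity fun y => ENNReal.ofReal (σ y)).map (knotheMap i σ) ≤ volume := by
  set e := splitCoord i
  set τ : (Fin m → ℝ) × ℝ → ℝ := fun q => σ (e.symm q) - 1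
  have hmp : MeasurePreserving e volume volume := measurePreserving_splitCoord i
  have hτ : Measurable τ := (hσ.comp e.symm.measurable).sub_const 1
  have hτ_int (a : Fin m → ℝ) : Integrable fun s => τ (a, s) :=
    ⟨(hτ.comp measurable_prodMk_left).aestronglyMeasurable,
      (lintegral_enorm_splitCoord_fibre_le i hσM hσV a).trans_lt
        (ENNReal.mul_lt_top hM.lt_top hV_bdd.ediam_ne_top.lt_top)⟩
  have hle := map_withDensity_add_fibrePrimitive_le (ν := volume) hτ hτ_int fun q => by
    simpa [τ] using hσ_nonneg (e.symm q)
  have hΦ := measurable_add_fibrePrimitive hτ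
  have hdensity : (volume.withDensity fun y => ENNReal.ofReal (σ y)).map e =
      volume.withDensity fun q => ENNReal.ofReal (1 + τ q) := by
    refine Measure.ext fun B hB => ?_
    rw [e.map_apply, withDensity_apply _ (e.measurable hB), withDensity_apply _ hB,
      ← hmp.setLIntegral_comp_preimage_emb e.measurableEmbedding]
    simp [τ]
  rw [knotheMap_eq_comp, ← Measure.map_map e.symm.measurable (hΦ.comp e.measurable),
    ← Measure.map_map hΦ e.measurable, hdensity]
  exact (Measure.map_mono hle e.symm.measurable).trans_eq hmp.symm.map_eq

end Knothe

section Rearrangement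

open Filter
open scoped ENNReal NNReal

variable {n : ℕ} {u : EuclideanSpace ℝ (Fin n) → EuclideanSpace ℝ (Fin n)}
  {U W : Set (EuclideanSpace ℝ (Fin n))} {lam p : ℝ}

lemma inv_mul_mul_enorm_inv_sub_one_rpow_le {a : ℝ} (hlam : 0 < lam) (ha : lam ≤ a) (hp : 1 ≤ p) :
    ENNReal.ofReal lam⁻¹ * (ENNReal.ofReal a * ‖a⁻¹ - 1‖ₑ ^ p) ≤
      ENNReal.ofReal lam⁻¹ ^ p * ‖1 - a‖ₑ ^ p := by
  have ha_pos : 0 < a := hlam.trans_le ha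
  have hp_sub : 0 ≤ p - 1 := sub_nonneg.2 hp
  have hsplit (b : ℝ≥0∞) : b ^ p = b * b ^ (p - 1) := by
    nth_rw 2 [← ENNReal.rpow_one b]
    rw [← ENNReal.rpow_add_of_nonneg _ _ zero_le_one hp_sub, add_sub_cancel]
  have henorm : ‖a⁻¹ - 1‖ₑ = ENNReal.ofReal a⁻¹ * ‖1 - a‖ₑ := by
    rw [← Real.enorm_of_nonneg (inv_nonneg.2 ha_pos.le), ← enorm_mul, mul_sub, mul_one,
      inv_mul_cancel₀ ha_pos.ne']
  have hcancel : ENNReal.ofReal a * ENNReal.ofReal a⁻¹ = 1 := by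
    rw [← ENNReal.ofReal_mul ha_pos.le, mul_inv_cancel₀ ha_pos.ne', ENNReal.ofReal_one]
  calc ENNReal.ofReal lam⁻¹ * (ENNReal.ofReal a * ‖a⁻¹ - 1‖ₑ ^ p)
      = ENNReal.ofReal lam⁻¹ * (ENNReal.ofReal a * ENNReal.ofReal a⁻¹) *
          ENNReal.ofReal a⁻¹ ^ (p - 1) * ‖1 - a‖ₑ ^ p := by
        rw [henorm, ENNReal.mul_rpow_of_nonneg _ _ (by linarith), hsplit (ENNReal.ofReal a⁻¹)]
        ring
    _ ≤ ENNReal.ofReal lam⁻¹ * ENNReal.ofReal lam⁻¹ ^ (p - 1) * ‖1 - a‖ₑ ^ p := by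
        rw [hcancel, mul_one]
        gcongr
    _ = ENNReal.ofReal lam⁻¹ ^ p * ‖1 - a‖ₑ ^ p := by rw [← hsplit]

lemma map_restrict_le_withDensity (hu : Continuous u) (hW : MeasurableSet W) (hinj : InjOn u W)
    (hdet : ∀ x ∈ W, DifferentiableAt ℝ u x ∧ 0 < detD u x)
    {σ : EuclideanSpace ℝ (Fin n) → ℝ} (hσ : ∀ x ∈ W, σ (u x) = (detD u x)⁻¹) :
    (volume.restrict W).map u ≤ volume.withDensity fun y => ENNReal.ofReal (σ y) := by
  refine Measure.le_iff.2 fun B hB => ?_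
  have hind : (fun y => ENNReal.ofReal (σ y) * B.indicator 1 y) =
      B.indicator fun y => ENNReal.ofReal (σ y) := by
    ext y
    by_cases hy : y ∈ B <;> simp [hy]
  rw [← lintegral_indicator_one hB, lintegral_map (measurable_one.indicator hB) hu.measurable,
    lintegral_comp_eq_lintegral_image_mul hW hinj hdet hσ, hind, withDensity_apply _ hB,
    ← lintegral_indicator hB]
  exact setLIntegral_le_lintegral _ _

lemma mul_lintegral_image_enorm_sub_one_rpow_le (hp : 1 ≤ p) (hlam : 0 < lam)
    (hW : MeasurableSet W) (hinj : InjOn u W)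
    (hdet : ∀ x ∈ W, DifferentiableAt ℝ u x ∧ lam ≤ detD u x)
    {σ : EuclideanSpace ℝ (Fin n) → ℝ} (hσ : ∀ x ∈ W, σ (u x) = (detD u x)⁻¹) :
    ENNReal.ofReal lam⁻¹ * ∫⁻ y in u '' W, ‖σ y - 1‖ₑ ^ p ≤
      ENNReal.ofReal lam⁻¹ ^ p * ∫⁻ x in W, ‖1 - detD u x‖ₑ ^ p := by
  rw [lintegral_image_eq_lintegral_detD_mul hW hinj fun x hx =>
      (hdet x hx).imp_right hlam.le.trans,
    ← lintegral_const_mul' _ _ ENNReal.ofReal_ne_top, ← lintegral_const_mul' _ _ (by finiteness)]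
  refine setLIntegral_mono' hW fun x hx => ?_
  rw [hσ x hx]
  exact inv_mul_mul_enorm_inv_sub_one_rpow_le hlam (hdet x hx).2 hp

lemma lintegral_edist_knotheMap_comp_rpow_le {m : ℕ} (i : Fin (m + 1)) {d : ℝ}
    {u : EuclideanSpace ℝ (Fin (m + 1)) → EuclideanSpace ℝ (Fin (m + 1))}
    {W : Set (EuclideanSpace ℝ (Fin (m + 1)))} (hp : 1 ≤ p) (hu : Continuous u) (hlam : 0 < lam)
    (hW : MeasurableSet W) (hinj : InjOn u W)
    (hdet : ∀ x ∈ W, DifferentiableAt ℝ u x ∧ lam ≤ detD u x)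
    {σ : EuclideanSpace ℝ (Fin (m + 1)) → ℝ} (hσ_meas : Measurable σ)
    (hσ : ∀ x ∈ W, σ (u x) = (detD u x)⁻¹) (hσ_one : ∀ y ∉ u '' W, σ y = 1)
    (hd : ediam (u '' W) ≤ ENNReal.ofReal d) :
    ∫⁻ x in W, edist (u x) (knotheMap i σ (u x)) ^ p ≤
      ENNReal.ofReal (d / lam) ^ p * ∫⁻ x in W, ‖1 - detD u x‖ₑ ^ p := by
  have hV : MeasurableSet (u '' W) := hW.image_of_continuousOn_injOn hu.continuousOn hinj
  have hV_bdd : IsBounded (u '' W) :=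
    isBounded_iff_ediam_ne_top.2 (hd.trans_lt ENNReal.ofReal_lt_top).ne
  have hσ_le (y) (hy : y ∈ u '' W) : σ y ≤ lam⁻¹ := by
    obtain ⟨x, hx, rfl⟩ := hy
    rw [hσ x hx]
    exact inv_anti₀ hlam (hdet x hx).2
  calc ∫⁻ x in W, edist (u x) (knotheMap i σ (u x)) ^ p
      = ∫⁻ y in u '' W, ENNReal.ofReal (σ y) * edist y (knotheMap i σ y) ^ p :=
        lintegral_comp_eq_lintegral_image_mul hW hinj
          (fun x hx => (hdet x hx).imp_right hlam.trans_le) hσ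
          fun y => edist y (knotheMap i σ y) ^ p
    _ ≤ ∫⁻ y in u '' W, ENNReal.ofReal lam⁻¹ * edist y (knotheMap i σ y) ^ p :=
        setLIntegral_mono' hV fun y hy => by
          gcongr
          exact hσ_le y hy
    _ ≤ ENNReal.ofReal lam⁻¹ * (ENNReal.ofReal d ^ p * ∫⁻ y in u '' W, ‖σ y - 1‖ₑ ^ p) := by
        rw [lintegral_const_mul' _ _ ENNReal.ofReal_ne_top]
        gcongr
        exact (lintegral_edist_knotheMap_rpow_le i hp hσ_meas hV hV_bdd hσ_one).trans (by gcongr)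
    _ ≤ ENNReal.ofReal d ^ p *
          (ENNReal.ofReal lam⁻¹ ^ p * ∫⁻ x in W, ‖1 - detD u x‖ₑ ^ p) := by
        rw [mul_left_comm]
        gcongr _ * ?_
        exact mul_lintegral_image_enorm_sub_one_rpow_le hp hlam hW hinj hdet hσ
    _ = ENNReal.ofReal (d / lam) ^ p * ∫⁻ x in W, ‖1 - detD u x‖ₑ ^ p := by
        rw [← mul_assoc, ← ENNReal.mul_rpow_of_nonneg _ _ (by linarith), div_eq_mul_inv,
          ENNReal.ofReal_mul' (inv_nonneg.2 hlam.le)]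

lemma isBounded_image_of_edist_le {α X : Type*} [PseudoMetricSpace X] {f g : α → X} {s : Set α}
    {R : ℝ≥0∞} (hf : IsBounded (f '' s)) (hR : R ≠ ∞) (hfg : ∀ x ∈ s, edist (f x) (g x) ≤ R) :
    IsBounded (g '' s) := by
  refine (hf.cthickening (δ := R.toReal)).subset (image_subset_iff.2 fun x hx => ?_)
  rw [mem_preimage, mem_cthickening_iff, ENNReal.ofReal_toReal hR]
  refine (infEDist_le_edist_of_mem (mem_image_of_mem f hx)).trans ?_
  rw [edist_comm]
  exact hfg x hx

lemma exists_measurable_map_restrict_le_volume (hn : n ≠ 0) {K : ℝ≥0} {d : ℝ} (hp : 1 ≤ p)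
    (hU : MeasurableSet U) (hU_bdd : IsBounded U) (hu : LipschitzWith K u) (hmult : multOn U u ≤ 1)
    (hd : ediam (u '' U) ≤ ENNReal.ofReal d) (hlam : 0 < lam)
    (hdet : ∀ᵐ x ∂volume.restrict U, lam ≤ detD u x) :
    ∃ S₀ : EuclideanSpace ℝ (Fin n) → EuclideanSpace ℝ (Fin n), Measurable S₀ ∧
      IsBounded (S₀ '' U) ∧ (volume.restrict U).map S₀ ≤ volume ∧
      ∫⁻ x in U, edist (u x) (S₀ x) ^ p ≤
        ENNReal.ofReal (d / lam) ^ p * ∫⁻ x in U, ‖1 - detD u x‖ₑ ^ p := by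
  obtain ⟨m, rfl⟩ := Nat.exists_eq_succ_of_ne_zero hn
  obtain ⟨W, hWU, hW, hW_ae, hinj, hdetW⟩ :=
    exists_measurableSet_injOn_ae_eq hu hU hmult hlam hdet
  obtain ⟨σ, hσ_meas, hσ, hσ_one⟩ := exists_measurable_density hu.continuous hW hinj
  have hdet_pos (x) (hx : x ∈ W) := (hdetW x hx).imp_right hlam.trans_le
  have hdW : ediam (u '' W) ≤ ENNReal.ofReal d := (ediam_mono (image_mono hWU)).trans hd
  have hV_bdd : IsBounded (u '' W) := (hu.isBounded_image hU_bdd).subset (image_mono hWU)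
  have hσ_mem (y) : 0 ≤ σ y ∧ σ y ≤ max lam⁻¹ 1 := by
    by_cases hy : y ∈ u '' W
    · obtain ⟨x, hx, rfl⟩ := hy
      rw [hσ x hx]
      exact ⟨inv_nonneg.2 (hdet_pos x hx).2.le, le_max_of_le_left (inv_anti₀ hlam (hdetW x hx).2)⟩
    · simp [hσ_one y hy]
  have hσM (y) : ‖σ y - 1‖ₑ ≤ ENNReal.ofReal (max lam⁻¹ 1) := by
    rw [Real.enorm_eq_ofReal_abs]
    refine ENNReal.ofReal_le_ofReal (abs_le.2 ⟨?_, ?_⟩) <;>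
      linarith [hσ_mem y, le_max_right lam⁻¹ 1]
  have hT := measurable_knotheMap (0 : Fin (m + 1)) hσ_meas
  rw [← Measure.restrict_congr_set hW_ae]
  refine ⟨knotheMap 0 σ ∘ u, hT.comp hu.continuous.measurable, ?_, ?_,
    lintegral_edist_knotheMap_comp_rpow_le 0 hp hu.continuous hlam hW hinj hdetW hσ_meas hσ hσ_one
      hdW⟩
  · exact isBounded_image_of_edist_le (hu.isBounded_image hU_bdd)
      (ENNReal.mul_ne_top ENNReal.ofReal_ne_top hV_bdd.ediam_ne_top)
      fun x _ => edist_knotheMap_le 0 hσM hσ_one (u x)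
  · have hmap := map_restrict_le_withDensity hu.continuous hW hinj hdet_pos hσ
    rw [← Measure.map_map hT hu.continuous.measurable]
    exact (Measure.map_mono hmap hT).trans (map_knotheMap_withDensity_le 0 hσ_meas
      (fun y => (hσ_mem y).1) ENNReal.ofReal_ne_top hσM hV_bdd hσ_one)

end Rearrangement

section Line

open scoped ENNReal NNReal

lemma ofReal_mul_volume_le_volume_image {n : ℕ}
    {u : EuclideanSpace ℝ (Fin n) → EuclideanSpace ℝ (Fin n)}
    {U : Set (EuclideanSpace ℝ (Fin n))} {K : ℝ≥0} {lam : ℝ} (hu : LipschitzWith K u)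
    (hU : MeasurableSet U) (hmult : multOn U u ≤ 1) (hlam : 0 < lam)
    (hdet : ∀ᵐ x ∂volume.restrict U, lam ≤ detD u x) :
    ENNReal.ofReal lam * volume U ≤ volume (u '' U) := by
  obtain ⟨W, hWU, hW, hW_ae, hinj, hdetW⟩ :=
    exists_measurableSet_injOn_ae_eq hu hU hmult hlam hdet
  calc ENNReal.ofReal lam * volume U
      = ∫⁻ _ in W, ENNReal.ofReal lam := by rw [setLIntegral_const, measure_congr hW_ae]
    _ ≤ ∫⁻ x in W, ENNReal.ofReal (detD u x) * 1 :=
        setLIntegral_mono' hW fun x hx => by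
          rw [mul_one]
          exact ENNReal.ofReal_le_ofReal (hdetW x hx).2
    _ = ∫⁻ _ in u '' W, 1 := (lintegral_image_eq_lintegral_detD_mul hW hinj
          (fun x hx => (hdetW x hx).imp_right hlam.le.trans) fun _ => 1).symm
    _ = volume (u '' W) := setLIntegral_one _
    _ ≤ volume (u '' U) := measure_mono (image_mono hWU)

lemma enorm_sub_sub_sub_le_lintegral {I : Set ℝ} (hI : I.OrdConnected) {K : ℝ≥0} {f : ℝ → ℝ}
    (hf : LipschitzWith K f) {s t : ℝ} (hs : s ∈ I) (ht : t ∈ I) :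
    ‖(f t - f s) - (t - s)‖ₑ ≤ ∫⁻ r in I, ‖1 - deriv f r‖ₑ := by
  have hac : AbsolutelyContinuousOnInterval f s t :=
    hf.lipschitzOnWith.absolutelyContinuousOnInterval
  have hftc : (f t - f s) - (t - s) = ∫ r in s..t, (deriv f r - 1) := by
    rw [intervalIntegral.integral_sub hac.intervalIntegrable_deriv intervalIntegrable_const,
      hac.integral_deriv_eq_sub, intervalIntegral.integral_const, smul_eq_mul, mul_one]
  calc ‖(f t - f s) - (t - s)‖ₑ = ‖∫ r in uIoc s t, (deriv f r - 1)‖ₑ := by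
        rw [hftc, ← ofReal_norm, ← ofReal_norm,
          intervalIntegral.norm_integral_eq_norm_integral_uIoc]
    _ ≤ ∫⁻ r in uIoc s t, ‖deriv f r - 1‖ₑ := enorm_integral_le_lintegral_enorm _
    _ ≤ ∫⁻ r in I, ‖deriv f r - 1‖ₑ :=
        lintegral_mono_set (uIoc_subset_uIcc.trans (hI.uIcc_subset hs ht))
    _ = ∫⁻ r in I, ‖1 - deriv f r‖ₑ := by simp only [enorm_sub_rev (1 : ℝ)]

variable {u : EuclideanSpace ℝ (Fin 1) → EuclideanSpace ℝ (Fin 1)}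
  {U : Set (EuclideanSpace ℝ (Fin 1))} {K : ℝ≥0} {lam p d : ℝ}

lemma deriv_conj_eq_detD (e : ℝ ≃L[ℝ] EuclideanSpace ℝ (Fin 1)) (t : ℝ) :
    deriv (e.symm ∘ u ∘ e) t = detD u (e t) := by
  rw [← fderiv_apply_one_eq_deriv, e.symm.comp_fderiv, e.comp_right_fderiv, detD,
    ← LinearMap.det_conj _ e.toLinearEquiv.symm, LinearMap.det_ring]
  rfl

lemma volume_le_ediam (V : Set (EuclideanSpace ℝ (Fin 1))) : volume V ≤ ediam V := by
  let e := (OrthonormalBasis.singleton (Fin 1) ℝ).repr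
  calc volume V = volume (e ⁻¹' V) :=
        (e.measurePreserving.measure_preimage_emb e.toMeasurableEquiv.measurableEmbedding V).symm
    _ ≤ ediam (e ⁻¹' V) := Real.volume_le_diam _
    _ = ediam V := e.toIsometryEquiv.ediam_preimage V

lemma edist_add_sub_le_lintegral (hU : IsPreconnected U) (hu : LipschitzWith K u)
    {x₀ x : EuclideanSpace ℝ (Fin 1)} (hx₀ : x₀ ∈ U) (hx : x ∈ U) :
    edist (u x) (x + (u x₀ - x₀)) ≤ ∫⁻ y in U, ‖1 - detD u y‖ₑ := by
  let e := (OrthonormalBasis.singleton (Fin 1) ℝ).repr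
  have hderiv (t : ℝ) : deriv (e.symm ∘ u ∘ e) t = detD u (e t) :=
    deriv_conj_eq_detD e.toContinuousLinearEquiv t
  have hI : (e ⁻¹' U).OrdConnected := by
    rw [← e.symm_symm, ← e.symm.image_eq_preimage_symm]
    exact (hU.image _ e.symm.continuous.continuousOn).ordConnected
  have hf : LipschitzWith (1 * (K * 1)) (e.symm ∘ u ∘ e) :=
    e.symm.lipschitz.comp (hu.comp e.lipschitz)
  calc edist (u x) (x + (u x₀ - x₀)) = ‖e.symm ((u x - u x₀) - (x - x₀))‖ₑ := by
        rw [e.symm.enorm_map, edist_eq_enorm_sub]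
        congr 1
        abel
    _ ≤ ∫⁻ t in e ⁻¹' U, ‖1 - deriv (e.symm ∘ u ∘ e) t‖ₑ := by
        simpa only [Function.comp_apply, e.apply_symm_apply, e.symm.map_sub] using
          enorm_sub_sub_sub_le_lintegral hI hf (s := e.symm x₀) (t := e.symm x)
            (by simpa only [mem_preimage, e.apply_symm_apply])
            (by simpa only [mem_preimage, e.apply_symm_apply])
    _ = ∫⁻ t in e ⁻¹' U, ‖1 - detD u (e t)‖ₑ := by simp only [hderiv]
    _ = ∫⁻ y in U, ‖1 - detD u y‖ₑ :=
        e.measurePreserving.setLIntegral_comp_preimage_emb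
          e.toMeasurableEquiv.measurableEmbedding (fun y => ‖1 - detD u y‖ₑ) U

lemma exists_isBoundedRearrangement_lintegral_le_of_isPreconnected (hp : 1 ≤ p)
    (hne : U.Nonempty) (hU : IsOpen U) (hU_conn : IsPreconnected U) (hu : LipschitzWith K u)
    (hmult : multOn U u ≤ 1) (hd : ediam (u '' U) ≤ ENNReal.ofReal d) (hlam : 0 < lam)
    (hdet : ∀ᵐ x ∂volume.restrict U, lam ≤ detD u x) :
    ∃ M S, IsBoundedRearrangement M S ∧ ∫⁻ x in U, edist (u x) (S x) ^ p ≤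
      ENNReal.ofReal (d / lam) ^ p * ∫⁻ x in U, ‖1 - detD u x‖ₑ ^ p := by
  obtain ⟨x₀, hx₀⟩ := hne
  have hvol : volume U ≤ ENNReal.ofReal (d / lam) := by
    rw [ENNReal.ofReal_div_of_pos hlam, ENNReal.le_div_iff_mul_le (by simp [hlam]) (by simp),
      mul_comm]
    exact (ofReal_mul_volume_le_volume_image hu hU.measurableSet hmult hlam hdet).trans
      ((volume_le_ediam _).trans hd)
  refine ⟨‖u x₀ - x₀‖, (· + (u x₀ - x₀)), ⟨⟨1, (IsometryEquiv.addRight _).isometry.lipschitz⟩,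
    add_left_injective _, measurePreserving_add_right volume _, fun x => by simp⟩, ?_⟩
  calc ∫⁻ x in U, edist (u x) (x + (u x₀ - x₀)) ^ p
      ≤ ∫⁻ _ in U, (∫⁻ y in U, ‖1 - detD u y‖ₑ) ^ p :=
        setLIntegral_mono' hU.measurableSet fun x hx => by
          gcongr
          exact edist_add_sub_le_lintegral hU_conn hu hx₀ hx
    _ = (∫⁻ y in U, ‖1 - detD u y‖ₑ) ^ p * volume U := setLIntegral_const _ _
    _ ≤ volume U ^ (p - 1) * (∫⁻ y in U, ‖1 - detD u y‖ₑ ^ p) * volume U := by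
        gcongr
        have hmeas := (measurable_detD u).const_sub 1 |>.enorm.aemeasurable (μ := volume.restrict U)
        simpa only [Measure.restrict_apply_univ] using
          lintegral_rpow_le_measure_univ_rpow_mul hp hmeas
    _ = volume U ^ p * ∫⁻ y in U, ‖1 - detD u y‖ₑ ^ p := by
        rw [mul_right_comm]
        nth_rw 2 [← ENNReal.rpow_one (volume U)]
        rw [← ENNReal.rpow_add_of_nonneg _ _ (sub_nonneg.2 hp) zero_le_one, sub_add_cancel]
    _ ≤ ENNReal.ofReal (d / lam) ^ p * ∫⁻ y in U, ‖1 - detD u y‖ₑ ^ p := by gcongr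

end Line

section Assembly

open scoped ENNReal NNReal Topology

variable {n : ℕ} {u v S : EuclideanSpace ℝ (Fin n) → EuclideanSpace ℝ (Fin n)}
  {U : Set (EuclideanSpace ℝ (Fin n))} {K : ℝ≥0} {p d lam : ℝ}

lemma multOn_eq_one_of_injOn (hS : InjOn S U) (hpos : volume (S '' U) ≠ 0) : multOn U S = 1 := by
  refine le_antisymm (essSup_le_of_ae_le _ (.of_forall fun y => ?_)) ?_
  · exact encard_le_one_iff.2 fun a b ha hb => hS ha.1 hb.1 (ha.2.trans hb.2.symm)
  · refine le_of_not_gt fun hlt => hpos (measure_mono_null ?_ (ae_iff.1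
      (ae_le_essSup (f := fun y => (U ∩ S ⁻¹' {y}).encard) (μ := volume))))
    rintro _ ⟨x, hx, rfl⟩ hle
    have hempty := encard_eq_zero.1 (Order.lt_one_iff.1 (hle.trans_lt hlt))
    exact hempty.subset (⟨hx, rfl⟩ : x ∈ U ∩ S ⁻¹' {S x})

lemma multOn_congr (huv : EqOn u v U) : multOn U u = multOn U v := by
  have hfibre (y) : U ∩ u ⁻¹' {y} = U ∩ v ⁻¹' {y} := by
    ext x
    exact and_congr_right fun hx => by simp only [mem_preimage, huv hx]
  simp only [multOn, hfibre]

lemma detD_congr {x : EuclideanSpace ℝ (Fin n)} (huv : u =ᶠ[𝓝 x] v) : detD u x = detD v x := by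
  rw [detD, detD, huv.fderiv_eq]

lemma exists_abs_detD_le (hu : LipschitzWith K u) : ∃ C, ∀ x, |detD u x| ≤ C := by
  have := FiniteDimensional.proper ℝ (EuclideanSpace ℝ (Fin n) →L[ℝ] EuclideanSpace ℝ (Fin n))
  obtain ⟨C, hC⟩ := (isCompact_closedBall 0 (K : ℝ)).exists_bound_of_continuousOn
    (ContinuousLinearMap.continuous_det (𝕜 := ℝ) (E := EuclideanSpace ℝ (Fin n))).continuousOn
  exact ⟨C, fun x => hC _ (mem_closedBall_zero_iff.2 (norm_fderiv_le_of_lipschitz ℝ hu))⟩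

lemma exists_map_restrict_eq_of_detD_eq_one (hu : LipschitzWith K u) (hU : MeasurableSet U)
    (hmult : multOn U u ≤ 1) (hdet : ∀ᵐ x ∂volume.restrict U, detD u x = 1) :
    ∃ B, MeasurableSet B ∧ (volume.restrict U).map u = volume.restrict B := by
  obtain ⟨W, -, hW, hW_ae, hinj, hdetW⟩ :=
    exists_measurableSet_injOn_ae_eq hu hU hmult one_pos (hdet.mono fun x hx => hx.ge)
  have hum := hu.continuous.measurable
  refine ⟨u '' W, hW.image_of_continuousOn_injOn hu.continuous.continuousOn hinj, ?_⟩
  rw [← Measure.restrict_congr_set hW_ae] at hdet ⊢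
  ext A hA
  rw [← lintegral_indicator_one hA, lintegral_map (measurable_one.indicator hA) hum,
    ← lintegral_indicator_one hA, lintegral_image_eq_lintegral_detD_mul hW hinj fun x hx =>
      (hdetW x hx).imp_right zero_le_one.trans]
  refine lintegral_congr_ae (hdet.mono fun x hx => ?_)
  simp only [hx, ENNReal.ofReal_one, one_mul]

lemma pos_of_ediam_image_le (hn : n ≠ 0) (hne : U.Nonempty) (hU : IsOpen U)
    (hu : LipschitzWith K u) (hmult : multOn U u ≤ 1) (hd : ediam (u '' U) ≤ ENNReal.ofReal d)
    (hlam : 0 < lam) (hdet : ∀ᵐ x ∂volume.restrict U, lam ≤ detD u x) : 0 < d := by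
  by_contra! hd_nonpos
  have : Nonempty (Fin n) := Fin.pos_iff_nonempty.1 (Nat.pos_of_ne_zero hn)
  rw [ENNReal.ofReal_of_nonpos hd_nonpos, nonpos_iff_eq_zero, ediam_eq_zero_iff] at hd
  have hle := ofReal_mul_volume_le_volume_image hu hU.measurableSet hmult hlam hdet
  rw [hd.measure_zero, nonpos_iff_eq_zero, mul_eq_zero, ENNReal.ofReal_eq_zero] at hle
  exact hle.elim hlam.not_ge (hU.measure_pos volume hne).ne'

namespace IsBoundedRearrangement

variable {M : ℝ}

lemma measurableEmbedding (hS : IsBoundedRearrangement M S) : MeasurableEmbedding S := by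
  obtain ⟨K, hK⟩ := hS.lipschitz
  exact hK.continuous.measurableEmbedding hS.injective

lemma multOn_eq_one (hS : IsBoundedRearrangement M S) (hU : IsOpen U) (hne : U.Nonempty) :
    multOn U S = 1 := by
  refine multOn_eq_one_of_injOn hS.injective.injOn ?_
  rw [← hS.measurePreserving.measure_preimage_emb hS.measurableEmbedding,
    preimage_image_eq U hS.injective]
  exact (hU.measure_pos volume hne).ne'

lemma exists_map_restrict_eq (hS : IsBoundedRearrangement M S) (hU : MeasurableSet U) :
    ∃ B, MeasurableSet B ∧ (volume.restrict U).map S = volume.restrict B :=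
  ⟨S '' U, hS.measurableEmbedding.measurableSet_image.2 hU,
    (hS.measurePreserving.restrict_image_emb hS.measurableEmbedding U).map_eq⟩

end IsBoundedRearrangement

lemma lintegral_enorm_one_sub_detD_rpow_ne_top (hp : 0 ≤ p) (hU_bdd : IsBounded U)
    (hu : LipschitzWith K u) : ∫⁻ x in U, ‖1 - detD u x‖ₑ ^ p ≠ ∞ := by
  obtain ⟨C, hC⟩ := exists_abs_detD_le hu
  refine ((setLIntegral_mono measurable_const fun x _ => ?_).trans_lt
    ((setLIntegral_const U (ENNReal.ofReal (1 + C) ^ p)).trans_lt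
      (ENNReal.mul_lt_top (ENNReal.rpow_lt_top_of_nonneg hp ENNReal.ofReal_ne_top)
        hU_bdd.measure_lt_top))).ne
  gcongr
  rw [Real.enorm_eq_ofReal_abs]
  refine ENNReal.ofReal_le_ofReal ((abs_sub _ _).trans ?_)
  rw [abs_one]
  gcongr
  exact hC x

lemma exists_isBoundedRearrangement_lintegral_edist_le (hn : 1 ≤ n) (hp : 1 ≤ p)
    (hne : U.Nonempty) (hU : IsOpen U) (hU_bdd : IsBounded U) (hU_conn : n = 1 → IsPreconnected U)
    (hu : LipschitzWith K u) (hmult : multOn U u ≤ 1) (hd : ediam (u '' U) ≤ ENNReal.ofReal d)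
    (hlam : 0 < lam) (hdet : ∀ᵐ x ∂volume.restrict U, lam ≤ detD u x)
    (hE : ∫⁻ x in U, ‖1 - detD u x‖ₑ ^ p ≠ 0) :
    ∃ M S, IsBoundedRearrangement M S ∧ ∫⁻ x in U, edist (u x) (S x) ^ p ≤
      2 * (ENNReal.ofReal (d / lam) ^ p * ∫⁻ x in U, ‖1 - detD u x‖ₑ ^ p) := by
  rcases hn.eq_or_lt with rfl | hn₂
  · obtain ⟨M, S, hS, hle⟩ := exists_isBoundedRearrangement_lintegral_le_of_isPreconnected hp hne
      hU (hU_conn rfl) hu hmult hd hlam hdet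
    exact ⟨M, S, hS, hle.trans (le_mul_of_one_le_left' one_le_two)⟩
  · have hd_pos := pos_of_ediam_image_le (by omega) hne hU hu hmult hd hlam hdet
    obtain ⟨S₀, hS₀, hS₀_bdd, hmap, hle₀⟩ := exists_measurable_map_restrict_le_volume (by omega)
      hp hU.measurableSet hU_bdd hu hmult hd hlam hdet
    have hη : 0 < ENNReal.ofReal (d / lam) ^ p * ∫⁻ x in U, ‖1 - detD u x‖ₑ ^ p :=
      ENNReal.mul_pos (ENNReal.rpow_pos (ENNReal.ofReal_pos.2 (by positivity))
        ENNReal.ofReal_ne_top).ne' hE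
    obtain ⟨M, S, hS, hle⟩ := exists_isBoundedRearrangement_lintegral_le_add hn₂
      (zero_le_one.trans hp) hU hU_bdd hu hS₀ hS₀_bdd hmap hη
    refine ⟨M, S, hS, hle.trans ?_⟩
    rw [two_mul]
    gcongr

lemma exists_lipschitzWith_map_restrict_eq_lintegral_le (hn : 1 ≤ n) (hp : 1 ≤ p)
    (hne : U.Nonempty) (hU : IsOpen U) (hU_bdd : IsBounded U)
    (hU_conn : n = 1 → IsPreconnected U) (hu : LipschitzWith K u) (hmult : multOn U u = 1)
    (hd : ediam (u '' U) ≤ ENNReal.ofReal d) (hlam : 0 < lam)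
    (hdet : ∀ᵐ x ∂volume.restrict U, lam ≤ detD u x) :
    ∃ S Ks, LipschitzWith Ks S ∧ multOn U S = 1 ∧
      (∃ B, MeasurableSet B ∧ (volume.restrict U).map S = volume.restrict B) ∧
      ∫⁻ x in U, edist (u x) (S x) ^ p ≤
        2 * (ENNReal.ofReal (d / lam) ^ p * ∫⁻ x in U, ‖1 - detD u x‖ₑ ^ p) := by
  have hp_pos : 0 < p := zero_lt_one.trans_le hp
  by_cases hE : ∫⁻ x in U, ‖1 - detD u x‖ₑ ^ p = 0
  · have hmeas : Measurable fun x => ‖1 - detD u x‖ₑ ^ p :=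
      ((measurable_detD u).const_sub 1).enorm.pow_const p
    have hdet_one : ∀ᵐ x ∂volume.restrict U, detD u x = 1 := by
      filter_upwards [(lintegral_eq_zero_iff hmeas).1 hE] with x hx
      rw [Pi.zero_apply, ENNReal.rpow_eq_zero_iff_of_pos hp_pos, enorm_eq_zero, sub_eq_zero] at hx
      exact hx.symm
    refine ⟨u, K, hu, hmult,
      exists_map_restrict_eq_of_detD_eq_one hu hU.measurableSet hmult.le hdet_one, ?_⟩
    simp [hp_pos]
  · obtain ⟨M, S, hS, hle⟩ := exists_isBoundedRearrangement_lintegral_edist_le hn hp hne hU hU_bdd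
      hU_conn hu hmult.le hd hlam hdet hE
    obtain ⟨Ks, hKs⟩ := hS.lipschitz
    exact ⟨S, Ks, hKs, hS.multOn_eq_one hU hne, hS.exists_map_restrict_eq hU.measurableSet, hle⟩

lemma setIntegral_norm_sub_rpow_eq_toReal (hp : 0 ≤ p) (hu : Continuous u) (hS : Continuous S) :
    ∫ x in U, ‖u x - S x‖ ^ p = (∫⁻ x in U, edist (u x) (S x) ^ p).toReal := by
  have hmeas : Measurable fun x => ‖u x - S x‖ ^ p := (hu.sub hS).norm.measurable.pow_const p
  rw [integral_eq_lintegral_of_nonneg_ae (.of_forall fun x => by positivity)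
    hmeas.aestronglyMeasurable]
  simp only [edist_eq_enorm_sub, ← ofReal_norm, ENNReal.ofReal_rpow_of_nonneg (norm_nonneg _) hp]

lemma setIntegral_abs_one_sub_detD_rpow_eq_toReal (hp : 0 ≤ p) :
    ∫ x in U, |1 - detD u x| ^ p = (∫⁻ x in U, ‖1 - detD u x‖ₑ ^ p).toReal := by
  have hmeas : Measurable fun x => |1 - detD u x| ^ p :=
    ((measurable_detD u).const_sub 1).norm.pow_const p
  rw [integral_eq_lintegral_of_nonneg_ae (.of_forall fun x => by positivity)
    hmeas.aestronglyMeasurable]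
  simp only [Real.enorm_eq_ofReal_abs, ENNReal.ofReal_rpow_of_nonneg (abs_nonneg _) hp]

lemma div_rpow_le_div_rpow_mul {Lam s : ℝ} (hp : 1 ≤ p) (hlam : 0 < lam) (hLam : lam ≤ Lam)
    (hd : 0 ≤ d) (hs₀ : 0 ≤ s) (hs₁ : s ≤ 1) :
    (d / lam) ^ p ≤ (d / lam ^ s) ^ p * (1 + (lam ^ p)⁻¹ * (Lam / lam) ^ (2 * p - 2)) := by
  have hratio : 1 ≤ (Lam / lam) ^ (2 * p - 2) :=
    Real.one_le_rpow ((one_le_div hlam).2 hLam) (by linarith)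
  have hfactor : (lam ^ s / lam) ^ p ≤ 1 + (lam ^ p)⁻¹ * (Lam / lam) ^ (2 * p - 2) := by
    rcases le_total 1 lam with hlam₁ | hlam₁
    · have hle : lam ^ s ≤ lam :=
        (Real.rpow_le_rpow_of_exponent_le hlam₁ hs₁).trans_eq (Real.rpow_one lam)
      exact (Real.rpow_le_one (by positivity) ((div_le_one hlam).2 hle) (by linarith)).trans
        (le_add_of_nonneg_right (by positivity))
    · have hle : lam ^ s ≤ 1 := Real.rpow_le_one hlam.le hlam₁ hs₀
      calc (lam ^ s / lam) ^ p ≤ (1 / lam) ^ p := by gcongr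
        _ = (lam ^ p)⁻¹ := by rw [one_div, Real.inv_rpow hlam.le]
        _ ≤ (lam ^ p)⁻¹ * (Lam / lam) ^ (2 * p - 2) :=
            le_mul_of_one_le_right (by positivity) hratio
        _ ≤ _ := le_add_of_nonneg_left zero_le_one
  calc (d / lam) ^ p = (d / lam ^ s) ^ p * (lam ^ s / lam) ^ p := by
        rw [← Real.mul_rpow (by positivity) (by positivity), div_mul_div_cancel₀ (by positivity)]
    _ ≤ _ := by gcongr

theorem stmt_3_general {n : ℕ} (hn : 1 ≤ n) {p : ℝ} (hp : 1 ≤ p)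
    {U : Set (EuclideanSpace ℝ (Fin n))} (hne : U.Nonempty) (hU : IsOpen U)
    (hU_bdd : IsBounded U) (hU_conn : n = 1 → IsPreconnected U)
    {u : EuclideanSpace ℝ (Fin n) → EuclideanSpace ℝ (Fin n)} {K : ℝ≥0}
    (hu : LipschitzOnWith K u U) (hmult : multOn U u = 1) {d lam : ℝ} (hd : diam (u '' U) ≤ d)
    (hlam : 0 < lam) (hdet : ∀ᵐ x ∂volume.restrict U, lam ≤ detD u x) :
    ∃ (S : EuclideanSpace ℝ (Fin n) → EuclideanSpace ℝ (Fin n)) (Ks : ℝ≥0),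
      LipschitzOnWith Ks S U ∧ IsBounded (S '' U) ∧ multOn U S = 1 ∧
      (∃ B, MeasurableSet B ∧ Measure.map S (volume.restrict U) = volume.restrict B) ∧
      ∫ x in U, ‖u x - S x‖ ^ p ≤ 2 * (d / lam) ^ p * ∫ x in U, |1 - detD u x| ^ p := by
  obtain ⟨v, hv, huv⟩ := hu.extend_finite_dimension
  have hdetD (x) (hx : x ∈ U) : detD u x = detD v x :=
    detD_congr (Filter.eventuallyEq_of_mem (hU.mem_nhds hx) huv)
  have hd₀ : 0 ≤ d := diam_nonneg.trans hd
  have hdv : ediam (v '' U) ≤ ENNReal.ofReal d := by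
    rwa [ENNReal.le_ofReal_iff_toReal_le (hv.isBounded_image hU_bdd).ediam_ne_top hd₀,
      ← huv.image_eq]
  have hdetv : ∀ᵐ x ∂volume.restrict U, lam ≤ detD v x := by
    filter_upwards [hdet, ae_restrict_mem hU.measurableSet] with x hx hxU
    rwa [← hdetD x hxU]
  obtain ⟨S, Ks, hS, hmultS, hmapS, hle⟩ := exists_lipschitzWith_map_restrict_eq_lintegral_le hn hp
    hne hU hU_bdd hU_conn hv (multOn_congr huv ▸ hmult) hdv hlam hdetv
  refine ⟨S, Ks, hS.lipschitzOnWith, hS.isBounded_image hU_bdd, hmultS, hmapS, ?_⟩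
  have hp₀ : 0 ≤ p := zero_le_one.trans hp
  have hE := lintegral_enorm_one_sub_detD_rpow_ne_top hp₀ hU_bdd hv
  calc ∫ x in U, ‖u x - S x‖ ^ p = ∫ x in U, ‖v x - S x‖ ^ p :=
        setIntegral_congr_fun hU.measurableSet fun x hx => by simp only [huv hx]
    _ = (∫⁻ x in U, edist (v x) (S x) ^ p).toReal :=
        setIntegral_norm_sub_rpow_eq_toReal hp₀ hv.continuous hS.continuous
    _ ≤ (2 * (ENNReal.ofReal (d / lam) ^ p * ∫⁻ x in U, ‖1 - detD v x‖ₑ ^ p)).toReal :=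
        ENNReal.toReal_mono (by finiteness) hle
    _ = 2 * (d / lam) ^ p * ∫ x in U, |1 - detD v x| ^ p := by
        rw [setIntegral_abs_one_sub_detD_rpow_eq_toReal hp₀, ENNReal.toReal_mul,
          ENNReal.toReal_mul, ← ENNReal.toReal_rpow, ENNReal.toReal_ofReal (by positivity),
          ENNReal.toReal_ofNat, mul_assoc]
    _ = 2 * (d / lam) ^ p * ∫ x in U, |1 - detD u x| ^ p := by
        congr 1
        exact setIntegral_congr_fun hU.measurableSet fun x hx => by simp only [hdetD x hx]

end Assembly

theorem stmt_3 (n : ℕ) (hn : 1 ≤ n) (p : ℝ) (hp : 1 < p) :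
    ∃ C₃ : ℝ, 0 < C₃ ∧
      ∀ (U : Set (EuclideanSpace ℝ (Fin n))), U.Nonempty → IsOpen U →
        IsBounded U → IsConnected U →
      ∀ (u : EuclideanSpace ℝ (Fin n) → EuclideanSpace ℝ (Fin n)) (K : NNReal),
        LipschitzOnWith K u U → IsBounded (u '' U) →
        multOn U u = 1 →
      ∀ (d lam Lam : ℝ),
        diam (u '' U) ≤ d →
        0 < lam →
        (∀ᵐ x ∂(volume.restrict U), DifferentiableAt ℝ u x ∧
            lam ≤ detD u x ∧ detD u x ≤ Lam) →
        ∃ (S : EuclideanSpace ℝ (Fin n) → EuclideanSpace ℝ (Fin n)) (Ks : NNReal),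
          LipschitzOnWith Ks S U ∧ IsBounded (S '' U) ∧
          multOn U S = 1 ∧
          (∃ B : Set (EuclideanSpace ℝ (Fin n)), MeasurableSet B ∧
            Measure.map S (volume.restrict U) = volume.restrict B) ∧
          (∫ x in U, ‖u x - S x‖ ^ p)
            ≤ C₃ * (d / lam ^ ((n : ℝ))⁻¹) ^ p *
                (1 + (lam ^ p)⁻¹ * (Lam / lam) ^ (2 * p - 2)) *
              ∫ x in U, |1 - detD u x| ^ p := by
  refine ⟨2, two_pos, fun U hne hU hU_bdd hU_conn u K hu _ hmult d lam Lam hd hlam hdet => ?_⟩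
  obtain ⟨S, Ks, hS, hS_bdd, hmultS, hmapS, hle⟩ := stmt_3_general hn hp.le hne hU hU_bdd
    (fun _ => hU_conn.isPreconnected) hu hmult hd hlam (hdet.mono fun x hx => hx.2.1)
  refine ⟨S, Ks, hS, hS_bdd, hmultS, hmapS, hle.trans ?_⟩
  have : (ae (volume.restrict U)).NeBot := ae_restrict_neBot.2 (hU.measure_pos volume hne).ne'
  obtain ⟨x, -, hlam_le, hle_Lam⟩ := hdet.exists
  rw [mul_assoc 2 (_ ^ p) (1 + _)]
  gcongr
  exact div_rpow_le_div_rpow_mul hp.le hlam (hlam_le.trans hle_Lam) (diam_nonneg.trans hd)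
    (by positivity) (inv_le_one_of_one_le₀ (by exact_mod_cast hn))

end
end
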